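/- Let d ≥ 2, set s_d = d(d+1)/2, and let g be a Riemannian metric of class C² on the closed unit ball B̄₁ ⊂ ℝ^d. Then for every exponent α with 0 < α < 1/(1 + 2 s_d), every C¹ map u₀ : B̄₁ → ℝ^{d+1} that is short for g, and every ε > 0, there exists an isometric immersion u : B̄₁ → ℝ^{d+1} of (B̄₁, g) of class C^{1,α} with sup_{x ∈ B̄₁} |u(x) − u₀(x)| ≤ ε. (Conti–De Lellis–Székelyhidi, 2012.) -/

import Mathlib

noncomputable section
open Matrix Set Metric

attribute [local instance] Matrix.normedAddCommGroup Matrix.normedSpace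

/-- The Jacobian matrix (n×d) of a map `u : ℝᵈ → ℝⁿ` at a point `x`, with derivatives
taken within the closed unit ball. -/
def JacCB {d n : ℕ} (u : EuclideanSpace ℝ (Fin d) → EuclideanSpace ℝ (Fin n))
    (x : EuclideanSpace ℝ (Fin d)) : Matrix (Fin n) (Fin d) ℝ :=
  Matrix.of fun i j =>
    fderivWithin ℝ u (closedBall (0 : EuclideanSpace ℝ (Fin d)) 1) x (EuclideanSpace.single j 1) i

namespace NashKuiper
open scoped ContDiff

section Jets

variable {E V W G : Type*} [NormedAddCommGroup E] [NormedSpace ℝ E]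
  [NormedAddCommGroup V] [NormedSpace ℝ V] [NormedAddCommGroup W] [NormedSpace ℝ W]
  [NormedAddCommGroup G] [NormedSpace ℝ G] {s : Set E} {x : E}

/-- The derivatives within `s` of order `j ≤ N` of `f` at `x` are bounded by `A * r ^ j`. -/
def JetBound (s : Set E) (f : E → V) (A r : ℝ) (N : ℕ) (x : E) : Prop :=
  ∀ j ≤ N, ‖iteratedFDerivWithin ℝ j f s x‖ ≤ A * r ^ j

theorem JetBound.mono {f : E → V} {A A' r r' : ℝ} {N N' : ℕ} (h : JetBound s f A r N x)
    (hA : A ≤ A') (hA0 : 0 ≤ A') (hr : 0 ≤ r) (hrr : r ≤ r') (hN : N' ≤ N) :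
    JetBound s f A' r' N' x := by
  intro j hj
  refine (h j (hj.trans hN)).trans ?_
  gcongr

theorem JetBound.norm_le {f : E → V} {A r : ℝ} {N : ℕ} (h : JetBound s f A r N x) :
    ‖f x‖ ≤ A := by
  have := h 0 (Nat.zero_le _)
  simpa using this

theorem JetBound.norm_fderivWithin_le {f : E → V} {A r : ℝ} {N : ℕ} (h : JetBound s f A r N x)
    (hs : UniqueDiffOn ℝ s) (hx : x ∈ s) (hN : 1 ≤ N) : ‖fderivWithin ℝ f s x‖ ≤ A * r := by
  have := h 1 hN
  rwa [← zero_add 1, ← norm_iteratedFDerivWithin_fderivWithin hs hx, norm_iteratedFDerivWithin_zero,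
    zero_add, pow_one] at this

theorem JetBound.fderivWithin {f : E → V} {A r : ℝ} {N : ℕ} (h : JetBound s f A r (N + 1) x)
    (hs : UniqueDiffOn ℝ s) (hx : x ∈ s) :
    JetBound s (fderivWithin ℝ f s) (A * r) r N x := by
  intro j hj
  rw [norm_iteratedFDerivWithin_fderivWithin hs hx]
  refine (h (j + 1) (by omega)).trans (le_of_eq (by ring))

theorem JetBound.congr {f g : E → V} {A r : ℝ} {N : ℕ} (h : JetBound s f A r N x)
    (hfg : EqOn g f s) (hx : x ∈ s) : JetBound s g A r N x := by
  intro j hj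
  rw [iteratedFDerivWithin_congr hfg hx]
  exact h j hj

theorem JetBound.add {f g : E → V} {A A' r : ℝ} {N : ℕ} (hf : JetBound s f A r N x)
    (hg : JetBound s g A' r N x) (hfs : ContDiffOn ℝ ∞ f s) (hgs : ContDiffOn ℝ ∞ g s)
    (hs : UniqueDiffOn ℝ s) (hx : x ∈ s) : JetBound s (fun y => f y + g y) (A + A') r N x := by
  intro j hj
  have h1 : ContDiffWithinAt ℝ j f s x := (hfs x hx).of_le (by exact_mod_cast le_top)
  have h2 : ContDiffWithinAt ℝ j g s x := (hgs x hx).of_le (by exact_mod_cast le_top)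
  have := iteratedFDerivWithin_add_apply h1 h2 hs hx
  have e : (fun y => f y + g y) = f + g := rfl
  rw [e, this, add_mul]
  exact (norm_add_le _ _).trans (add_le_add (hf j hj) (hg j hj))

theorem JetBound.clm_comp {f : E → V} {A r : ℝ} {N : ℕ} (L : V →L[ℝ] W)
    (hf : JetBound s f A r N x) (hfs : ContDiffOn ℝ ∞ f s)
    (hs : UniqueDiffOn ℝ s) (hx : x ∈ s) :
    JetBound s (fun y => L (f y)) (‖L‖ * A) r N x := by
  intro j hj
  have h1 : ContDiffWithinAt ℝ ∞ f s x := hfs x hx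
  refine (L.norm_iteratedFDerivWithin_comp_left h1 hs hx (n := j) (by exact_mod_cast le_top)).trans ?_
  rw [mul_assoc]
  gcongr
  exact hf j hj

theorem JetBound.const_smul {f : E → V} {A r : ℝ} {N : ℕ} (c : ℝ)
    (hf : JetBound s f A r N x) (hfs : ContDiffOn ℝ ∞ f s)
    (hs : UniqueDiffOn ℝ s) (hx : x ∈ s) :
    JetBound s (fun y => c • f y) (|c| * A) r N x := by
  intro j hj
  have h1 : ContDiffWithinAt ℝ j f s x := (hfs x hx).of_le (by exact_mod_cast le_top)
  have e : (fun y => c • f y) = c • f := rfl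
  rw [e, iteratedFDerivWithin_const_smul_apply h1 hs hx, norm_smul, Real.norm_eq_abs, mul_assoc]
  gcongr
  exact hf j hj

theorem JetBound.bilinear {f : E → V} {g : E → W} {A A' r : ℝ} {N : ℕ} (L : V →L[ℝ] W →L[ℝ] G)
    (hL : ‖L‖ ≤ 1) (hf : JetBound s f A r N x) (hg : JetBound s g A' r N x) (hr : 0 ≤ r)
    (hfs : ContDiffOn ℝ ∞ f s) (hgs : ContDiffOn ℝ ∞ g s)
    (hs : UniqueDiffOn ℝ s) (hx : x ∈ s) :
    JetBound s (fun y => L (f y) (g y)) (2 ^ N * (A * A')) r N x := by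
  intro j hj
  have hA : 0 ≤ A := (norm_nonneg _).trans hf.norm_le
  have hA' : 0 ≤ A' := (norm_nonneg _).trans hg.norm_le
  refine (L.norm_iteratedFDerivWithin_le_of_bilinear_of_le_one hfs hgs hs hx (n := j)
    (by exact_mod_cast le_top) hL).trans ?_
  calc _ ≤ ∑ i ∈ Finset.range (j + 1), (j.choose i : ℝ) * (A * r ^ i) * (A' * r ^ (j - i)) := by
        refine Finset.sum_le_sum fun i hi => ?_
        have hi' : i ≤ j := by simpa [Nat.lt_succ_iff] using hi
        have h1 := hf i (hi'.trans hj)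
        have h2 := hg (j - i) ((Nat.sub_le _ _).trans hj)
        gcongr
    _ = ∑ i ∈ Finset.range (j + 1), (j.choose i : ℝ) * (A * A' * r ^ j) := by
        refine Finset.sum_congr rfl fun i hi => ?_
        have hi' : i ≤ j := by simpa [Nat.lt_succ_iff] using hi
        have : r ^ j = r ^ i * r ^ (j - i) := by rw [← pow_add]; congr 1; omega
        rw [this]; ring
    _ = 2 ^ j * (A * A' * r ^ j) := by
        rw [← Finset.sum_mul]
        congr 1
        exact_mod_cast Nat.sum_range_choose j
    _ ≤ 2 ^ N * (A * A' * r ^ j) := by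
        gcongr
        norm_num
    _ = _ := by ring

theorem JetBound.smul {f : E → ℝ} {g : E → W} {A A' r : ℝ} {N : ℕ}
    (hf : JetBound s f A r N x) (hg : JetBound s g A' r N x) (hr : 0 ≤ r)
    (hfs : ContDiffOn ℝ ∞ f s) (hgs : ContDiffOn ℝ ∞ g s)
    (hs : UniqueDiffOn ℝ s) (hx : x ∈ s) :
    JetBound s (fun y => f y • g y) (2 ^ N * (A * A')) r N x :=
  JetBound.bilinear (ContinuousLinearMap.lsmul ℝ ℝ) ContinuousLinearMap.opNorm_lsmul_le
    hf hg hr hfs hgs hs hx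

/-- Composition with a smooth function whose derivatives are bounded. -/
theorem JetBound.comp_of_bound {Φ : V → W} {U : Set V} {f : E → V} {C A r : ℝ} {N : ℕ}
    (hΦ : ContDiffOn ℝ ∞ Φ U) (hU : UniqueDiffOn ℝ U) (hfs : ContDiffOn ℝ ∞ f s)
    (hs : UniqueDiffOn ℝ s) (hx : x ∈ s) (hmaps : MapsTo f s U)
    (hC : ∀ i ≤ N, ‖iteratedFDerivWithin ℝ i Φ U (f x)‖ ≤ C)
    (hA : 1 ≤ A) (hr : 0 ≤ r)
    (hf : ∀ j, 1 ≤ j → j ≤ N → ‖iteratedFDerivWithin ℝ j f s x‖ ≤ A * r ^ j) :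
    JetBound s (fun y => Φ (f y)) (N.factorial * C * A ^ N) r N x := by
  have hC0 : 0 ≤ C := (norm_nonneg _).trans (hC 0 (Nat.zero_le _))
  intro j hj
  have key := norm_iteratedFDerivWithin_comp_le (n := j) (D := A * r) hΦ hfs
    (by exact_mod_cast le_top) hU hs hmaps hx
    (fun i hi => hC i (hi.trans hj)) (fun i h1 hi => by
      refine (hf i h1 (hi.trans hj)).trans ?_
      rw [mul_pow]
      gcongr
      exact le_self_pow₀ hA (by omega))
  refine key.trans ?_
  rw [mul_pow, ← mul_assoc]
  gcongr

theorem exists_bound_iteratedFDerivWithin {Φ : V → W} {U K : Set V} (hU : IsOpen U)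
    (hK : IsCompact K) (hKU : K ⊆ U) (hΦ : ContDiffOn ℝ ∞ Φ U) (N : ℕ) :
    ∃ C : ℝ, 0 ≤ C ∧ ∀ y ∈ K, ∀ i ≤ N, ‖iteratedFDerivWithin ℝ i Φ U y‖ ≤ C := by
  have h : ∀ i : ℕ, ∃ C : ℝ, ∀ y ∈ K, ‖iteratedFDerivWithin ℝ i Φ U y‖ ≤ C := by
    intro i
    have hc : ContinuousOn (iteratedFDerivWithin ℝ i Φ U) U :=
      hΦ.continuousOn_iteratedFDerivWithin (by exact_mod_cast le_top) hU.uniqueDiffOn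
    exact hK.exists_bound_of_continuousOn (hc.mono hKU)
  choose C hC using h
  refine ⟨∑ i ∈ Finset.range (N + 1), |C i|, by positivity, fun y hy i hi => ?_⟩
  refine (hC i y hy).trans ((le_abs_self _).trans ?_)
  exact Finset.single_le_sum (f := fun i => |C i|) (fun i _ => abs_nonneg _)
    (Finset.mem_range.2 (by omega))

/-- Composition with a smooth function near a compact set. -/
theorem exists_jetBound_comp {Φ : V → W} {U K : Set V} (hU : IsOpen U) (hK : IsCompact K)
    (hKU : K ⊆ U) (hΦ : ContDiffOn ℝ ∞ Φ U) (hs : UniqueDiffOn ℝ s) (A : ℝ) (N : ℕ) :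
    ∃ C : ℝ, 0 ≤ C ∧ ∀ (f : E → V) (r : ℝ), ContDiffOn ℝ ∞ f s → MapsTo f s K → 0 ≤ r →
      (∀ x ∈ s, ∀ j, 1 ≤ j → j ≤ N → ‖iteratedFDerivWithin ℝ j f s x‖ ≤ A * r ^ j) →
      ∀ x ∈ s, JetBound s (fun y => Φ (f y)) C r N x := by
  obtain ⟨C, hC0, hC⟩ := exists_bound_iteratedFDerivWithin hU hK hKU hΦ N
  refine ⟨N.factorial * C * (max A 1) ^ N, by positivity, fun f r hfs hm hr hf x hx => ?_⟩
  refine JetBound.comp_of_bound hΦ hU.uniqueDiffOn hfs hs hx (fun y hy => hKU (hm hy))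
    (fun i hi => hC _ (hm hx) i hi) (le_max_right _ _) hr fun j h1 hj => ?_
  refine (hf x hx j h1 hj).trans ?_
  gcongr
  exact le_max_left _ _

theorem jetBound_linear_phase {Φ : ℝ → ℝ} (hΦ : ContDiff ℝ ∞ Φ)
    (hb : ∀ n y, |iteratedDeriv n Φ y| ≤ 1) (L : E →L[ℝ] ℝ) (M : ℝ) (hM : 1 ≤ M)
    (hL : ‖L‖ ≤ M) (hs : UniqueDiffOn ℝ s) (hx : x ∈ s) {r : ℝ} (hr : 0 ≤ r) (N : ℕ) :
    JetBound s (fun y => Φ (r * L y)) (N.factorial * 1 * M ^ N) r N x := by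
  have hlin : (fun y => r * L y) = ⇑(r • L) := by ext; simp
  refine JetBound.comp_of_bound (f := fun y => r * L y) (U := univ) hΦ.contDiffOn uniqueDiffOn_univ
    (by rw [hlin]; exact (r • L).contDiff.contDiffOn) hs hx (mapsTo_univ _ _) ?_ hM hr ?_
  · intro i _
    rw [iteratedFDerivWithin_univ, norm_iteratedFDeriv_eq_norm_iteratedDeriv]
    exact hb i _
  · intro j h1 _
    rw [hlin]
    obtain ⟨k, rfl⟩ : ∃ k, j = k + 1 := ⟨j - 1, by omega⟩
    rw [← norm_iteratedFDerivWithin_fderivWithin hs hx]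
    have hd : EqOn (fderivWithin ℝ (⇑(r • L)) s) (fun _ => r • L) s := fun y hy =>
      (r • L).fderivWithin (hs y hy)
    rw [iteratedFDerivWithin_congr hd hx]
    rcases Nat.eq_zero_or_pos k with rfl | hk
    · simp only [norm_iteratedFDerivWithin_zero, norm_smul, Real.norm_eq_abs, abs_of_nonneg hr]
      rw [mul_comm, zero_add, pow_one]
      gcongr
    · have : iteratedFDerivWithin ℝ k (fun _ : E => r • L) s x = 0 := by
        rw [iteratedFDerivWithin_const_of_ne (by omega)]; rfl
      rw [this, norm_zero]
      positivity

end Jets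

end NashKuiper

namespace NashKuiper
open scoped ContDiff Convolution
open MeasureTheory

section Mollification

/-- Local bound for the derivatives of a convolution with a smooth compactly supported kernel. -/
theorem norm_iteratedFDeriv_convolution_le {E : Type} [NormedAddCommGroup E] [NormedSpace ℝ E]
    [FiniteDimensional ℝ E] [MeasurableSpace E] [BorelSpace E] {μ : Measure E}
    [μ.IsAddHaarMeasure] {V : Type} [NormedAddCommGroup V] [NormedSpace ℝ V] {F : E → V}
    (hF : LocallyIntegrable F μ) {K : Set E} {X : E} {A : ℝ} (hA0 : 0 ≤ A)
    (hA : ∀ t ∈ K, ‖F (X - t)‖ ≤ A) (j : ℕ) :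
    ∀ {G W : Type} [NormedAddCommGroup G] [NormedSpace ℝ G] [NormedAddCommGroup W]
      [NormedSpace ℝ W] (L : G →L[ℝ] V →L[ℝ] W) (φ : E → G),
      ContDiff ℝ ∞ φ → HasCompactSupport φ → tsupport φ ⊆ K →
      ‖iteratedFDeriv ℝ j (φ ⋆[L, μ] F) X‖ ≤ ‖L‖ * A * ∫ t, ‖iteratedFDeriv ℝ j φ t‖ ∂μ := by
  induction j with
  | zero =>
    intro G W _ _ _ _ L φ hφ hc hK
    simp only [norm_iteratedFDeriv_zero]
    rw [convolution_def]
    calc ‖∫ t, L (φ t) (F (X - t)) ∂μ‖ ≤ ∫ t, ‖L‖ * A * ‖φ t‖ ∂μ := by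
          refine norm_integral_le_of_norm_le ?_ (Filter.Eventually.of_forall fun t => ?_)
          · exact ((hφ.continuous.integrable_of_hasCompactSupport hc).norm).const_mul _
          · by_cases ht : t ∈ tsupport φ
            · calc ‖L (φ t) (F (X - t))‖ ≤ ‖L‖ * ‖φ t‖ * ‖F (X - t)‖ := L.le_opNorm₂ _ _
                _ ≤ ‖L‖ * ‖φ t‖ * A := by gcongr; exact hA t (hK ht)
                _ = _ := by ring
            · simp [image_eq_zero_of_notMem_tsupport ht]
      _ = _ := by rw [integral_const_mul]
  | succ j ih =>
    intro G W _ _ _ _ L φ hφ hc hK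
    have hd : fderiv ℝ (φ ⋆[L, μ] F) = (fderiv ℝ φ ⋆[L.precompL E, μ] F) := by
      ext1 y
      exact (hc.hasFDerivAt_convolution_left L (hφ.of_le (by exact_mod_cast le_top)) hF y).fderiv
    rw [← norm_iteratedFDeriv_fderiv, hd]
    refine (ih (L.precompL E) (fderiv ℝ φ) (hφ.fderiv_right (by simp)) (hc.fderiv ℝ)
      ((tsupport_fderiv_subset ℝ).trans hK)).trans ?_
    have e : ∀ t, ‖iteratedFDeriv ℝ j (fderiv ℝ φ) t‖ = ‖iteratedFDeriv ℝ (j + 1) φ t‖ :=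
      fun t => norm_iteratedFDeriv_fderiv
    simp only [e]
    gcongr
    · exact L.norm_precompL_le E

variable {d : ℕ}

local notation "𝔼" => EuclideanSpace ℝ (Fin d)
local notation "𝔹" => closedBall (0 : EuclideanSpace ℝ (Fin d)) 1

/-- A smooth probability density supported in the unit ball. -/
def mollBump (d : ℕ) : ContDiffBump (0 : EuclideanSpace ℝ (Fin d)) :=
  ⟨1 / 2, 1, by norm_num, by norm_num⟩

def mollKernel (d : ℕ) : EuclideanSpace ℝ (Fin d) → ℝ := (mollBump d).normed volume

theorem contDiff_mollKernel : ContDiff ℝ ∞ (mollKernel d) := (mollBump d).contDiff_normed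

theorem hasCompactSupport_mollKernel : HasCompactSupport (mollKernel d) :=
  (mollBump d).hasCompactSupport_normed

theorem tsupport_mollKernel : tsupport (mollKernel d) = closedBall 0 1 :=
  (mollBump d).tsupport_normed_eq

theorem mollKernel_nonneg (t : 𝔼) : 0 ≤ mollKernel d t := (mollBump d).nonneg_normed t

theorem integral_mollKernel : ∫ t, mollKernel d t = 1 := (mollBump d).integral_normed

theorem integrable_mollKernel : Integrable (mollKernel d) :=
  contDiff_mollKernel.continuous.integrable_of_hasCompactSupport hasCompactSupport_mollKernel

theorem mollKernel_eq_zero {t : 𝔼} (ht : t ∉ 𝔹) : mollKernel d t = 0 := by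
  rw [← tsupport_mollKernel] at ht
  exact image_eq_zero_of_notMem_tsupport ht

set_option linter.unusedSectionVars false

variable {V W : Type} [NormedAddCommGroup V] [NormedSpace ℝ V] [CompleteSpace V]
  [NormedAddCommGroup W] [NormedSpace ℝ W] [CompleteSpace W]

/-- Mollification at scale `ℓ` on the closed unit ball: averages of `f` over the balls of radius
`ℓ` centred at `(1 - ℓ) x`, which stay inside the unit ball. -/
def moll (ℓ : ℝ) (f : 𝔼 → V) (x : 𝔼) : V :=
  (mollKernel d ⋆[ContinuousLinearMap.lsmul ℝ ℝ, volume] fun y => indicator 𝔹 f (ℓ • y))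
    (((1 - ℓ) / ℓ) • x)

theorem mem_ball_of_moll {ℓ : ℝ} (h0 : 0 < ℓ) (h1 : ℓ ≤ 1) {x t : 𝔼} (hx : x ∈ 𝔹) (ht : t ∈ 𝔹) :
    (1 - ℓ) • x - ℓ • t ∈ 𝔹 ∧ dist ((1 - ℓ) • x - ℓ • t) x ≤ 2 * ℓ := by
  rw [mem_closedBall_zero_iff] at *
  constructor
  · calc ‖(1 - ℓ) • x - ℓ • t‖ ≤ ‖(1 - ℓ) • x‖ + ‖ℓ • t‖ := norm_sub_le _ _
      _ = (1 - ℓ) * ‖x‖ + ℓ * ‖t‖ := by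
        rw [norm_smul, norm_smul, Real.norm_of_nonneg h0.le, Real.norm_of_nonneg (by linarith)]
      _ ≤ 1 := by nlinarith
  · rw [dist_eq_norm]
    have : (1 - ℓ) • x - ℓ • t - x = -(ℓ • (x + t)) := by module
    rw [this, norm_neg, norm_smul, Real.norm_of_nonneg h0.le, mul_comm]
    gcongr
    exact (norm_add_le _ _).trans (by linarith)

theorem moll_eq_integral {ℓ : ℝ} (h0 : 0 < ℓ) (h1 : ℓ ≤ 1) (f : 𝔼 → V) {x : 𝔼} (hx : x ∈ 𝔹) :
    moll ℓ f x = ∫ t, mollKernel d t • f ((1 - ℓ) • x - ℓ • t) := by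
  rw [moll, convolution_def]
  refine integral_congr_ae (Filter.Eventually.of_forall fun t => ?_)
  simp only [ContinuousLinearMap.lsmul_apply]
  by_cases ht : t ∈ 𝔹
  · have e : ℓ • (((1 - ℓ) / ℓ) • x - t) = (1 - ℓ) • x - ℓ • t := by
      rw [smul_sub, smul_smul]
      congr 2
      field_simp
    rw [e, indicator_of_mem (mem_ball_of_moll h0 h1 hx ht).1]
  · simp [mollKernel_eq_zero ht]

theorem locallyIntegrable_indicator_smul {f : 𝔼 → V} (hf : ContinuousOn f 𝔹) {ℓ : ℝ} (h0 : 0 < ℓ) :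
    LocallyIntegrable fun y : 𝔼 => indicator 𝔹 f (ℓ • y) := by
  have h : Integrable (indicator 𝔹 f) :=
    (hf.integrableOn_compact (isCompact_closedBall _ _)).integrable_indicator
      isClosed_closedBall.measurableSet
  exact (h.comp_smul h0.ne').locallyIntegrable

theorem contDiff_moll {f : 𝔼 → V} (hf : ContinuousOn f 𝔹) {ℓ : ℝ} (h0 : 0 < ℓ) :
    ContDiff ℝ ∞ (moll ℓ f) := by
  have h := hasCompactSupport_mollKernel.contDiff_convolution_left
    (ContinuousLinearMap.lsmul ℝ ℝ) (contDiff_mollKernel (d := d))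
    (locallyIntegrable_indicator_smul hf h0)
  exact h.comp (contDiff_const_smul _)

theorem integrable_moll {ℓ : ℝ} (h0 : 0 < ℓ) (h1 : ℓ ≤ 1) {f : 𝔼 → V} (hf : ContinuousOn f 𝔹)
    {x : 𝔼} (hx : x ∈ 𝔹) :
    Integrable fun t => mollKernel d t • f ((1 - ℓ) • x - ℓ • t) := by
  have hc : ContinuousOn (fun t => mollKernel d t • f ((1 - ℓ) • x - ℓ • t)) 𝔹 := by
    refine contDiff_mollKernel.continuous.continuousOn.smul (hf.comp (by fun_prop) ?_)
    intro t ht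
    exact (mem_ball_of_moll h0 h1 hx ht).1
  have h2 := hc.integrableOn_compact (μ := volume) (isCompact_closedBall _ _)
  rw [← integrable_indicator_iff isClosed_closedBall.measurableSet] at h2
  refine h2.congr (Filter.Eventually.of_forall fun t => ?_)
  by_cases ht : t ∈ 𝔹
  · simp [indicator_of_mem ht]
  · simp [indicator_of_notMem ht, mollKernel_eq_zero ht]

theorem norm_integral_mollKernel_smul_le {F : 𝔼 → V} {a : ℝ} (hF : ∀ t ∈ 𝔹, ‖F t‖ ≤ a) :
    ‖∫ t, mollKernel d t • F t‖ ≤ a := by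
  calc ‖∫ t, mollKernel d t • F t‖ ≤ ∫ t, mollKernel d t * a := by
        refine norm_integral_le_of_norm_le (integrable_mollKernel.mul_const _)
          (Filter.Eventually.of_forall fun t => ?_)
        by_cases ht : t ∈ 𝔹
        · rw [norm_smul, Real.norm_of_nonneg (mollKernel_nonneg t)]
          exact mul_le_mul_of_nonneg_left (hF t ht) (mollKernel_nonneg t)
        · simp [mollKernel_eq_zero ht]
    _ = a := by rw [integral_mul_const, integral_mollKernel, one_mul]

theorem moll_const {ℓ : ℝ} (h0 : 0 < ℓ) (h1 : ℓ ≤ 1) (c : V) {x : 𝔼} (hx : x ∈ 𝔹) :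
    moll ℓ (fun _ => c) x = c := by
  rw [moll_eq_integral h0 h1 _ hx, integral_smul_const, integral_mollKernel, one_smul]

theorem moll_sub {ℓ : ℝ} (h0 : 0 < ℓ) (h1 : ℓ ≤ 1) {f g : 𝔼 → V} (hf : ContinuousOn f 𝔹)
    (hg : ContinuousOn g 𝔹) {x : 𝔼} (hx : x ∈ 𝔹) :
    moll ℓ (fun y => f y - g y) x = moll ℓ f x - moll ℓ g x := by
  simp only [moll_eq_integral h0 h1 _ hx]
  rw [← integral_sub (integrable_moll h0 h1 hf hx) (integrable_moll h0 h1 hg hx)]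
  simp only [smul_sub]

theorem moll_clm {ℓ : ℝ} (h0 : 0 < ℓ) (h1 : ℓ ≤ 1) {f : 𝔼 → V} (hf : ContinuousOn f 𝔹)
    (L : V →L[ℝ] W) {x : 𝔼} (hx : x ∈ 𝔹) :
    moll ℓ (fun y => L (f y)) x = L (moll ℓ f x) := by
  simp only [moll_eq_integral h0 h1 _ hx]
  rw [← L.integral_comp_comm (integrable_moll h0 h1 hf hx)]
  simp only [map_smul]

theorem norm_moll_sub_le {ℓ : ℝ} (h0 : 0 < ℓ) (h1 : ℓ ≤ 1) {f : 𝔼 → V} (hf : ContinuousOn f 𝔹)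
    {c : V} {a : ℝ} {x : 𝔼} (hx : x ∈ 𝔹) (h : ∀ z ∈ 𝔹, dist z x ≤ 2 * ℓ → ‖f z - c‖ ≤ a) :
    ‖moll ℓ f x - c‖ ≤ a := by
  have e : moll ℓ f x - c = moll ℓ (fun y => f y - c) x := by
    rw [moll_sub h0 h1 hf continuousOn_const hx, moll_const h0 h1 _ hx]
  rw [e, moll_eq_integral h0 h1 _ hx]
  refine norm_integral_mollKernel_smul_le fun t ht => ?_
  obtain ⟨h2, h3⟩ := mem_ball_of_moll h0 h1 hx ht
  exact h _ h2 h3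

theorem uniqueDiffOn_unitBall : UniqueDiffOn ℝ 𝔹 :=
  uniqueDiffOn_convex (convex_closedBall _ _) (by
    rw [interior_closedBall _ one_ne_zero]
    exact nonempty_ball.2 one_pos)

/-- The constant in the derivative bounds for mollifications. -/
def mollConst (d N : ℕ) : ℝ :=
  ∑ j ∈ Finset.range (N + 1), ∫ t, ‖iteratedFDeriv ℝ j (mollKernel d) t‖

theorem mollConst_nonneg (d N : ℕ) : 0 ≤ mollConst d N :=
  Finset.sum_nonneg fun _ _ => integral_nonneg fun _ => norm_nonneg _

theorem jetBound_moll {ℓ : ℝ} (h0 : 0 < ℓ) (h1 : ℓ ≤ 1) {f : 𝔼 → V} (hf : ContinuousOn f 𝔹)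
    {a : ℝ} {x : 𝔼} (hx : x ∈ 𝔹) (h : ∀ z ∈ 𝔹, dist z x ≤ 2 * ℓ → ‖f z‖ ≤ a) (N : ℕ) :
    JetBound 𝔹 (moll ℓ f) (mollConst d N * a) (1 / ℓ) N x := by
  have ha : 0 ≤ a := (norm_nonneg _).trans (h x hx (by simpa using h0.le))
  intro j hj
  rw [iteratedFDerivWithin_eq_iteratedFDeriv uniqueDiffOn_unitBall
    ((contDiff_moll hf h0).contDiffAt.of_le (by exact_mod_cast le_top)) hx]
  set Ψ := (mollKernel d ⋆[ContinuousLinearMap.lsmul ℝ ℝ, volume]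
    fun y => indicator 𝔹 f (ℓ • y)) with hΨ
  have hΨs : ContDiff ℝ ∞ Ψ := hasCompactSupport_mollKernel.contDiff_convolution_left
    (ContinuousLinearMap.lsmul ℝ ℝ) (contDiff_mollKernel (d := d))
    (locallyIntegrable_indicator_smul hf h0)
  set L : 𝔼 →L[ℝ] 𝔼 := ((1 - ℓ) / ℓ) • ContinuousLinearMap.id ℝ 𝔼 with hL
  have hLn : ‖L‖ ≤ 1 / ℓ := by
    rw [hL, norm_smul, Real.norm_of_nonneg (div_nonneg (by linarith) h0.le)]
    calc (1 - ℓ) / ℓ * ‖ContinuousLinearMap.id ℝ 𝔼‖ ≤ (1 - ℓ) / ℓ * 1 := by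
          gcongr
          exact ContinuousLinearMap.norm_id_le
      _ ≤ 1 / ℓ := by rw [mul_one]; gcongr; linarith
  have e : moll ℓ f = Ψ ∘ L := by
    ext1 y
    simp [moll, hΨ, hL]
  have hbound : ‖iteratedFDeriv ℝ j Ψ (L x)‖ ≤ mollConst d N * a := by
    have h2 := norm_iteratedFDeriv_convolution_le (μ := volume) (X := L x)
      (locallyIntegrable_indicator_smul hf h0) ha
      (K := 𝔹) (fun t ht => ?_) j (ContinuousLinearMap.lsmul ℝ ℝ) (mollKernel d)
      contDiff_mollKernel hasCompactSupport_mollKernel tsupport_mollKernel.le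
    · refine h2.trans ?_
      have h3 : ‖(ContinuousLinearMap.lsmul ℝ ℝ : ℝ →L[ℝ] V →L[ℝ] V)‖ ≤ 1 :=
        ContinuousLinearMap.opNorm_lsmul_le
      have h4 : ∫ t, ‖iteratedFDeriv ℝ j (mollKernel d) t‖ ≤ mollConst d N :=
        Finset.single_le_sum
          (f := fun j => ∫ t, ‖iteratedFDeriv ℝ j (mollKernel d) t‖)
          (fun _ _ => integral_nonneg fun _ => norm_nonneg _) (Finset.mem_range.2 (by omega))
      have h5 : 0 ≤ ∫ t, ‖iteratedFDeriv ℝ j (mollKernel d) t‖ :=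
        integral_nonneg fun _ => norm_nonneg _
      calc _ ≤ 1 * a * mollConst d N := by gcongr
        _ = _ := by ring
    · obtain ⟨h3, h4⟩ := mem_ball_of_moll h0 h1 hx ht
      have e2 : ℓ • (L x - t) = (1 - ℓ) • x - ℓ • t := by
        simp only [hL, _root_.smul_apply, ContinuousLinearMap.id_apply]
        rw [smul_sub, smul_smul]
        congr 2
        field_simp
      rw [e2, indicator_of_mem h3]
      exact h _ h3 h4
  rw [e, L.iteratedFDeriv_comp_right (hΨs.of_le (by exact_mod_cast le_top : (j : WithTop ℕ∞) ≤ ∞))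
    x le_rfl]
  refine (ContinuousMultilinearMap.norm_compContinuousLinearMap_le _ _).trans ?_
  rw [Finset.prod_const, Finset.card_univ, Fintype.card_fin]
  gcongr
  exact mul_nonneg (mollConst_nonneg _ _) ha

theorem hasFDerivWithinAt_moll {ℓ : ℝ} (h0 : 0 < ℓ) (h1 : ℓ ≤ 1) {f : 𝔼 → V}
    (hf : ContDiffOn ℝ 1 f 𝔹) {x : 𝔼} (hx : x ∈ 𝔹) :
    HasFDerivWithinAt (moll ℓ f) ((1 - ℓ) • moll ℓ (fderivWithin ℝ f 𝔹) x) 𝔹 x := by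
  have hD : ContinuousOn (fderivWithin ℝ f 𝔹) 𝔹 :=
    hf.continuousOn_fderivWithin uniqueDiffOn_unitBall le_rfl
  have hu := (isCompact_closedBall (0 : 𝔼) 1).uniformContinuousOn_of_continuous hD
  rw [hasFDerivWithinAt_iff_isLittleO, Asymptotics.isLittleO_iff]
  intro c hc
  obtain ⟨η, hη, hηc⟩ := Metric.uniformContinuousOn_iff.1 hu c hc
  filter_upwards [self_mem_nhdsWithin, mem_nhdsWithin_of_mem_nhds (ball_mem_nhds x hη)] with y hy hyx
  have e : moll ℓ f y - moll ℓ f x - ((1 - ℓ) • moll ℓ (fderivWithin ℝ f 𝔹) x) (y - x)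
      = ∫ t, mollKernel d t • (f ((1 - ℓ) • y - ℓ • t) - f ((1 - ℓ) • x - ℓ • t)
        - (1 - ℓ) • fderivWithin ℝ f 𝔹 ((1 - ℓ) • x - ℓ • t) (y - x)) := by
    have h2 : ((1 - ℓ) • moll ℓ (fderivWithin ℝ f 𝔹) x) (y - x)
        = ∫ t, mollKernel d t • ((1 - ℓ) • fderivWithin ℝ f 𝔹 ((1 - ℓ) • x - ℓ • t) (y - x)) := by
      rw [_root_.smul_apply, moll_eq_integral h0 h1 _ hx,
        ContinuousLinearMap.integral_apply (integrable_moll h0 h1 hD hx), ← integral_smul]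
      refine integral_congr_ae (Filter.Eventually.of_forall fun t => ?_)
      simp only [_root_.smul_apply]
      rw [smul_comm]
    have h3 : Integrable fun t => mollKernel d t •
        ((1 - ℓ) • fderivWithin ℝ f 𝔹 ((1 - ℓ) • x - ℓ • t) (y - x)) := by
      refine (((integrable_moll h0 h1 hD hx).apply_continuousLinearMap (y - x)).smul (1 - ℓ)).congr
        (Filter.Eventually.of_forall fun t => ?_)
      simp only [_root_.smul_apply, Pi.smul_apply]
      rw [smul_comm]
    simp only [smul_sub]
    rw [h2, moll_eq_integral h0 h1 _ hx, moll_eq_integral h0 h1 _ hy, integral_sub, integral_sub]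
    · exact integrable_moll h0 h1 hf.continuousOn hy
    · exact integrable_moll h0 h1 hf.continuousOn hx
    · exact (integrable_moll h0 h1 hf.continuousOn hy).sub
        (integrable_moll h0 h1 hf.continuousOn hx)
    · simpa only [smul_sub] using h3
  rw [e]
  refine norm_integral_mollKernel_smul_le fun t ht => ?_
  have hX := (mem_ball_of_moll h0 h1 hx ht).1
  have hY := (mem_ball_of_moll h0 h1 hy ht).1
  have hsub : (1 - ℓ) • y - ℓ • t - ((1 - ℓ) • x - ℓ • t) = (1 - ℓ) • (y - x) := by module
  have hn : ‖(1 - ℓ) • y - ℓ • t - ((1 - ℓ) • x - ℓ • t)‖ ≤ ‖y - x‖ := by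
    rw [hsub, norm_smul, Real.norm_of_nonneg (by linarith)]
    exact mul_le_of_le_one_left (norm_nonneg _) (by linarith)
  have hyx' : ‖y - x‖ < η := by rwa [mem_ball, dist_eq_norm] at hyx
  have key := (Convex.norm_image_sub_le_of_norm_hasFDerivWithin_le'
    (s := segment ℝ ((1 - ℓ) • x - ℓ • t) ((1 - ℓ) • y - ℓ • t))
    (f' := fderivWithin ℝ f 𝔹) (f := f) (C := c)
    (φ := fderivWithin ℝ f 𝔹 ((1 - ℓ) • x - ℓ • t)) ?_ ?_ (convex_segment _ _)
    (left_mem_segment _ _ _) (right_mem_segment _ _ _))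
  · rw [hsub, map_smul] at key
    refine key.trans ?_
    rw [← hsub]
    gcongr
  · intro z hz
    have hzB := (convex_closedBall (0 : 𝔼) 1).segment_subset hX hY hz
    exact ((hf.differentiableOn one_ne_zero z hzB).hasFDerivWithinAt).mono
      ((convex_closedBall (0 : 𝔼) 1).segment_subset hX hY)
  · intro z hz
    have hzB := (convex_closedBall (0 : 𝔼) 1).segment_subset hX hY hz
    have := hηc z hzB _ hX ?_
    · rw [dist_eq_norm] at this
      exact this.le
    · rw [dist_eq_norm]
      refine lt_of_le_of_lt ?_ hyx'
      exact (norm_sub_le_of_mem_segment hz).trans hn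

end Mollification

end NashKuiper

namespace NashKuiper
open scoped ContDiff RealInnerProductSpace
open ContinuousLinearMap (adjoint)

section Frame

variable {d : ℕ}

local notation "𝔼" => EuclideanSpace ℝ (Fin d)
local notation "𝔽" => EuclideanSpace ℝ (Fin (d + 1))

/-- The generalized cross product of the columns of `A`. -/
def crossProd (A : 𝔼 →L[ℝ] 𝔽) : 𝔽 :=
  ∑ i, (EuclideanSpace.basisFun (Fin (d + 1)) ℝ).toBasis.det
    (Fin.snoc (fun j => A (EuclideanSpace.single j 1)) (EuclideanSpace.single i 1) : Fin (d + 1) → 𝔽)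
      • EuclideanSpace.single i (1 : ℝ)

theorem inner_crossProd (A : 𝔼 →L[ℝ] 𝔽) (w : 𝔽) :
    ⟪w, crossProd A⟫ = (EuclideanSpace.basisFun (Fin (d + 1)) ℝ).toBasis.det
      (Fin.snoc (fun j => A (EuclideanSpace.single j 1)) w : Fin (d + 1) → 𝔽) := by
  have hw : w = ∑ i, w i • EuclideanSpace.single i (1 : ℝ) := by
    ext k
    simp [Finset.sum_apply, Pi.single_apply]
  have hu : ∀ z : 𝔽, (Fin.snoc (fun j => A (EuclideanSpace.single j 1)) z : Fin (d + 1) → 𝔽)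
      = Function.update (Fin.snoc (fun j => A (EuclideanSpace.single j 1)) 0 : Fin (d + 1) → 𝔽)
        (Fin.last d) z := by
    intro z
    refine funext (Fin.lastCases ?_ fun j => ?_)
    · simp
    · rw [Function.update_of_ne (Fin.castSucc_lt_last j).ne]
      simp
  conv_rhs => rw [hw, hu, AlternatingMap.map_update_sum]
  rw [crossProd, inner_sum]
  refine Finset.sum_congr rfl fun i _ => ?_
  rw [AlternatingMap.map_update_smul, ← hu, real_inner_smul_right, EuclideanSpace.inner_single_right]
  simp [mul_comm]

theorem inner_apply_crossProd (A : 𝔼 →L[ℝ] 𝔽) (w : 𝔼) : ⟪A w, crossProd A⟫ = 0 := by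
  have hw : w = ∑ i, w i • EuclideanSpace.single i (1 : ℝ) := by
    ext k
    simp [Finset.sum_apply, Pi.single_apply]
  rw [hw, map_sum, sum_inner]
  refine Finset.sum_eq_zero fun i _ => ?_
  rw [map_smul, real_inner_smul_left, inner_crossProd,
    AlternatingMap.map_eq_zero_of_eq _ _ (i := i.castSucc) (j := Fin.last d), mul_zero]
  · simp
  · exact (Fin.castSucc_lt_last i).ne

theorem contDiff_crossProd : ContDiff ℝ ∞ (crossProd (d := d)) := by
  unfold crossProd
  refine ContDiff.sum fun i _ => ContDiff.fun_smul ?_ contDiff_const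
  simp only [Module.Basis.det_apply, Matrix.det_apply]
  refine ContDiff.sum fun σ _ => ContDiff.const_smul _ (contDiff_prod fun k _ => ?_)
  refine Fin.lastCases ?_ (fun j => ?_) k
  · simp only [Module.Basis.toMatrix_apply, Fin.snoc_last]
    exact contDiff_const
  · simp only [Module.Basis.toMatrix_apply, Fin.snoc_castSucc]
    have h : ContDiff ℝ ∞ fun A : 𝔼 →L[ℝ] 𝔽 => A (EuclideanSpace.single j 1) :=
      (ContinuousLinearMap.apply ℝ 𝔽 (EuclideanSpace.single j 1 : 𝔼)).contDiff
    exact (EuclideanSpace.proj (𝕜 := ℝ) (σ (Fin.castSucc j))).contDiff.comp h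

theorem crossProd_ne_zero {A : 𝔼 →L[ℝ] 𝔽} (hA : Function.Injective A) : crossProd A ≠ 0 := by
  intro h0
  have hli : LinearIndependent ℝ fun j : Fin d => A (EuclideanSpace.single j 1) := by
    have := (EuclideanSpace.basisFun (Fin d) ℝ).toBasis.linearIndependent.map' A.toLinearMap
      (LinearMap.ker_eq_bot.2 hA)
    have e : (fun j : Fin d => A (EuclideanSpace.single j 1))
        = A.toLinearMap ∘ (EuclideanSpace.basisFun (Fin d) ℝ).toBasis := by
      ext1 j
      simp
    rw [e]
    exact this
  have hspan : Submodule.span ℝ (range fun j : Fin d => A (EuclideanSpace.single j 1)) ≠ ⊤ := by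
    intro h
    have h1 := finrank_span_eq_card hli
    rw [h, finrank_top] at h1
    simp at h1
  obtain ⟨w, hw⟩ : ∃ w, w ∉ Submodule.span ℝ
      (range fun j : Fin d => A (EuclideanSpace.single j 1)) := by
    by_contra! hc
    exact hspan ((Submodule.eq_top_iff').2 hc)
  have h2 := hli.finSnoc hw
  have h3 : IsUnit ((EuclideanSpace.basisFun (Fin (d + 1)) ℝ).toBasis.det
      (Fin.snoc (fun j => A (EuclideanSpace.single j 1)) w : Fin (d + 1) → 𝔽)) := by
    rw [← Module.Basis.is_basis_iff_det]
    exact ⟨h2, h2.span_eq_top_of_card_eq_finrank' (by simp)⟩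
  rw [← inner_crossProd, h0, inner_zero_right] at h3
  exact not_isUnit_zero h3

/-- The differentials on which the moving frame below is defined and smooth. -/
def frameSet (d : ℕ) : Set (EuclideanSpace ℝ (Fin d) →L[ℝ] EuclideanSpace ℝ (Fin (d + 1))) :=
  {A | crossProd A ≠ 0 ∧ IsUnit (adjoint A ∘L A)}

def unitNormal (A : 𝔼 →L[ℝ] 𝔽) : 𝔽 := ‖crossProd A‖⁻¹ • crossProd A

/-- The vector tangent to the range of `A` dual to the covector `ν`. -/
def dualTangent (ν : 𝔼) (A : 𝔼 →L[ℝ] 𝔽) : 𝔽 := A (Ring.inverse (adjoint A ∘L A) ν)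

theorem contDiff_adjoint_comp : ContDiff ℝ ∞ fun A : 𝔼 →L[ℝ] 𝔽 => adjoint A ∘L A := by
  have h : ContDiff ℝ ∞ fun A : 𝔼 →L[ℝ] 𝔽 => adjoint A :=
    (adjoint (𝕜 := ℝ) (E := 𝔼) (F := 𝔽)).toContinuousLinearEquiv.contDiff
  exact h.clm_comp contDiff_id

theorem isOpen_frameSet : IsOpen (frameSet d) := by
  refine IsOpen.inter ?_ ?_
  · exact isOpen_compl_singleton.preimage (f := crossProd (d := d)) contDiff_crossProd.continuous
  · exact Units.isOpen.preimage (contDiff_adjoint_comp (d := d)).continuous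

theorem mem_frameSet {A : 𝔼 →L[ℝ] 𝔽} (hA : Function.Injective A) : A ∈ frameSet d := by
  refine ⟨crossProd_ne_zero hA, ?_⟩
  have hi : Function.Injective (adjoint A ∘L A) := by
    rw [injective_iff_map_eq_zero]
    intro w hw
    refine (injective_iff_map_eq_zero A).1 hA w ?_
    have : ⟪w, (adjoint A ∘L A) w⟫ = 0 := by rw [hw, inner_zero_right]
    rw [ContinuousLinearMap.comp_apply, ContinuousLinearMap.adjoint_inner_right] at this
    exact inner_self_eq_zero.1 this
  rw [ContinuousLinearMap.isUnit_iff_bijective]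
  exact ⟨hi, (LinearMap.injective_iff_surjective (f := (adjoint A ∘L A).toLinearMap)).1 hi⟩

theorem contDiffOn_unitNormal : ContDiffOn ℝ ∞ (unitNormal (d := d)) (frameSet d) := by
  intro A hA
  have h := contDiff_crossProd (d := d)
  exact (((h.contDiffAt.norm ℝ hA.1).inv (norm_ne_zero_iff.2 hA.1)).smul
    h.contDiffAt).contDiffWithinAt

theorem contDiffOn_dualTangent (ν : 𝔼) : ContDiffOn ℝ ∞ (dualTangent ν) (frameSet d) := by
  intro A hA
  obtain ⟨a, ha⟩ := hA.2
  have h1 : ContDiffAt ℝ ∞ (fun A : 𝔼 →L[ℝ] 𝔽 => Ring.inverse (adjoint A ∘L A)) A := by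
    refine ContDiffAt.comp A (g := Ring.inverse) ?_ contDiff_adjoint_comp.contDiffAt
    rw [← ha]
    exact contDiffAt_ringInverse ℝ a
  exact (contDiffAt_id.clm_apply (h1.clm_apply contDiffAt_const)).contDiffWithinAt

theorem norm_unitNormal {A : 𝔼 →L[ℝ] 𝔽} (hA : A ∈ frameSet d) : ‖unitNormal A‖ = 1 := by
  rw [unitNormal, norm_smul, norm_inv, norm_norm, inv_mul_cancel₀ (norm_ne_zero_iff.2 hA.1)]

theorem inner_apply_unitNormal (A : 𝔼 →L[ℝ] 𝔽) (w : 𝔼) : ⟪A w, unitNormal A⟫ = 0 := by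
  rw [unitNormal, real_inner_smul_right, inner_apply_crossProd, mul_zero]

theorem inner_dualTangent_unitNormal (ν : 𝔼) (A : 𝔼 →L[ℝ] 𝔽) :
    ⟪dualTangent ν A, unitNormal A⟫ = 0 := inner_apply_unitNormal _ _

theorem inner_apply_dualTangent {A : 𝔼 →L[ℝ] 𝔽} (hA : A ∈ frameSet d) (ν w : 𝔼) :
    ⟪A w, dualTangent ν A⟫ = ⟪w, ν⟫ := by
  rw [dualTangent, ← ContinuousLinearMap.adjoint_inner_right]
  have : adjoint A (A (Ring.inverse (adjoint A ∘L A) ν))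
      = ((adjoint A ∘L A) * Ring.inverse (adjoint A ∘L A)) ν := rfl
  rw [this, Ring.mul_inverse_cancel _ hA.2]
  rfl

/-- Linear maps with two-sided bounds. -/
def bilipSet (d : ℕ) (c C : ℝ) :
    Set (EuclideanSpace ℝ (Fin d) →L[ℝ] EuclideanSpace ℝ (Fin (d + 1))) :=
  {A | ‖A‖ ≤ C ∧ ∀ w, c * ‖w‖ ≤ ‖A w‖}

theorem isCompact_bilipSet (c C : ℝ) : IsCompact (bilipSet d c C) := by
  have : bilipSet d c C = closedBall 0 C ∩ ⋂ w, {A | c * ‖w‖ ≤ ‖A w‖} := by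
    ext A
    simp [bilipSet]
  rw [this]
  refine (isCompact_closedBall _ _).inter_right (isClosed_iInter fun w => ?_)
  exact isClosed_le continuous_const
    ((ContinuousLinearMap.apply ℝ 𝔽 w).continuous.norm)

theorem bilipSet_subset_frameSet {c : ℝ} (hc : 0 < c) (C : ℝ) : bilipSet d c C ⊆ frameSet d := by
  intro A hA
  refine mem_frameSet ((injective_iff_map_eq_zero A).2 fun w hw => ?_)
  have := hA.2 w
  rw [hw, norm_zero] at this
  exact norm_eq_zero.1 (le_antisymm (nonpos_of_mul_nonpos_right this hc) (norm_nonneg _))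

end Frame

end NashKuiper

namespace NashKuiper
open scoped ContDiff RealInnerProductSpace

section Step

variable {d : ℕ}

local notation "𝔼" => EuclideanSpace ℝ (Fin d)
local notation "𝔽" => EuclideanSpace ℝ (Fin (d + 1))
local notation "𝔹" => closedBall (0 : EuclideanSpace ℝ (Fin d)) 1
local notation "𝔇" u => fderivWithin ℝ u (closedBall (0 : EuclideanSpace ℝ (Fin d)) 1)

/-- The corrugation profile. -/
def corr (ν : 𝔼) (μ : ℝ) (X Y : 𝔼 → 𝔽) (y : 𝔼) : 𝔽 :=
  (1 / 4 * Real.sin (μ * ((2 : ℝ) • innerSL ℝ ν) y)) • X y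
    + (√2 * Real.cos (μ * innerSL ℝ ν y)) • Y y

theorem fderivWithin_corr_apply {ν : 𝔼} {μ : ℝ} (hμ : μ ≠ 0) {u X Y : 𝔼 → 𝔽} {x : 𝔼} (hx : x ∈ 𝔹)
    (hu : DifferentiableWithinAt ℝ u 𝔹 x)
    (hX : DifferentiableWithinAt ℝ X 𝔹 x) (hY : DifferentiableWithinAt ℝ Y 𝔹 x) (w : 𝔼) :
    (𝔇 fun y => u y + μ⁻¹ • corr ν μ X Y y) x w = (𝔇 u) x w +
      (⟪ν, w⟫ • ((1 / 2 * Real.cos (2 * (μ * ⟪ν, x⟫))) • X x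
          - (√2 * Real.sin (μ * ⟪ν, x⟫)) • Y x)
        + μ⁻¹ • ((1 / 4 * Real.sin (2 * (μ * ⟪ν, x⟫))) • (𝔇 X) x w
          + (√2 * Real.cos (μ * ⟪ν, x⟫)) • (𝔇 Y) x w)) := by
  have h1 : HasFDerivWithinAt (fun y : 𝔼 => μ * ((2 : ℝ) • innerSL ℝ ν) y)
      (μ • ((2 : ℝ) • innerSL ℝ ν)) 𝔹 x :=
    (((2 : ℝ) • innerSL ℝ ν).hasFDerivWithinAt).const_mul μ
  have h2 : HasFDerivWithinAt (fun y : 𝔼 => μ * innerSL ℝ ν y) (μ • innerSL ℝ ν) 𝔹 x :=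
    ((innerSL ℝ ν).hasFDerivWithinAt).const_mul μ
  have h3 := ((h1.sin.const_mul (1 / 4)).smul hX.hasFDerivWithinAt).add
    ((h2.cos.const_mul (√2)).smul hY.hasFDerivWithinAt)
  have h4 := hu.hasFDerivWithinAt.add (h3.const_smul μ⁻¹)
  have h5 := h4.fderivWithin (uniqueDiffOn_unitBall x hx)
  have e : (fun y => u y + μ⁻¹ • corr ν μ X Y y) = u + μ⁻¹ •
      ((fun y => 1 / 4 * Real.sin (μ * ((2 : ℝ) • innerSL ℝ ν) y)) • X
        + (fun y => √2 * Real.cos (μ * innerSL ℝ ν y)) • Y) := by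
    ext1 y
    simp [corr]
  rw [e, h5]
  simp only [_root_.add_apply, _root_.smul_apply, ContinuousLinearMap.smulRight_apply,
    innerSL_apply_apply, smul_eq_mul]
  have e2 : μ * (2 * ⟪ν, x⟫) = 2 * (μ * ⟪ν, x⟫) := by ring
  rw [e2]
  match_scalars <;> (field_simp; try ring)

/-- The algebraic identity behind the corrugation. -/
theorem abs_inner_corr_le {p p' X Y r r' : 𝔽} {n n' a t k b B e q : ℝ}
    (hpX : ⟪p, X⟫ = a ^ 2 * n) (hpX' : ⟪p', X⟫ = a ^ 2 * n') (hpY : ⟪p, Y⟫ = 0) (hpY' : ⟪p', Y⟫ = 0)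
    (hXY : ⟪X, Y⟫ = 0) (hY : ‖Y‖ = |a|) (hX : ‖X‖ ≤ B) (hXB : ‖X‖ ≤ k) (hYk : ‖Y‖ ≤ k)
    (hr : ‖r‖ ≤ b) (hr' : ‖r'‖ ≤ b) (hn : |n| ≤ q) (hn' : |n'| ≤ q)
    (hpr : |⟪p, r'⟫| ≤ e) (hpr' : |⟪p', r⟫| ≤ e) :
    |⟪p + (n • ((1 / 2 * Real.cos (2 * t)) • X - (√2 * Real.sin t) • Y) + r),
      p' + (n' • ((1 / 2 * Real.cos (2 * t)) • X - (√2 * Real.sin t) • Y) + r')⟫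
      - ⟪p, p'⟫ - a ^ 2 * (n * n')| ≤ q ^ 2 * B ^ 2 + 2 * e + 4 * (q * k * b) + b ^ 2 := by
  set m := (1 / 2 * Real.cos (2 * t)) • X - (√2 * Real.sin t) • Y with hm
  have h2 : √2 * √2 = 2 := Real.mul_self_sqrt (by norm_num)
  have hs2 : √2 ≤ 3 / 2 := by
    rw [Real.sqrt_le_left (by norm_num)]; norm_num
  have hb : 0 ≤ b := (norm_nonneg _).trans hr
  have hq : 0 ≤ q := (abs_nonneg _).trans hn
  have hk : 0 ≤ k := (norm_nonneg _).trans hXB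
  have hpm : ⟪p, m⟫ = 1 / 2 * Real.cos (2 * t) * (a ^ 2 * n) := by
    rw [hm, inner_sub_right, real_inner_smul_right, real_inner_smul_right, hpX, hpY]; ring
  have hpm' : ⟪m, p'⟫ = 1 / 2 * Real.cos (2 * t) * (a ^ 2 * n') := by
    rw [real_inner_comm, hm, inner_sub_right, real_inner_smul_right, real_inner_smul_right, hpX',
      hpY']
    ring
  have hYY : ⟪Y, Y⟫ = a ^ 2 := by rw [real_inner_self_eq_norm_sq, hY, sq_abs]
  have hmm : ⟪m, m⟫ = 1 / 4 * Real.cos (2 * t) ^ 2 * ‖X‖ ^ 2 + 2 * Real.sin t ^ 2 * a ^ 2 := by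
    rw [hm]
    simp only [inner_sub_left, inner_sub_right, real_inner_smul_left, real_inner_smul_right,
      real_inner_comm X Y, hXY, hYY, real_inner_self_eq_norm_sq X]
    linear_combination Real.sin t ^ 2 * a ^ 2 * h2
  have hmk : ‖m‖ ≤ 2 * k := by
    have hc := Real.abs_cos_le_one (2 * t)
    have hs := Real.abs_sin_le_one t
    calc ‖m‖ ≤ ‖(1 / 2 * Real.cos (2 * t)) • X‖ + ‖(√2 * Real.sin t) • Y‖ := norm_sub_le _ _
      _ = 1 / 2 * |Real.cos (2 * t)| * ‖X‖ + √2 * |Real.sin t| * ‖Y‖ := by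
        simp only [norm_smul, Real.norm_eq_abs, abs_mul, abs_of_nonneg (Real.sqrt_nonneg 2)]
        norm_num
      _ ≤ 1 / 2 * 1 * k + 3 / 2 * 1 * k := by gcongr
      _ = 2 * k := by ring
  have key : ⟪p + (n • m + r), p' + (n' • m + r')⟫ - ⟪p, p'⟫ - a ^ 2 * (n * n')
      = n * n' * (1 / 4 * Real.cos (2 * t) ^ 2 * ‖X‖ ^ 2) + ⟪p, r'⟫ + ⟪p', r⟫
        + n * ⟪m, r'⟫ + n' * ⟪r, m⟫ + ⟪r, r'⟫ := by
    simp only [inner_add_left, inner_add_right, real_inner_smul_left, real_inner_smul_right,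
      hpm, hpm', hmm, real_inner_comm p' r]
    have := Real.cos_two_mul t
    have h3 := Real.sin_sq_add_cos_sq t
    linear_combination (a ^ 2 * (n * n')) * this + (2 * a ^ 2 * (n * n')) * h3
  rw [key]
  have hcos : Real.cos (2 * t) ^ 2 ≤ 1 := Real.cos_sq_le_one _
  have t1 : |n * n' * (1 / 4 * Real.cos (2 * t) ^ 2 * ‖X‖ ^ 2)| ≤ q ^ 2 * B ^ 2 := by
    rw [abs_mul, abs_mul, abs_of_nonneg (by positivity : 0 ≤ 1 / 4 * Real.cos (2 * t) ^ 2 * ‖X‖ ^ 2)]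
    calc |n| * |n'| * (1 / 4 * Real.cos (2 * t) ^ 2 * ‖X‖ ^ 2) ≤ q * q * (1 * 1 * B ^ 2) := by
          gcongr; norm_num
      _ = _ := by ring
  have t2 : |n * ⟪m, r'⟫| ≤ 2 * (q * k * b) := by
    rw [abs_mul]
    calc |n| * |⟪m, r'⟫| ≤ q * (‖m‖ * ‖r'‖) := by
          gcongr; exact abs_real_inner_le_norm _ _
      _ ≤ q * (2 * k * b) := by gcongr
      _ = _ := by ring
  have t3 : |n' * ⟪r, m⟫| ≤ 2 * (q * k * b) := by
    rw [abs_mul]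
    calc |n'| * |⟪r, m⟫| ≤ q * (‖r‖ * ‖m‖) := by
          gcongr; exact abs_real_inner_le_norm _ _
      _ ≤ q * (b * (2 * k)) := by gcongr
      _ = _ := by ring
  have t4 : |⟪r, r'⟫| ≤ b ^ 2 := by
    calc |⟪r, r'⟫| ≤ ‖r‖ * ‖r'‖ := abs_real_inner_le_norm _ _
      _ ≤ b * b := by gcongr
      _ = _ := by ring
  rw [abs_le] at *
  constructor <;> linarith

end Step

end NashKuiper

namespace NashKuiper
open scoped ContDiff RealInnerProductSpace

section Step

variable {d : ℕ}

local notation "𝔼" => EuclideanSpace ℝ (Fin d)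
local notation "𝔽" => EuclideanSpace ℝ (Fin (d + 1))
local notation "𝔹" => closedBall (0 : EuclideanSpace ℝ (Fin d)) 1
local notation "𝔇" u => fderivWithin ℝ u (closedBall (0 : EuclideanSpace ℝ (Fin d)) 1)

theorem contDiffOn_fderivWithin_unitBall {V : Type*} [NormedAddCommGroup V] [NormedSpace ℝ V]
    {u : 𝔼 → V} (hu : ContDiffOn ℝ ∞ u 𝔹) : ContDiffOn ℝ ∞ (𝔇 u) 𝔹 :=
  hu.fderivWithin uniqueDiffOn_unitBall (by simp)

theorem inner_apply_fderivWithin_of_inner_eq_zero {f : 𝔼 → 𝔼 →L[ℝ] 𝔽} {Y : 𝔼 → 𝔽} {x : 𝔼}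
    (hx : x ∈ 𝔹) (hf : DifferentiableWithinAt ℝ f 𝔹 x) (hY : DifferentiableWithinAt ℝ Y 𝔹 x) (w w' : 𝔼)
    (h : ∀ y ∈ 𝔹, ⟪f y w, Y y⟫ = 0) :
    ⟪f x w, (𝔇 Y) x w'⟫ = -⟪(𝔇 f) x w' w, Y x⟫ := by
  have h1 : HasFDerivWithinAt (fun y => f y w) ((ContinuousLinearMap.apply ℝ 𝔽 w).comp ((𝔇 f) x))
      𝔹 x := (ContinuousLinearMap.apply ℝ 𝔽 w).hasFDerivAt.comp_hasFDerivWithinAt x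
        hf.hasFDerivWithinAt
  have h2 := h1.inner ℝ hY.hasFDerivWithinAt
  have h3 : HasFDerivWithinAt (fun y => ⟪f y w, Y y⟫) (0 : 𝔼 →L[ℝ] ℝ) 𝔹 x :=
    (hasFDerivWithinAt_const (0 : ℝ) x 𝔹).congr (fun y hy => h y hy) (h x hx)
  have h4 := congrArg (fun L : 𝔼 →L[ℝ] ℝ => L w') ((uniqueDiffOn_unitBall x hx).eq h2 h3)
  simp only [ContinuousLinearMap.comp_apply, ContinuousLinearMap.prod_apply,
    fderivInnerCLM_apply, ContinuousLinearMap.apply_apply, _root_.zero_apply] at h4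
  linarith

/-- The jets of the differential up to order `N + 1`, expressed through the second differential. -/
theorem norm_iteratedFDerivWithin_le_of_fderivWithin {V : Type*} [NormedAddCommGroup V]
    [NormedSpace ℝ V] {f : 𝔼 → V} {A r : ℝ} {N : ℕ} {x : 𝔼} (hx : x ∈ 𝔹)
    (h : JetBound 𝔹 (𝔇 f) (A * r) r N x) {j : ℕ} (h1 : 1 ≤ j) (hj : j ≤ N + 1) :
    ‖iteratedFDerivWithin ℝ j f 𝔹 x‖ ≤ A * r ^ j := by
  obtain ⟨k, rfl⟩ : ∃ k, j = k + 1 := ⟨j - 1, by omega⟩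
  rw [← norm_iteratedFDerivWithin_fderivWithin uniqueDiffOn_unitBall hx]
  exact (h k (by omega)).trans (le_of_eq (by ring))

theorem exists_jetBound_corr (ν : 𝔼) (M : ℕ) (cX cY : ℝ) :
    ∃ C : ℝ, 0 ≤ C ∧ ∀ (δ μ : ℝ) (X Y : 𝔼 → 𝔽), 0 < δ → δ ≤ 1 → 0 < μ →
      ContDiffOn ℝ ∞ X 𝔹 → ContDiffOn ℝ ∞ Y 𝔹 →
      (∀ x ∈ 𝔹, JetBound 𝔹 X (cX * δ ^ 2) μ M x) → (∀ x ∈ 𝔹, JetBound 𝔹 Y (cY * δ) μ M x) →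
      ContDiffOn ℝ ∞ (corr ν μ X Y) 𝔹 ∧
        ∀ x ∈ 𝔹, JetBound 𝔹 (corr ν μ X Y) (C * δ) μ M x := by
  set b : ℝ := max 1 ‖(2 : ℝ) • innerSL ℝ ν‖
  set b' : ℝ := max 1 ‖innerSL ℝ ν‖
  refine ⟨2 ^ M * (|1 / 4| * (M.factorial * 1 * b ^ M) * |cX|)
    + 2 ^ M * (|√2| * (M.factorial * 1 * b' ^ M) * |cY|), by positivity, ?_⟩
  intro δ μ X Y hδ hδ1 hμ hX hY hjX hjY
  have hS : ContDiffOn ℝ ∞ (fun y : 𝔼 => Real.sin (μ * ((2 : ℝ) • innerSL ℝ ν) y)) 𝔹 :=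
    (Real.contDiff_sin.comp (contDiff_const.mul ((2 : ℝ) • innerSL ℝ ν).contDiff)).contDiffOn
  have hC : ContDiffOn ℝ ∞ (fun y : 𝔼 => Real.cos (μ * innerSL ℝ ν y)) 𝔹 :=
    (Real.contDiff_cos.comp (contDiff_const.mul (innerSL ℝ ν).contDiff)).contDiffOn
  have hS4 : ContDiffOn ℝ ∞ (fun y : 𝔼 => 1 / 4 * Real.sin (μ * ((2 : ℝ) • innerSL ℝ ν) y)) 𝔹 :=
    contDiffOn_const.mul hS
  have hC4 : ContDiffOn ℝ ∞ (fun y : 𝔼 => √2 * Real.cos (μ * innerSL ℝ ν y)) 𝔹 :=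
    contDiffOn_const.mul hC
  refine ⟨(hS4.smul hX).add (hC4.smul hY), fun x hx => ?_⟩
  have jS := jetBound_linear_phase Real.contDiff_sin (fun n y => Real.abs_iteratedDeriv_sin_le_one n y)
    ((2 : ℝ) • innerSL ℝ ν) b (le_max_left _ _) (le_max_right _ _) uniqueDiffOn_unitBall hx hμ.le M
  have jC := jetBound_linear_phase Real.contDiff_cos (fun n y => Real.abs_iteratedDeriv_cos_le_one n y)
    (innerSL ℝ ν) b' (le_max_left _ _) (le_max_right _ _) uniqueDiffOn_unitBall hx hμ.le M
  have h1 := (jS.const_smul (1 / 4) hS uniqueDiffOn_unitBall hx).smul (hjX x hx) hμ.le hS4 hX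
    uniqueDiffOn_unitBall hx
  have h2 := (jC.const_smul (√2) hC uniqueDiffOn_unitBall hx).smul (hjY x hx) hμ.le hC4 hY
    uniqueDiffOn_unitBall hx
  refine (h1.add h2 (hS4.smul hX) (hC4.smul hY) uniqueDiffOn_unitBall hx).mono ?_ (by positivity)
    hμ.le le_rfl le_rfl
  have hd : δ ^ 2 ≤ δ := by nlinarith
  have e1 : cX * δ ^ 2 ≤ |cX| * δ := by
    calc cX * δ ^ 2 ≤ |cX| * δ ^ 2 := by gcongr; exact le_abs_self _
      _ ≤ _ := by gcongr
  have e2 : cY * δ ≤ |cY| * δ := by gcongr; exact le_abs_self _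
  calc _ ≤ 2 ^ M * (|1 / 4| * (M.factorial * 1 * b ^ M) * (|cX| * δ))
    + 2 ^ M * (|√2| * (M.factorial * 1 * b' ^ M) * (|cY| * δ)) := by gcongr
    _ = _ := by ring

set_option maxHeartbeats 1600000 in
/-- One corrugation in the direction `ν` with amplitude `a`. -/
theorem exists_step (ν : 𝔼) {K : Set (𝔼 →L[ℝ] 𝔽)} (hK : IsCompact K) (hKU : K ⊆ frameSet d) (A : ℝ)
    (hA : 0 ≤ A) (N : ℕ) :
    ∃ C : ℝ, 0 ≤ C ∧ ∀ (δ r Λ : ℝ) (u : 𝔼 → 𝔽) (a : 𝔼 → ℝ), 0 < δ → δ ≤ 1 → 0 < r → 1 ≤ Λ →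
      ContDiffOn ℝ ∞ u 𝔹 → ContDiffOn ℝ ∞ a 𝔹 → (∀ x ∈ 𝔹, (𝔇 u) x ∈ K) →
      (∀ x ∈ 𝔹, JetBound 𝔹 (𝔇 (𝔇 u)) (A * δ * r) r (N + 1) x) →
      (∀ x ∈ 𝔹, JetBound 𝔹 a (A * δ) r (N + 2) x) →
      ∃ v : 𝔼 → 𝔽, ContDiffOn ℝ ∞ v 𝔹 ∧
        (∀ x ∈ 𝔹, JetBound 𝔹 (𝔇 (𝔇 v)) (C * δ * (Λ * r)) (Λ * r) N x) ∧
        (∀ x ∈ 𝔹, ‖(𝔇 v) x - (𝔇 u) x‖ ≤ C * δ) ∧ (∀ x ∈ 𝔹, ‖v x - u x‖ ≤ C * δ / (Λ * r)) ∧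
        ∀ x ∈ 𝔹, ∀ w w' : 𝔼, ‖w‖ ≤ 1 → ‖w'‖ ≤ 1 →
          |⟪(𝔇 v) x w, (𝔇 v) x w'⟫ - ⟪(𝔇 u) x w, (𝔇 u) x w'⟫ - a x ^ 2 * (⟪ν, w⟫ * ⟪ν, w'⟫)|
            ≤ C * (δ ^ 2 / Λ + δ ^ 4) := by
  have hB := uniqueDiffOn_unitBall (d := d)
  obtain ⟨cT, hcT0, hcT⟩ := exists_jetBound_comp isOpen_frameSet hK hKU (contDiffOn_dualTangent ν)
    hB A (N + 2)
  obtain ⟨cN, hcN0, hcN⟩ := exists_jetBound_comp isOpen_frameSet hK hKU contDiffOn_unitNormal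
    hB A (N + 2)
  obtain ⟨cK, hcK⟩ := hK.isBounded.exists_norm_le
  set cX : ℝ := 2 ^ (N + 2) * (A * (2 ^ (N + 2) * (A * cT))) with hcX
  set cY : ℝ := 2 ^ (N + 2) * (A * cN) with hcY
  have hcX0 : 0 ≤ cX := by positivity
  have hcY0 : 0 ≤ cY := by positivity
  obtain ⟨cP, hcP0, hcP⟩ := exists_jetBound_corr ν (N + 2) cX cY
  set q : ℝ := ‖ν‖ with hq
  have hq0 : 0 ≤ q := norm_nonneg _
  set cR : ℝ := q ^ 2 * cX ^ 2 + 2 * (|cK| * cX + 2 * (A * cY)) + 4 * (q * (cX + cY) * (cX + 2 * cY))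
    + (cX + 2 * cY) ^ 2 with hcR
  have hcR0 : 0 ≤ cR := by positivity
  refine ⟨A + cP + cR, by positivity, ?_⟩
  intro δ r Λ u a hδ hδ1 hr hΛ hu ha huK hju hja
  have hΛ0 : 0 < Λ := by linarith
  set μ : ℝ := Λ * r with hμ
  have hμ0 : 0 < μ := by positivity
  have hrμ : r ≤ μ := le_mul_of_one_le_left hr.le hΛ
  have hDu := contDiffOn_fderivWithin_unitBall hu
  have hDDu := contDiffOn_fderivWithin_unitBall hDu
  have hjDu : ∀ x ∈ 𝔹, ∀ j, 1 ≤ j → j ≤ N + 2 → ‖iteratedFDerivWithin ℝ j (𝔇 u) 𝔹 x‖ ≤ A * r ^ j := by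
    intro x hx j h1 hj
    refine norm_iteratedFDerivWithin_le_of_fderivWithin hx ((hju x hx).mono ?_ (by positivity) hr.le
      le_rfl le_rfl) h1 hj
    gcongr
    exact mul_le_of_le_one_right hA hδ1
  have hT := hcT (𝔇 u) r hDu huK hr.le hjDu
  have hNr := hcN (𝔇 u) r hDu huK hr.le hjDu
  have hTs : ContDiffOn ℝ ∞ (fun y => dualTangent ν ((𝔇 u) y)) 𝔹 :=
    (contDiffOn_dualTangent ν).comp hDu fun y hy => hKU (huK y hy)
  have hNs : ContDiffOn ℝ ∞ (fun y => unitNormal ((𝔇 u) y)) 𝔹 :=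
    contDiffOn_unitNormal.comp hDu fun y hy => hKU (huK y hy)
  set X : 𝔼 → 𝔽 := fun y => a y • a y • dualTangent ν ((𝔇 u) y) with hXdef
  set Y : 𝔼 → 𝔽 := fun y => a y • unitNormal ((𝔇 u) y) with hYdef
  have hXs : ContDiffOn ℝ ∞ X 𝔹 := ha.smul (ha.smul hTs)
  have hYs : ContDiffOn ℝ ∞ Y 𝔹 := ha.smul hNs
  have hjX : ∀ x ∈ 𝔹, JetBound 𝔹 X (cX * δ ^ 2) r (N + 2) x := by
    intro x hx
    refine ((hja x hx).smul ((hja x hx).smul (hT x hx) hr.le ha hTs hB hx) hr.le ha (ha.smul hTs) hB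
      hx).mono (le_of_eq ?_) (by positivity) hr.le le_rfl le_rfl
    rw [hcX]; ring
  have hjY : ∀ x ∈ 𝔹, JetBound 𝔹 Y (cY * δ) r (N + 2) x := by
    intro x hx
    refine ((hja x hx).smul (hNr x hx) hr.le ha hNs hB hx).mono (le_of_eq ?_) (by positivity) hr.le
      le_rfl le_rfl
    rw [hcY]; ring
  obtain ⟨hPs, hjP⟩ := hcP δ μ X Y hδ hδ1 hμ0 hXs hYs
    (fun x hx => (hjX x hx).mono le_rfl (by positivity) hr.le hrμ le_rfl)
    (fun x hx => (hjY x hx).mono le_rfl (by positivity) hr.le hrμ le_rfl)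
  set P := corr ν μ X Y with hP
  have hμP : ContDiffOn ℝ ∞ (fun y => μ⁻¹ • P y) 𝔹 := hPs.const_smul μ⁻¹
  have hjμP : ∀ x ∈ 𝔹, JetBound 𝔹 (fun y => μ⁻¹ • P y) (cP * δ / μ) μ (N + 2) x := by
    intro x hx
    refine ((hjP x hx).const_smul μ⁻¹ hPs hB hx).mono (le_of_eq ?_) (by positivity) hμ0.le le_rfl
      le_rfl
    rw [abs_of_pos (by positivity)]; field_simp
  have hone : (1 : WithTop ℕ∞) ≤ ∞ := by exact_mod_cast le_top
  have hdu : ∀ x ∈ 𝔹, DifferentiableWithinAt ℝ u 𝔹 x := hu.differentiableOn (by simp)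
  have hdP : ∀ x ∈ 𝔹, DifferentiableWithinAt ℝ (fun y => μ⁻¹ • P y) 𝔹 x :=
    hμP.differentiableOn (by simp)
  have hDv : EqOn (𝔇 fun y => u y + μ⁻¹ • P y) (fun y => (𝔇 u) y + (𝔇 fun y => μ⁻¹ • P y) y) 𝔹 :=
    fun y hy => fderivWithin_fun_add (hB y hy) (hdu y hy) (hdP y hy)
  have hDP := contDiffOn_fderivWithin_unitBall hμP
  have hDDv : EqOn (𝔇 (𝔇 fun y => u y + μ⁻¹ • P y))
      (fun y => (𝔇 (𝔇 u)) y + (𝔇 (𝔇 fun y => μ⁻¹ • P y)) y) 𝔹 := by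
    intro y hy
    rw [fderivWithin_congr hDv (hDv hy)]
    exact fderivWithin_fun_add (hB y hy) (hDu.differentiableOn (by simp) y hy)
      (hDP.differentiableOn (by simp) y hy)
  refine ⟨fun y => u y + μ⁻¹ • P y, hu.add hμP, ?_, ?_, ?_, ?_⟩
  · intro x hx
    have h1 := ((hjμP x hx).fderivWithin hB hx).fderivWithin hB hx
    have h2 := (hju x hx).mono (r' := μ) (A' := A * δ * μ) (N' := N) (by gcongr) (by positivity)
      hr.le hrμ (by omega)
    refine ((h2.add h1 hDDu (contDiffOn_fderivWithin_unitBall hDP) hB hx).congr hDDv hx).mono ?_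
      (by positivity) hμ0.le le_rfl le_rfl
    have : cP * δ / μ * μ * μ = cP * δ * μ := by field_simp
    rw [this]
    have : 0 ≤ cR * δ * μ := by positivity
    linarith
  · intro x hx
    rw [hDv hx, add_sub_cancel_left]
    refine ((hjμP x hx).norm_fderivWithin_le hB hx (by omega)).trans ?_
    have : cP * δ / μ * μ = cP * δ := by field_simp
    rw [this]
    gcongr
    linarith
  · intro x hx
    rw [add_sub_cancel_left]
    refine (hjμP x hx).norm_le.trans ?_
    gcongr
    linarith
  · intro x hx w w' hw hw'
    have hXd := hXs.differentiableOn (by simp) x hx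
    have hYd := hYs.differentiableOn (by simp) x hx
    have hmem := hKU (huK x hx)
    have hd2 : δ ^ 2 ≤ δ := by nlinarith
    have hs2 : √2 ≤ 2 := by
      rw [Real.sqrt_le_left (by norm_num)]; norm_num
    have hXn := (hjX x hx).norm_le
    have hYn := (hjY x hx).norm_le
    have hDX := (hjX x hx).norm_fderivWithin_le hB hx (by omega)
    have hDY := (hjY x hx).norm_fderivWithin_le hB hx (by omega)
    set t := μ * ⟪ν, x⟫ with ht
    have hDuw : ∀ w : 𝔼, ‖w‖ ≤ 1 → ‖(𝔇 u) x w‖ ≤ |cK| := fun w hw =>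
      ((𝔇 u) x).le_of_opNorm_le_of_le (hcK _ (huK x hx)) hw |>.trans (by
        rw [mul_one]; exact le_abs_self _)
    have hDXw : ∀ w : 𝔼, ‖w‖ ≤ 1 → ‖(𝔇 X) x w‖ ≤ cX * δ ^ 2 * r := fun w hw =>
      ((𝔇 X) x).le_of_opNorm_le_of_le hDX hw |>.trans (by rw [mul_one])
    have hDYw : ∀ w : 𝔼, ‖w‖ ≤ 1 → ‖(𝔇 Y) x w‖ ≤ cY * δ * r := fun w hw =>
      ((𝔇 Y) x).le_of_opNorm_le_of_le hDY hw |>.trans (by rw [mul_one])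
    have hR : ∀ w : 𝔼, ‖w‖ ≤ 1 → ‖μ⁻¹ • ((1 / 4 * Real.sin (2 * t)) • (𝔇 X) x w
          + (√2 * Real.cos t) • (𝔇 Y) x w)‖ ≤ (cX + 2 * cY) * (δ / Λ) := by
      intro w hw
      rw [norm_smul, norm_inv, Real.norm_of_nonneg hμ0.le]
      calc _ ≤ μ⁻¹ * (1 / 4 * |Real.sin (2 * t)| * ‖(𝔇 X) x w‖ + √2 * |Real.cos t| * ‖(𝔇 Y) x w‖) := by
            gcongr
            refine (norm_add_le _ _).trans (le_of_eq ?_)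
            simp only [norm_smul, Real.norm_eq_abs, abs_mul, abs_of_nonneg (Real.sqrt_nonneg 2)]
            norm_num
        _ ≤ μ⁻¹ * (1 * 1 * (cX * δ * r) + 2 * 1 * (cY * δ * r)) := by
            have := hDXw w hw
            have h2 := hDYw w hw
            have h3 := Real.abs_sin_le_one (2 * t)
            have h4 := Real.abs_cos_le_one t
            have h5 : ‖(𝔇 X) x w‖ ≤ cX * δ * r := this.trans (by gcongr)
            gcongr
            norm_num
        _ = _ := by rw [hμ]; field_simp; try ring
    have hE : ∀ w w' : 𝔼, ‖w‖ ≤ 1 → ‖w'‖ ≤ 1 → |⟪(𝔇 u) x w, μ⁻¹ • ((1 / 4 * Real.sin (2 * t)) • (𝔇 X) x w'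
          + (√2 * Real.cos t) • (𝔇 Y) x w')⟫| ≤ (|cK| * cX + 2 * (A * cY)) * (δ ^ 2 / Λ) := by
      intro w w' hw hw'
      have e1 : |⟪(𝔇 u) x w, (𝔇 Y) x w'⟫| ≤ A * δ * r * (cY * δ) := by
        rw [inner_apply_fderivWithin_of_inner_eq_zero hx (hDu.differentiableOn (by simp) x hx) hYd w w'
          (fun y hy => by
            simp only [hYdef]
            rw [real_inner_smul_right, inner_apply_unitNormal, mul_zero]), abs_neg]
        refine (abs_real_inner_le_norm _ _).trans ?_
        gcongr
        have h2 : ‖(𝔇 (𝔇 u)) x‖ ≤ A * δ * r := (hju x hx).norm_le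
        have h3 := ((𝔇 (𝔇 u)) x).le_of_opNorm_le_of_le h2 hw'
        have h4 := ((𝔇 (𝔇 u)) x w').le_of_opNorm_le_of_le h3 hw
        simpa using h4
      have e2 : |⟪(𝔇 u) x w, (𝔇 X) x w'⟫| ≤ |cK| * (cX * δ ^ 2 * r) := by
        refine (abs_real_inner_le_norm _ _).trans ?_
        gcongr
        · exact hDuw w hw
        · exact hDXw w' hw'
      rw [real_inner_smul_right, inner_add_right, real_inner_smul_right, real_inner_smul_right,
        abs_mul, abs_of_pos (inv_pos.2 hμ0)]
      calc _ ≤ μ⁻¹ * (1 / 4 * |Real.sin (2 * t)| * |⟪(𝔇 u) x w, (𝔇 X) x w'⟫|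
            + √2 * |Real.cos t| * |⟪(𝔇 u) x w, (𝔇 Y) x w'⟫|) := by
            gcongr
            refine (abs_add_le _ _).trans (le_of_eq ?_)
            simp only [abs_mul, abs_of_nonneg (Real.sqrt_nonneg 2)]
            norm_num
        _ ≤ μ⁻¹ * (1 * 1 * (|cK| * (cX * δ ^ 2 * r)) + 2 * 1 * (A * δ * r * (cY * δ))) := by
            have h3 := Real.abs_sin_le_one (2 * t)
            have h4 := Real.abs_cos_le_one t
            gcongr
            norm_num
        _ = _ := by rw [hμ]; field_simp; try ring
    have hnq : ∀ w : 𝔼, ‖w‖ ≤ 1 → |⟪ν, w⟫| ≤ q := fun w hw =>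
      (abs_real_inner_le_norm _ _).trans (mul_le_of_le_one_right (norm_nonneg _) hw)
    have hpX : ∀ w : 𝔼, ⟪(𝔇 u) x w, X x⟫ = a x ^ 2 * ⟪ν, w⟫ := by
      intro w
      simp only [hXdef]
      rw [real_inner_smul_right, real_inner_smul_right, inner_apply_dualTangent hmem,
        real_inner_comm]
      ring
    have hpY : ∀ w : 𝔼, ⟪(𝔇 u) x w, Y x⟫ = 0 := by
      intro w
      simp only [hYdef]
      rw [real_inner_smul_right, inner_apply_unitNormal, mul_zero]
    have hXY : ⟪X x, Y x⟫ = 0 := by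
      simp only [hXdef, hYdef]
      rw [real_inner_smul_right, real_inner_smul_left, real_inner_smul_left,
        inner_dualTangent_unitNormal]
      ring
    have hYa : ‖Y x‖ = |a x| := by
      simp only [hYdef]
      rw [norm_smul, norm_unitNormal hmem, mul_one, Real.norm_eq_abs]
    rw [fderivWithin_corr_apply hμ0.ne' hx (hdu x hx) hXd hYd w,
      fderivWithin_corr_apply hμ0.ne' hx (hdu x hx) hXd hYd w']
    refine (abs_inner_corr_le (hpX w) (hpX w') (hpY w) (hpY w') hXY hYa hXn
      (k := (cX + cY) * δ) (hXn.trans ?_) (hYn.trans ?_) (hR w hw) (hR w' hw') (hnq w hw) (hnq w' hw')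
      (hE w w' hw hw') (hE w' w hw' hw)).trans ?_
    · calc cX * δ ^ 2 ≤ cX * δ := by gcongr
        _ ≤ _ := by gcongr; linarith
    · gcongr; linarith
    · have hl : δ ^ 2 / Λ ^ 2 ≤ δ ^ 2 / Λ := by
        gcongr
        nlinarith
      have e1 : (cX + 2 * cY) ^ 2 * (δ ^ 2 / Λ ^ 2) ≤ (cX + 2 * cY) ^ 2 * (δ ^ 2 / Λ) := by gcongr
      have e3 : 0 ≤ (A + cP) * (δ ^ 2 / Λ + δ ^ 4) := by positivity
      have e4 : q ^ 2 * cX ^ 2 * δ ^ 4 ≤ cR * δ ^ 4 := by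
        gcongr
        have : 0 ≤ 2 * (|cK| * cX + 2 * (A * cY)) + 4 * (q * (cX + cY) * (cX + 2 * cY))
          + (cX + 2 * cY) ^ 2 := by positivity
        linarith
      have e5 : (2 * (|cK| * cX + 2 * (A * cY)) + 4 * (q * (cX + cY) * (cX + 2 * cY))
          + (cX + 2 * cY) ^ 2) * (δ ^ 2 / Λ) ≤ cR * (δ ^ 2 / Λ) := by
        gcongr
        have : 0 ≤ q ^ 2 * cX ^ 2 := by positivity
        linarith
      calc _ = q ^ 2 * cX ^ 2 * δ ^ 4 + 2 * ((|cK| * cX + 2 * (A * cY)) * (δ ^ 2 / Λ))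
            + 4 * (q * (cX + cY) * (cX + 2 * cY)) * (δ ^ 2 / Λ)
            + (cX + 2 * cY) ^ 2 * (δ ^ 2 / Λ ^ 2) := by ring
        _ ≤ (A + cP + cR) * (δ ^ 2 / Λ + δ ^ 4) := by
          rw [add_mul (A + cP), mul_add cR]
          linarith

end Step

end NashKuiper

namespace NashKuiper
open scoped ContDiff RealInnerProductSpace

section MultiStep

variable {d : ℕ}

local notation "𝔼" => EuclideanSpace ℝ (Fin d)
local notation "𝔽" => EuclideanSpace ℝ (Fin (d + 1))
local notation "𝔹" => closedBall (0 : EuclideanSpace ℝ (Fin d)) 1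
local notation "𝔇" u => fderivWithin ℝ u (closedBall (0 : EuclideanSpace ℝ (Fin d)) 1)

theorem mem_cthickening_of_norm_sub_le {V : Type*} [SeminormedAddCommGroup V] {K : Set V} {x y : V}
    {ρ : ℝ} (hx : x ∈ K) (h : ‖y - x‖ ≤ ρ) : y ∈ cthickening ρ K :=
  mem_cthickening_of_dist_le y x ρ K hx (by rwa [dist_eq_norm])

set_option maxHeartbeats 800000 in
/-- Several corrugations with frequencies growing by factors `Λ`. -/
theorem exists_multistep_nat (ν : ℕ → 𝔼) {K : Set (𝔼 →L[ℝ] 𝔽)} (hK : IsCompact K)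
    (hKU : K ⊆ frameSet d) (A : ℝ) (hA : 0 ≤ A) (n : ℕ) : ∀ N : ℕ,
    ∃ C : ℝ, 0 ≤ C ∧ ∃ δ₁ : ℝ, 0 < δ₁ ∧ δ₁ ≤ 1 ∧ ∀ (δ r Λ : ℝ) (u : 𝔼 → 𝔽) (a : ℕ → 𝔼 → ℝ),
      0 < δ → δ ≤ δ₁ → 0 < r → 1 ≤ Λ →
      ContDiffOn ℝ ∞ u 𝔹 → (∀ i < n, ContDiffOn ℝ ∞ (a i) 𝔹) → (∀ x ∈ 𝔹, (𝔇 u) x ∈ K) →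
      (∀ x ∈ 𝔹, JetBound 𝔹 (𝔇 (𝔇 u)) (A * δ * r) r (N + n) x) →
      (∀ i < n, ∀ x ∈ 𝔹, JetBound 𝔹 (a i) (A * δ) r (N + n + 1) x) →
      ∃ v : 𝔼 → 𝔽, ContDiffOn ℝ ∞ v 𝔹 ∧
        (∀ x ∈ 𝔹, JetBound 𝔹 (𝔇 (𝔇 v)) (C * δ * (Λ ^ n * r)) (Λ ^ n * r) N x) ∧
        (∀ x ∈ 𝔹, ‖(𝔇 v) x - (𝔇 u) x‖ ≤ C * δ) ∧ (∀ x ∈ 𝔹, ‖v x - u x‖ ≤ C * δ / r) ∧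
        ∀ x ∈ 𝔹, ∀ w w' : 𝔼, ‖w‖ ≤ 1 → ‖w'‖ ≤ 1 →
          |⟪(𝔇 v) x w, (𝔇 v) x w'⟫ - ⟪(𝔇 u) x w, (𝔇 u) x w'⟫
            - ∑ i ∈ Finset.range n, a i x ^ 2 * (⟪ν i, w⟫ * ⟪ν i, w'⟫)|
            ≤ C * (δ ^ 2 / Λ + δ ^ 4) := by
  induction n with
  | zero =>
    intro N
    refine ⟨A, hA, 1, one_pos, le_rfl, ?_⟩
    intro δ r Λ u a hδ hδ1 hr hΛ hu _ huK hju _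
    refine ⟨u, hu, ?_, ?_, ?_, ?_⟩
    · simpa using hju
    · intro x _
      simpa using mul_nonneg hA hδ.le
    · intro x _
      simpa using div_nonneg (mul_nonneg hA hδ.le) hr.le
    · intro x _ w w' _ _
      have : 0 ≤ Λ := by linarith
      simpa using by positivity
  | succ n ih =>
    intro N
    obtain ⟨C₁, hC₁, δ₁, hδ₁, hδ₁1, h₁⟩ := ih (N + 1)
    obtain ⟨ρ, hρ, hρU⟩ := hK.exists_cthickening_subset_open isOpen_frameSet hKU
    obtain ⟨C₂, hC₂, h₂⟩ := exists_step (ν n) (hK.cthickening (r := ρ)) hρU (A + C₁)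
      (by positivity) N
    refine ⟨C₁ + C₂, by positivity, min δ₁ (ρ / (C₁ + 1)), by positivity,
      (min_le_left _ _).trans hδ₁1, ?_⟩
    intro δ r Λ u a hδ hδ1 hr hΛ hu ha huK hju hja
    have hΛ0 : 0 < Λ := by linarith
    obtain ⟨v, hv, hjv, hDv, hvu, hmet⟩ := h₁ δ r Λ u a hδ (hδ1.trans (min_le_left _ _)) hr hΛ hu
      (fun i hi => ha i (by omega)) huK
      (fun x hx => (hju x hx).mono le_rfl (by positivity) hr.le le_rfl (by omega))
      (fun i hi x hx => (hja i (by omega) x hx).mono le_rfl (by positivity) hr.le le_rfl (by omega))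
    have hρδ : C₁ * δ ≤ ρ := by
      have h3 : δ * (C₁ + 1) ≤ ρ := (le_div_iff₀ (by positivity)).1 (hδ1.trans (min_le_right _ _))
      linarith
    have hrr : r ≤ Λ ^ n * r := le_mul_of_one_le_left hr.le (one_le_pow₀ hΛ)
    obtain ⟨v', hv', hjv', hDv', hvu', hmet'⟩ := h₂ δ (Λ ^ n * r) Λ v (a n) hδ
      (hδ1.trans ((min_le_left _ _).trans hδ₁1)) (by positivity) hΛ hv (ha n (by omega))
      (fun x hx => mem_cthickening_of_norm_sub_le (huK x hx) ((hDv x hx).trans hρδ))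
      (fun x hx => (hjv x hx).mono (by gcongr; linarith) (by positivity) (by positivity) le_rfl le_rfl)
      (fun x hx => (hja n (by omega) x hx).mono (by gcongr; linarith) (by positivity) hr.le hrr
        (by omega))
    have hpow : Λ * (Λ ^ n * r) = Λ ^ (n + 1) * r := by ring
    rw [hpow] at hjv' hvu'
    refine ⟨v', hv', fun x hx => (hjv' x hx).mono (by gcongr; linarith) (by positivity) (by positivity)
      le_rfl le_rfl, fun x hx => ?_, fun x hx => ?_, ?_⟩
    · have := norm_sub_le_norm_sub_add_norm_sub ((𝔇 v') x) ((𝔇 v) x) ((𝔇 u) x)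
      linarith [hDv x hx, hDv' x hx]
    · have h4 := norm_sub_le_norm_sub_add_norm_sub (v' x) (v x) (u x)
      have h5 : C₂ * δ / (Λ ^ (n + 1) * r) ≤ C₂ * δ / r := by
        gcongr
        exact le_mul_of_one_le_left hr.le (one_le_pow₀ hΛ)
      have h6 : (C₁ + C₂) * δ / r = C₁ * δ / r + C₂ * δ / r := by ring
      linarith [hvu x hx, hvu' x hx]
    · intro x hx w w' hw hw'
      have h3 := hmet x hx w w' hw hw'
      have h4 := hmet' x hx w w' hw hw'
      rw [Finset.sum_range_succ]
      rw [abs_le] at *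
      constructor <;> linarith

/-- The corrugation lemma with directions indexed by a finite type. -/
theorem exists_multistep {ι : Type} [Fintype ι] (ν : ι → 𝔼) {K : Set (𝔼 →L[ℝ] 𝔽)}
    (hK : IsCompact K) (hKU : K ⊆ frameSet d) (A : ℝ) (hA : 0 ≤ A) :
    ∃ C : ℝ, 0 ≤ C ∧ ∃ δ₁ : ℝ, 0 < δ₁ ∧ δ₁ ≤ 1 ∧ ∀ (δ r Λ : ℝ) (u : 𝔼 → 𝔽) (a : ι → 𝔼 → ℝ),
      0 < δ → δ ≤ δ₁ → 0 < r → 1 ≤ Λ →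
      ContDiffOn ℝ ∞ u 𝔹 → (∀ i, ContDiffOn ℝ ∞ (a i) 𝔹) → (∀ x ∈ 𝔹, (𝔇 u) x ∈ K) →
      (∀ x ∈ 𝔹, JetBound 𝔹 (𝔇 (𝔇 u)) (A * δ * r) r (Fintype.card ι) x) →
      (∀ i, ∀ x ∈ 𝔹, JetBound 𝔹 (a i) (A * δ) r (Fintype.card ι + 1) x) →
      ∃ v : 𝔼 → 𝔽, ContDiffOn ℝ ∞ v 𝔹 ∧
        (∀ x ∈ 𝔹, ‖(𝔇 (𝔇 v)) x‖ ≤ C * δ * (Λ ^ Fintype.card ι * r)) ∧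
        (∀ x ∈ 𝔹, ‖(𝔇 v) x - (𝔇 u) x‖ ≤ C * δ) ∧ (∀ x ∈ 𝔹, ‖v x - u x‖ ≤ C * δ / r) ∧
        ∀ x ∈ 𝔹, ∀ w w' : 𝔼, ‖w‖ ≤ 1 → ‖w'‖ ≤ 1 →
          |⟪(𝔇 v) x w, (𝔇 v) x w'⟫ - ⟪(𝔇 u) x w, (𝔇 u) x w'⟫
            - ∑ i, a i x ^ 2 * (⟪ν i, w⟫ * ⟪ν i, w'⟫)| ≤ C * (δ ^ 2 / Λ + δ ^ 4) := by
  classical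
  set n := Fintype.card ι
  set e : ι ≃ Fin n := Fintype.equivFin ι
  obtain ⟨C, hC, δ₁, hδ₁, hδ₁1, h⟩ := exists_multistep_nat
    (fun i => if hi : i < n then ν (e.symm ⟨i, hi⟩) else 0) hK hKU A hA n 0
  refine ⟨C, hC, δ₁, hδ₁, hδ₁1, ?_⟩
  intro δ r Λ u a hδ hδ1 hr hΛ hu ha huK hju hja
  obtain ⟨v, hv, hjv, hDv, hvu, hmet⟩ := h δ r Λ u
    (fun i => if hi : i < n then a (e.symm ⟨i, hi⟩) else 0) hδ hδ1 hr hΛ hu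
    (fun i hi => by simpa [hi] using ha _) huK (by simpa using hju)
    (fun i hi x hx => by simpa [hi] using hja _ x hx)
  refine ⟨v, hv, fun x hx => (hjv x hx).norm_le, hDv, hvu, fun x hx w w' hw hw' => ?_⟩
  have h2 := hmet x hx w w' hw hw'
  rw [Finset.sum_range] at h2
  simp only [Fin.is_lt, dite_true, Fin.eta] at h2
  rwa [e.symm.sum_comp (fun i => a i x ^ 2 * (⟪ν i, w⟫ * ⟪ν i, w'⟫))] at h2

end MultiStep

end NashKuiper

namespace NashKuiper
open scoped ContDiff RealInnerProductSpace

section Decomposition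

variable {d : ℕ}

local notation "𝔼" => EuclideanSpace ℝ (Fin d)
local notation "𝔽" => EuclideanSpace ℝ (Fin (d + 1))

/-- Ordered pairs of indices, which label the primitive metrics. -/
abbrev PairIdx (d : ℕ) : Type := {p : Fin d × Fin d // p.1 ≤ p.2}

theorem card_pairIdx (d : ℕ) : Fintype.card (PairIdx d) = (d + 1).choose 2 := by
  rw [← Fintype.card_congr (Sym2.sortEquiv (α := Fin d)), Sym2.card, Fintype.card_fin]

/-- The direction of the primitive metric with label `p`. -/
def dir (p : PairIdx d) : 𝔼 :=
  if p.1.1 = p.1.2 then EuclideanSpace.single p.1.1 1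
  else EuclideanSpace.single p.1.1 1 + EuclideanSpace.single p.1.2 1

/-- The coefficient of the primitive metric with label `p` in the symmetric matrix `H`. -/
def coef (p : PairIdx d) (H : Fin d → Fin d → ℝ) : ℝ :=
  if p.1.1 = p.1.2 then H p.1.1 p.1.1 - ∑ j, (if j = p.1.1 then 0 else H p.1.1 j)
  else H p.1.1 p.1.2

theorem sum_coef {H : Fin d → Fin d → ℝ} (hH : ∀ i j, H i j = H j i) (k l : Fin d) :
    ∑ p : PairIdx d, coef p H * (⟪dir p, EuclideanSpace.single k (1 : ℝ)⟫
      * ⟪dir p, EuclideanSpace.single l (1 : ℝ)⟫) = H k l := by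
  set F : Fin d × Fin d → ℝ := fun p =>
    (if p.1 = p.2 then (H p.1 p.1 - ∑ j, (if j = p.1 then 0 else H p.1 j)) *
        ((if k = p.1 then 1 else 0) * (if l = p.1 then 1 else 0))
      else H p.1 p.2 * (((if k = p.1 then 1 else 0) + (if k = p.2 then 1 else 0))
        * ((if l = p.1 then 1 else 0) + (if l = p.2 then 1 else 0)))) with hF
  have h1 : ∀ p : PairIdx d, coef p H * (⟪dir p, EuclideanSpace.single k (1 : ℝ)⟫
      * ⟪dir p, EuclideanSpace.single l (1 : ℝ)⟫) = F p.1 := by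
    intro p
    simp only [coef, dir, hF]
    split_ifs <;> simp_all [EuclideanSpace.inner_single_right]
  rw [Finset.sum_congr rfl fun p _ => h1 p,
    ← Finset.sum_subtype (Finset.univ.filter fun p : Fin d × Fin d => p.1 ≤ p.2) (by simp) F,
    Finset.sum_filter, Fintype.sum_prod_type]
  have h2 : ∀ i j : Fin d, (if i ≤ j then F (i, j) else 0)
      = (if i = j then (H i i - ∑ m, (if m = i then 0 else H i m)) *
        ((if k = i then 1 else 0) * (if l = i then 1 else 0)) else 0)
      + (if k = i then (if l = i then (if i < j then H i j else 0) else 0) else 0)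
      + (if k = i then (if l = j then (if i < j then H i j else 0) else 0) else 0)
      + (if l = i then (if k = j then (if i < j then H i j else 0) else 0) else 0)
      + (if k = j then (if l = j then (if i < j then H i j else 0) else 0) else 0) := by
    intro i j
    simp only [hF]
    rcases lt_trichotomy i j with h | h | h
    · simp only [h.le, h.ne, h, if_true, if_false]
      split_ifs <;> ring
    · subst h
      simp
    · simp [h.not_ge, h.ne', h.not_gt]
  simp only [h2, Finset.sum_add_distrib, Finset.sum_ite_eq, Finset.mem_univ, if_true]
  have h3 : ∀ i : Fin d, ∑ j, (if k = i then (if l = i then (if i < j then H i j else 0) else 0) else 0)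
      = if k = i then (if l = i then ∑ j, (if i < j then H i j else 0) else 0) else 0 := by
    intro i; split_ifs <;> simp
  have h4 : ∀ i : Fin d, ∑ j, (if k = i then (if l = j then (if i < j then H i j else 0) else 0) else 0)
      = if k = i then (if i < l then H i l else 0) else 0 := by
    intro i; split_ifs <;> simp [*]
  have h5 : ∀ i : Fin d, ∑ j, (if l = i then (if k = j then (if i < j then H i j else 0) else 0) else 0)
      = if l = i then (if i < k then H i k else 0) else 0 := by
    intro i; split_ifs <;> simp [*]
  have h6 : ∀ i : Fin d, (H i i - ∑ m, (if m = i then 0 else H i m)) *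
        ((if k = i then 1 else 0) * (if l = i then 1 else 0)) = if k = i then
        (if l = i then (H i i - ∑ m, (if m = i then 0 else H i m)) else 0) else 0 := by
    intro i; split_ifs <;> simp
  simp only [h3, h4, h5, h6, Finset.sum_ite_eq, Finset.mem_univ, if_true]
  by_cases hkl : l = k
  · subst hkl
    have h7 : ∀ m, (if m = l then 0 else H l m)
        = (if l < m then H l m else 0) + (if m < l then H m l else 0) := by
      intro m
      rcases lt_trichotomy m l with h | h | h
      · simp [h, h.ne, h.not_gt, hH l m]
      · simp [h]
      · simp [h, h.ne', h.not_gt]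
    simp only [h7, Finset.sum_add_distrib]
    simp only [if_true, lt_self_iff_false, if_false]
    ring
  · have hkl' : k ≠ l := fun h => hkl h.symm
    rcases lt_or_gt_of_ne hkl with h | h
    · simp [h, hkl, h.not_gt, hH l k]
    · simp [h, hkl, h.not_gt]

/-- The metric all of whose coefficients equal one. -/
def unitMetric (d : ℕ) (i j : Fin d) : ℝ := if i = j then d else 1

theorem coef_unitMetric (p : PairIdx d) : coef p (unitMetric d) = 1 := by
  unfold coef
  split_ifs with h
  · unfold unitMetric
    have : ∀ j, (if j = p.1.1 then (0 : ℝ) else if p.1.1 = j then (d : ℝ) else 1)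
        = 1 - if j = p.1.1 then 1 else 0 := by
      intro j
      by_cases hj : j = p.1.1
      · simp [hj]
      · simp [hj, Ne.symm hj]
    simp [this]
  · simp [unitMetric, h]

theorem abs_unitMetric_le (hd : 1 ≤ d) (i j : Fin d) : |unitMetric d i j| ≤ d := by
  have : (1 : ℝ) ≤ d := by exact_mod_cast hd
  unfold unitMetric
  split_ifs
  · simp
  · simpa using this

theorem unitMetric_comm (i j : Fin d) : unitMetric d i j = unitMetric d j i := by
  unfold unitMetric
  simp only [eq_comm]

theorem coef_add (p : PairIdx d) (H H' : Fin d → Fin d → ℝ) :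
    coef p (fun i j => H i j + H' i j) = coef p H + coef p H' := by
  unfold coef
  split_ifs with h
  · have : ∀ j, (if j = p.1.1 then 0 else H p.1.1 j + H' p.1.1 j)
      = (if j = p.1.1 then 0 else H p.1.1 j) + (if j = p.1.1 then 0 else H' p.1.1 j) := by
      intro j; split_ifs <;> simp
    simp only [this, Finset.sum_add_distrib]
    ring
  · rfl

theorem coef_mul (p : PairIdx d) (c : ℝ) (H : Fin d → Fin d → ℝ) :
    coef p (fun i j => c * H i j) = c * coef p H := by
  unfold coef
  split_ifs with h
  · have : ∀ j, (if j = p.1.1 then 0 else c * H p.1.1 j)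
      = c * (if j = p.1.1 then 0 else H p.1.1 j) := by
      intro j; split_ifs <;> simp
    simp only [this, ← Finset.mul_sum]
    ring
  · rfl

theorem abs_coef_le (p : PairIdx d) {H : Fin d → Fin d → ℝ} {e : ℝ} (h : ∀ i j, |H i j| ≤ e) :
    |coef p H| ≤ d * e := by
  have he : 0 ≤ e := (abs_nonneg _).trans (h p.1.1 p.1.1)
  have hd : (1 : ℝ) ≤ d := by
    have := p.1.1.pos
    exact_mod_cast this
  unfold coef
  split_ifs with hp
  · have e1 : ∑ j, |(if j = p.1.1 then H p.1.1 p.1.1 else - H p.1.1 j)| ≤ d * e := by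
      calc _ ≤ ∑ _j : Fin d, e := by
            refine Finset.sum_le_sum fun j _ => ?_
            split_ifs
            · exact h _ _
            · rw [abs_neg]; exact h _ _
        _ = _ := by simp
    refine le_trans ?_ ((Finset.abs_sum_le_sum_abs _ _).trans e1)
    apply le_of_eq
    congr 1
    have : ∀ j, (if j = p.1.1 then H p.1.1 p.1.1 else - H p.1.1 j)
        = (if j = p.1.1 then H p.1.1 p.1.1 else 0) - (if j = p.1.1 then 0 else H p.1.1 j) := by
      intro j; split_ifs <;> simp
    simp [this]
  · exact (h _ _).trans (le_mul_of_one_le_left he hd)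

end Decomposition

section Quadratic

variable {d n : ℕ}

theorem sum_smul_single (w : EuclideanSpace ℝ (Fin d)) :
    ∑ i, w i • EuclideanSpace.single i (1 : ℝ) = w := by
  ext k
  simp [Finset.sum_apply, Pi.single_apply]

theorem sq_sum_abs_le (w : EuclideanSpace ℝ (Fin d)) : (∑ i, |w i|) ^ 2 ≤ d * ‖w‖ ^ 2 := by
  rw [EuclideanSpace.norm_sq_eq]
  have := sq_sum_le_card_mul_sum_sq (s := Finset.univ) (f := fun i => |w i|)
  simpa using this

theorem inner_apply_eq_sum (A : EuclideanSpace ℝ (Fin d) →L[ℝ] EuclideanSpace ℝ (Fin n))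
    (w : EuclideanSpace ℝ (Fin d)) : ‖A w‖ ^ 2 = ∑ i, ∑ j, w i * w j *
      ⟪A (EuclideanSpace.single i 1), A (EuclideanSpace.single j 1)⟫ := by
  conv_lhs => rw [← real_inner_self_eq_norm_sq, ← sum_smul_single w]
  simp only [map_sum, map_smul, sum_inner, inner_sum, real_inner_smul_left, real_inner_smul_right]
  refine Finset.sum_congr rfl fun i _ => Finset.sum_congr rfl fun j _ => ?_
  rw [real_inner_comm]
  ring

theorem abs_sum_sum_le {H : Fin d → Fin d → ℝ} {e : ℝ} (he : 0 ≤ e) (h : ∀ i j, |H i j| ≤ e)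
    (w : EuclideanSpace ℝ (Fin d)) : |∑ i, ∑ j, w i * w j * H i j| ≤ d * e * ‖w‖ ^ 2 := by
  calc |∑ i, ∑ j, w i * w j * H i j| ≤ ∑ i, ∑ j, |w i| * |w j| * e := by
        refine (Finset.abs_sum_le_sum_abs _ _).trans (Finset.sum_le_sum fun i _ => ?_)
        refine (Finset.abs_sum_le_sum_abs _ _).trans (Finset.sum_le_sum fun j _ => ?_)
        rw [abs_mul, abs_mul]
        gcongr
        exact h i j
    _ = (∑ i, |w i|) ^ 2 * e := by
        rw [sq, Finset.sum_mul_sum, Finset.sum_mul]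
        simp only [Finset.sum_mul]
    _ ≤ d * ‖w‖ ^ 2 * e := by gcongr; exact sq_sum_abs_le w
    _ = _ := by ring

end Quadratic

end NashKuiper

namespace NashKuiper
open scoped ContDiff RealInnerProductSpace

section Commutator

variable {d : ℕ}

local notation "𝔼" => EuclideanSpace ℝ (Fin d)
local notation "𝔽" => EuclideanSpace ℝ (Fin (d + 1))
local notation "𝔹" => closedBall (0 : EuclideanSpace ℝ (Fin d)) 1
local notation "𝔇" u => fderivWithin ℝ u (closedBall (0 : EuclideanSpace ℝ (Fin d)) 1)

theorem moll_sub_inner_moll_eq {ℓ : ℝ} (h0 : 0 < ℓ) (h1 : ℓ ≤ 1) {f₁ f₂ : 𝔼 → 𝔽} {γ : 𝔼 → ℝ}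
    (hf₁ : ContinuousOn f₁ 𝔹) (hf₂ : ContinuousOn f₂ 𝔹) (hγ : ContinuousOn γ 𝔹) (c₁ c₂ : 𝔽)
    {x : 𝔼} (hx : x ∈ 𝔹) :
    moll ℓ γ x - ⟪moll ℓ f₁ x, moll ℓ f₂ x⟫ =
      moll ℓ (fun z => γ z - ⟪f₁ z, f₂ z⟫) x + moll ℓ (fun z => ⟪f₁ z - c₁, f₂ z - c₂⟫) x
        - ⟪moll ℓ (fun z => f₁ z - c₁) x, moll ℓ (fun z => f₂ z - c₂) x⟫ := by
  have hi : ContinuousOn (fun z => ⟪f₁ z, f₂ z⟫) 𝔹 := hf₁.inner hf₂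
  have hiB : ContinuousOn (fun z => ⟪f₁ z, f₂ z⟫ - ⟪c₂, f₁ z⟫) 𝔹 :=
    hi.sub (continuousOn_const.inner hf₁)
  have hA : ContinuousOn (fun z => ⟪c₁, f₂ z - c₂⟫) 𝔹 :=
    continuousOn_const.inner (hf₂.sub continuousOn_const)
  have hB : ContinuousOn (fun z => ⟪c₂, f₁ z⟫) 𝔹 := continuousOn_const.inner hf₁
  have e1 : (fun z => ⟪f₁ z - c₁, f₂ z - c₂⟫)
      = fun z => (fun z => ⟪f₁ z, f₂ z⟫ - ⟪c₂, f₁ z⟫) z - ⟪c₁, f₂ z - c₂⟫ := by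
    funext z
    simp only [inner_sub_left, inner_sub_right, real_inner_comm c₂]
    ring
  have e2 : moll ℓ (fun z => f₂ z - c₂) x = moll ℓ f₂ x - c₂ := by
    rw [moll_sub h0 h1 hf₂ continuousOn_const hx, moll_const h0 h1 _ hx]
  have e3 : moll ℓ (fun z => f₁ z - c₁) x = moll ℓ f₁ x - c₁ := by
    rw [moll_sub h0 h1 hf₁ continuousOn_const hx, moll_const h0 h1 _ hx]
  have e4 : moll ℓ (fun z => ⟪c₁, f₂ z - c₂⟫) x = ⟪c₁, moll ℓ f₂ x - c₂⟫ := by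
    rw [← e2]
    exact moll_clm h0 h1 (hf₂.sub continuousOn_const) (innerSL ℝ c₁) hx
  have e5 : moll ℓ (fun z => ⟪c₂, f₁ z⟫) x = ⟪c₂, moll ℓ f₁ x⟫ :=
    moll_clm h0 h1 hf₁ (innerSL ℝ c₂) hx
  rw [e1, moll_sub h0 h1 hiB hA hx, moll_sub h0 h1 hi hB hx, moll_sub h0 h1 hγ hi hx, e4,
    e5, e2, e3]
  simp only [inner_sub_left, inner_sub_right, real_inner_comm c₂]
  ring

/-- The commutator estimate for mollification of a quadratic expression. -/
theorem jetBound_moll_sub_inner_moll {ℓ : ℝ} (h0 : 0 < ℓ) (h1 : ℓ ≤ 1) {f₁ f₂ : 𝔼 → 𝔽}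
    {γ : 𝔼 → ℝ} (hf₁ : ContinuousOn f₁ 𝔹) (hf₂ : ContinuousOn f₂ 𝔹) (hγ : ContinuousOn γ 𝔹)
    {x : 𝔼} (hx : x ∈ 𝔹) {a b : ℝ} (ha : 0 ≤ a) (hb : ∀ z ∈ 𝔹, |γ z - ⟪f₁ z, f₂ z⟫| ≤ b)
    (ha₁ : ∀ z ∈ 𝔹, dist z x ≤ 2 * ℓ → ‖f₁ z - f₁ x‖ ≤ a)
    (ha₂ : ∀ z ∈ 𝔹, dist z x ≤ 2 * ℓ → ‖f₂ z - f₂ x‖ ≤ a) (N : ℕ) :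
    JetBound 𝔹 (fun y => moll ℓ γ y - ⟪moll ℓ f₁ y, moll ℓ f₂ y⟫)
      (mollConst d N * b + mollConst d N * a ^ 2 + 2 ^ N * (mollConst d N * a) ^ 2)
      (1 / ℓ) N x := by
  have hi : ContinuousOn (fun z => ⟪f₁ z, f₂ z⟫) 𝔹 := hf₁.inner hf₂
  have hd₁ : ContinuousOn (fun z => f₁ z - f₁ x) 𝔹 := hf₁.sub continuousOn_const
  have hd₂ : ContinuousOn (fun z => f₂ z - f₂ x) 𝔹 := hf₂.sub continuousOn_const
  have c1 := (contDiff_moll (hγ.sub hi) h0).contDiffOn (s := 𝔹)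
  have c2 := (contDiff_moll (hd₁.inner hd₂ (𝕜 := ℝ)) h0).contDiffOn (s := 𝔹)
  have c3 := (contDiff_moll hd₁ h0).contDiffOn (s := 𝔹)
  have c4 := (contDiff_moll hd₂ h0).contDiffOn (s := 𝔹)
  have j1 := jetBound_moll h0 h1 (hγ.sub hi) hx (fun z hz _ => hb z hz) N
  have j2 := jetBound_moll (a := a ^ 2) h0 h1 (hd₁.inner hd₂ (𝕜 := ℝ)) hx (fun z hz hd => by
    refine (norm_inner_le_norm _ _).trans ?_
    rw [sq]
    exact mul_le_mul (ha₁ z hz hd) (ha₂ z hz hd) (norm_nonneg _) ha) N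
  have j3 := jetBound_moll h0 h1 hd₁ hx ha₁ N
  have j4 := jetBound_moll h0 h1 hd₂ hx ha₂ N
  have j5 := (JetBound.bilinear (innerSL ℝ) (norm_innerSL_le ℝ) j3 j4 (by positivity) c3 c4
    uniqueDiffOn_unitBall hx).const_smul (-1) (c3.inner ℝ c4) uniqueDiffOn_unitBall hx
  have j := ((j1.add j2 c1 c2 uniqueDiffOn_unitBall hx).add j5 (c1.add c2)
    (((c3.inner ℝ c4)).const_smul (-1 : ℝ)) uniqueDiffOn_unitBall hx)
  have j' := j.congr (g := fun y => moll ℓ γ y - ⟪moll ℓ f₁ y, moll ℓ f₂ y⟫) (fun y hy => by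
    refine (moll_sub_inner_moll_eq h0 h1 hf₁ hf₂ hγ (f₁ x) (f₂ x) hy).trans ?_
    simp only [neg_smul, one_smul]
    rfl) hx
  refine j'.mono (le_of_eq ?_) ?_ (by positivity) le_rfl le_rfl
  · rw [abs_neg, abs_one, one_mul, sq (mollConst d N * a)]
  · have := mollConst_nonneg d N
    have : 0 ≤ b := (abs_nonneg _).trans (hb x hx)
    positivity

theorem abs_moll_sub_inner_moll_le {ℓ : ℝ} (h0 : 0 < ℓ) (h1 : ℓ ≤ 1) {f₁ f₂ : 𝔼 → 𝔽}
    {γ : 𝔼 → ℝ} (hf₁ : ContinuousOn f₁ 𝔹) (hf₂ : ContinuousOn f₂ 𝔹) (hγ : ContinuousOn γ 𝔹)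
    {x : 𝔼} (hx : x ∈ 𝔹) {a b m : ℝ} (ha : 0 ≤ a) (hb : ∀ z ∈ 𝔹, |γ z - ⟪f₁ z, f₂ z⟫ - m| ≤ b)
    (ha₁ : ∀ z ∈ 𝔹, dist z x ≤ 2 * ℓ → ‖f₁ z - f₁ x‖ ≤ a)
    (ha₂ : ∀ z ∈ 𝔹, dist z x ≤ 2 * ℓ → ‖f₂ z - f₂ x‖ ≤ a) :
    |moll ℓ γ x - ⟪moll ℓ f₁ x, moll ℓ f₂ x⟫ - m| ≤ b + 2 * a ^ 2 := by
  have hi : ContinuousOn (fun z => ⟪f₁ z, f₂ z⟫) 𝔹 := hf₁.inner hf₂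
  have hd₁ : ContinuousOn (fun z => f₁ z - f₁ x) 𝔹 := hf₁.sub continuousOn_const
  have hd₂ : ContinuousOn (fun z => f₂ z - f₂ x) 𝔹 := hf₂.sub continuousOn_const
  have hs : ContinuousOn (fun z => γ z - ⟪f₁ z, f₂ z⟫) 𝔹 := hγ.sub hi
  rw [moll_sub_inner_moll_eq h0 h1 hf₁ hf₂ hγ (f₁ x) (f₂ x) hx]
  have k1 := norm_moll_sub_le h0 h1 hs hx (fun z hz _ => hb z hz)
  have k2 := norm_moll_sub_le (a := a ^ 2) (c := 0) h0 h1 (hd₁.inner hd₂ (𝕜 := ℝ)) hx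
    (fun z hz hd => by
      rw [sub_zero]
      refine (norm_inner_le_norm _ _).trans ?_
      rw [sq]
      exact mul_le_mul (ha₁ z hz hd) (ha₂ z hz hd) (norm_nonneg _) ha)
  have k3 := norm_moll_sub_le (c := 0) h0 h1 hd₁ hx (fun z hz hd => by simpa using ha₁ z hz hd)
  have k4 := norm_moll_sub_le (c := 0) h0 h1 hd₂ hx (fun z hz hd => by simpa using ha₂ z hz hd)
  have k5 := norm_inner_le_norm (𝕜 := ℝ) (moll ℓ (fun z => f₁ z - f₁ x) x)
    (moll ℓ (fun z => f₂ z - f₂ x) x)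
  rw [sub_zero] at k2 k3 k4
  rw [Real.norm_eq_abs] at k1 k2 k5
  have k6 := k5.trans (mul_le_mul k3 k4 (norm_nonneg _) ha)
  rw [← sq] at k6
  rw [abs_le] at *
  constructor <;> linarith [k1.1, k1.2, k2.1, k2.2, k6.1, k6.2]

end Commutator

end NashKuiper

namespace NashKuiper
open scoped ContDiff RealInnerProductSpace

section StageTools

variable {d : ℕ}

local notation "𝔼" => EuclideanSpace ℝ (Fin d)
local notation "𝔽" => EuclideanSpace ℝ (Fin (d + 1))
local notation "𝔹" => closedBall (0 : EuclideanSpace ℝ (Fin d)) 1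
local notation "𝔇" u => fderivWithin ℝ u (closedBall (0 : EuclideanSpace ℝ (Fin d)) 1)

/-- The Gram matrix of the columns of a linear map. -/
def gram (A : 𝔼 →L[ℝ] 𝔽) (i j : Fin d) : ℝ :=
  ⟪A (EuclideanSpace.single i 1), A (EuclideanSpace.single j 1)⟫

theorem gram_comm (A : 𝔼 →L[ℝ] 𝔽) (i j : Fin d) : gram A i j = gram A j i :=
  real_inner_comm _ _

/-- The quadratic form of a matrix. -/
def quad (H : Fin d → Fin d → ℝ) (w : 𝔼) : ℝ := ∑ i, ∑ j, w i * w j * H i j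

theorem quad_gram (A : 𝔼 →L[ℝ] 𝔽) (w : 𝔼) : quad (gram A) w = ‖A w‖ ^ 2 :=
  (inner_apply_eq_sum A w).symm

theorem abs_quad_le {H : Fin d → Fin d → ℝ} {e : ℝ} (he : 0 ≤ e) (h : ∀ i j, |H i j| ≤ e) (w : 𝔼) :
    |quad H w| ≤ d * e * ‖w‖ ^ 2 := abs_sum_sum_le he h w

theorem quad_sub (H H' : Fin d → Fin d → ℝ) (w : 𝔼) :
    quad (fun i j => H i j - H' i j) w = quad H w - quad H' w := by
  simp only [quad, mul_sub, Finset.sum_sub_distrib]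

theorem quad_add (H H' : Fin d → Fin d → ℝ) (w : 𝔼) :
    quad (fun i j => H i j + H' i j) w = quad H w + quad H' w := by
  simp only [quad, mul_add, Finset.sum_add_distrib]

theorem quad_mul (c : ℝ) (H : Fin d → Fin d → ℝ) (w : 𝔼) :
    quad (fun i j => c * H i j) w = c * quad H w := by
  simp only [quad, Finset.mul_sum]
  exact Finset.sum_congr rfl fun i _ => Finset.sum_congr rfl fun j _ => by ring

theorem abs_normSq_sub_quad_le {A : 𝔼 →L[ℝ] 𝔽} {H : Fin d → Fin d → ℝ} {e : ℝ} (he : 0 ≤ e)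
    (h : ∀ i j, |H i j - gram A i j| ≤ e) (w : 𝔼) :
    |quad H w - ‖A w‖ ^ 2| ≤ d * e * ‖w‖ ^ 2 := by
  rw [← quad_gram, ← quad_sub]
  exact abs_quad_le he h w

theorem mem_bilipSet_of_gram {A : 𝔼 →L[ℝ] 𝔽} {H : Fin d → Fin d → ℝ} {e a b c C : ℝ} (he : 0 ≤ e)
    (h : ∀ i j, |H i j - gram A i j| ≤ e) (ha : ∀ w : 𝔼, a * ‖w‖ ^ 2 ≤ quad H w)
    (hb : ∀ w : 𝔼, quad H w ≤ b * ‖w‖ ^ 2) (hC : 0 ≤ C)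
    (hca : c ^ 2 ≤ a - d * e) (hCb : b + d * e ≤ C ^ 2) : A ∈ bilipSet d c C := by
  refine ⟨A.opNorm_le_bound hC fun w => ?_, fun w => ?_⟩
  · have h1 := abs_le.1 (abs_normSq_sub_quad_le he h w)
    refine abs_le_of_sq_le_sq' ?_ (by positivity) |>.2
    have := mul_le_mul_of_nonneg_right hCb (sq_nonneg ‖w‖)
    nlinarith [hb w, h1.1, h1.2]
  · have h1 := abs_le.1 (abs_normSq_sub_quad_le he h w)
    refine abs_le_of_sq_le_sq' ?_ (by positivity) |>.2
    have := mul_le_mul_of_nonneg_right hca (sq_nonneg ‖w‖)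
    nlinarith [ha w, h1.1, h1.2]

theorem norm_fderivWithin_sub_le {u : 𝔼 → 𝔽} (hu : ContDiffOn ℝ ∞ u 𝔹) {μ : ℝ}
    (hμ : ∀ x ∈ 𝔹, ‖(𝔇 (𝔇 u)) x‖ ≤ μ) {x y : 𝔼} (hx : x ∈ 𝔹) (hy : y ∈ 𝔹) :
    ‖(𝔇 u) y - (𝔇 u) x‖ ≤ μ * ‖y - x‖ :=
  (convex_closedBall _ _).norm_image_sub_le_of_norm_fderivWithin_le
    ((contDiffOn_fderivWithin_unitBall hu).differentiableOn (by simp)) hμ hx hy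

theorem jetBound_fderivWithin_moll {V : Type} [NormedAddCommGroup V] [NormedSpace ℝ V]
    [CompleteSpace V] {f : 𝔼 → V} (hf : ContDiffOn ℝ ∞ f 𝔹) {μ ℓ : ℝ} (h0 : 0 < ℓ) (h1 : ℓ ≤ 1)
    (hμ : ∀ x ∈ 𝔹, ‖(𝔇 f) x‖ ≤ μ) (N : ℕ) {x : 𝔼} (hx : x ∈ 𝔹) :
    JetBound 𝔹 (𝔇 (moll ℓ f)) (mollConst d N * μ) (1 / ℓ) N x := by
  have hDf := contDiffOn_fderivWithin_unitBall hf
  have hμ0 : 0 ≤ μ := (norm_nonneg _).trans (hμ x hx)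
  have hm := mollConst_nonneg d N
  have hj := (jetBound_moll h0 h1 hDf.continuousOn hx (fun z hz _ => hμ z hz) N).const_smul
    (1 - ℓ) (contDiff_moll hDf.continuousOn h0).contDiffOn uniqueDiffOn_unitBall hx
  refine (hj.congr (fun y hy => ?_) hx).mono ?_ (by positivity) (by positivity) le_rfl le_rfl
  · exact (hasFDerivWithinAt_moll h0 h1 (hf.of_le (by simp)) hy).fderivWithin
      (uniqueDiffOn_unitBall y hy)
  · rw [abs_of_nonneg (by linarith)]
    exact mul_le_of_le_one_left (by positivity) (by linarith)

/-- Mollification of an immersion, normalised so that the derivative is the mollified one. -/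
theorem exists_smoothing {u : 𝔼 → 𝔽} (hu : ContDiffOn ℝ ∞ u 𝔹) {μ ℓ : ℝ} (h0 : 0 < ℓ)
    (h1 : ℓ ≤ 1 / 2) (hμ : ∀ x ∈ 𝔹, ‖(𝔇 (𝔇 u)) x‖ ≤ μ) :
    ∃ v : 𝔼 → 𝔽, ContDiffOn ℝ ∞ v 𝔹 ∧ (∀ x ∈ 𝔹, (𝔇 v) x = moll ℓ (𝔇 u) x) ∧
      (∀ x ∈ 𝔹, ‖(𝔇 v) x - (𝔇 u) x‖ ≤ 2 * ℓ * μ) ∧ (∀ x ∈ 𝔹, ‖v x - u x‖ ≤ 2 * ℓ * μ) ∧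
      ∀ N, ∀ x ∈ 𝔹, JetBound 𝔹 (𝔇 (𝔇 v)) (mollConst d N * μ) (1 / ℓ) N x := by
  have h1' : ℓ ≤ 1 := by linarith
  have hne : 1 - ℓ ≠ 0 := by linarith
  have hDu := contDiffOn_fderivWithin_unitBall hu
  have h00 : (0 : 𝔼) ∈ 𝔹 := by simp
  have hμ0 : 0 ≤ μ := (norm_nonneg ((𝔇 (𝔇 u)) 0)).trans (hμ 0 h00)
  set v : 𝔼 → 𝔽 := fun x => (1 - ℓ)⁻¹ • moll ℓ u x + (u 0 - (1 - ℓ)⁻¹ • moll ℓ u 0) with hv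
  have hvs : ContDiffOn ℝ ∞ v 𝔹 :=
    (((contDiff_moll hu.continuousOn h0).const_smul _).add contDiff_const).contDiffOn
  have hDv : ∀ x ∈ 𝔹, (𝔇 v) x = moll ℓ (𝔇 u) x := fun x hx => by
    have h := ((hasFDerivWithinAt_moll h0 h1' (hu.of_le (by simp)) hx).const_smul
      (1 - ℓ)⁻¹).add_const (u 0 - (1 - ℓ)⁻¹ • moll ℓ u 0)
    rw [smul_smul, inv_mul_cancel₀ hne, one_smul] at h
    exact h.fderivWithin (uniqueDiffOn_unitBall x hx)
  have hDvu : ∀ x ∈ 𝔹, ‖(𝔇 v) x - (𝔇 u) x‖ ≤ 2 * ℓ * μ := fun x hx => by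
    rw [hDv x hx]
    refine norm_moll_sub_le h0 h1' hDu.continuousOn hx fun z hz hd => ?_
    refine (norm_fderivWithin_sub_le hu hμ hx hz).trans ?_
    rw [← dist_eq_norm, mul_comm]
    gcongr
  refine ⟨v, hvs, hDv, hDvu, fun x hx => ?_, fun N x hx => ?_⟩
  · have hd : ∀ y ∈ 𝔹, DifferentiableWithinAt ℝ v 𝔹 y := hvs.differentiableOn (by simp)
    have hd' : ∀ y ∈ 𝔹, DifferentiableWithinAt ℝ u 𝔹 y := hu.differentiableOn (by simp)
    have := (convex_closedBall (0 : 𝔼) 1).norm_image_sub_le_of_norm_fderivWithin_le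
      (f := fun y => v y - u y) (C := 2 * ℓ * μ) (fun y hy => (hd y hy).sub (hd' y hy))
      (fun y hy => by
        rw [fderivWithin_fun_sub (uniqueDiffOn_unitBall y hy) (hd y hy) (hd' y hy)]
        exact hDvu y hy) h00 hx
    have e : v 0 - u 0 = 0 := by simp [hv]
    rw [e, sub_zero, sub_zero] at this
    have hx1 : ‖x‖ ≤ 1 := by simpa using hx
    have h3 : 2 * ℓ * μ * ‖x‖ ≤ 2 * ℓ * μ := mul_le_of_le_one_right (by positivity) hx1
    exact this.trans h3
  · exact (jetBound_fderivWithin_moll hDu h0 h1' hμ N hx).congr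
      (fun y hy => fderivWithin_congr (fun z hz => hDv z hz) (hDv y hy)) hx

theorem JetBound.sum {V : Type} [NormedAddCommGroup V] [NormedSpace ℝ V] {ι : Type}
    (t : Finset ι) {f : ι → 𝔼 → V} {A r : ℝ} {N : ℕ} {x : 𝔼} (hx : x ∈ 𝔹)
    (h : ∀ i ∈ t, JetBound 𝔹 (f i) A r N x) (hf : ∀ i ∈ t, ContDiffOn ℝ ∞ (f i) 𝔹) :
    JetBound 𝔹 (fun y => ∑ i ∈ t, f i y) (t.card * A) r N x := by
  classical
  induction t using Finset.induction_on with
  | empty =>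
    intro j _
    simp only [Finset.sum_empty, Finset.card_empty, Nat.cast_zero, zero_mul]
    rw [show (fun _ : 𝔼 => (0 : V)) = 0 from rfl, iteratedFDerivWithin_zero]
    simp
  | insert a t ha ih =>
    simp only [Finset.sum_insert ha, Finset.card_insert_of_notMem ha, Nat.cast_add, Nat.cast_one]
    have e : ((t.card : ℝ) + 1) * A = A + t.card * A := by ring
    rw [e]
    refine (h a (Finset.mem_insert_self _ _)).add
      (ih (fun i hi => h i (Finset.mem_insert_of_mem hi))
        (fun i hi => hf i (Finset.mem_insert_of_mem hi)))
      (hf a (Finset.mem_insert_self _ _))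
      (ContDiffOn.sum fun i hi => hf i (Finset.mem_insert_of_mem hi)) uniqueDiffOn_unitBall hx

theorem contDiffOn_coef (p : PairIdx d) {H : 𝔼 → Fin d → Fin d → ℝ}
    (hH : ∀ i j, ContDiffOn ℝ ∞ (fun y => H y i j) 𝔹) :
    ContDiffOn ℝ ∞ (fun y => coef p (H y)) 𝔹 := by
  unfold coef
  split_ifs with hp
  · refine (hH _ _).sub (ContDiffOn.sum fun j _ => ?_)
    split_ifs
    exacts [contDiffOn_const, hH _ _]
  · exact hH _ _

theorem jetBound_coef (p : PairIdx d) {H : 𝔼 → Fin d → Fin d → ℝ} {A r : ℝ} {N : ℕ} {x : 𝔼}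
    (hx : x ∈ 𝔹) (hA : 0 ≤ A) (hr : 0 ≤ r) (hH : ∀ i j, ContDiffOn ℝ ∞ (fun y => H y i j) 𝔹)
    (h : ∀ i j, JetBound 𝔹 (fun y => H y i j) A r N x) :
    JetBound 𝔹 (fun y => coef p (H y)) ((d + 1) * A) r N x := by
  unfold coef
  split_ifs with hp
  · set f : Fin d → 𝔼 → ℝ := fun j y => if j = p.1.1 then 0 else H y p.1.1 j with hf
    have hfs : ∀ j, ContDiffOn ℝ ∞ (f j) 𝔹 := fun j => by
      simp only [hf]
      split_ifs
      exacts [contDiffOn_const, hH _ _]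
    have hfj : ∀ j, JetBound 𝔹 (f j) A r N x := fun j => by
      simp only [hf]
      split_ifs
      · intro k _
        rw [show (fun _ : 𝔼 => (0 : ℝ)) = 0 from rfl, iteratedFDerivWithin_zero]
        simp only [Pi.zero_apply, norm_zero]
        positivity
      · exact h _ _
    have h1 := (JetBound.sum Finset.univ hx (fun j _ => hfj j) (fun j _ => hfs j)).const_smul (-1)
      (ContDiffOn.sum fun j _ => hfs j) uniqueDiffOn_unitBall hx
    have h2 := (h p.1.1 p.1.1).add h1 (hH _ _)
      ((ContDiffOn.sum fun j _ => hfs j).const_smul (-1 : ℝ)) uniqueDiffOn_unitBall hx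
    refine (h2.congr (fun y _ => ?_) hx).mono (le_of_eq ?_) (by positivity) hr le_rfl le_rfl
    · simp [hf, sub_eq_add_neg]
    · simp
      ring
  · refine (h _ _).mono ?_ (by positivity) hr le_rfl le_rfl
    nlinarith [(Nat.cast_nonneg d : (0 : ℝ) ≤ d)]

end StageTools

end NashKuiper

namespace NashKuiper
open scoped ContDiff RealInnerProductSpace

section Amplitude

variable {d : ℕ}

local notation "𝔼" => EuclideanSpace ℝ (Fin d)
local notation "𝔽" => EuclideanSpace ℝ (Fin (d + 1))
local notation "𝔹" => closedBall (0 : EuclideanSpace ℝ (Fin d)) 1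
local notation "𝔇" u => fderivWithin ℝ u (closedBall (0 : EuclideanSpace ℝ (Fin d)) 1)

/-- The relative size of the admissible deviation of the metric defect from a multiple of
`unitMetric`. -/
def tol (d : ℕ) : ℝ := 1 / (8 * d)

theorem tol_pos (hd : 1 ≤ d) : 0 < tol d := by
  have : (1 : ℝ) ≤ d := by exact_mod_cast hd
  unfold tol
  positivity

theorem mul_tol (hd : 1 ≤ d) : d * tol d = 1 / 8 := by
  have : (d : ℝ) ≠ 0 := by
    have : (1 : ℝ) ≤ d := by exact_mod_cast hd
    positivity
  unfold tol
  field_simp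

theorem tol_le (hd : 1 ≤ d) : tol d ≤ 1 / 8 := by
  have h1 : (1 : ℝ) ≤ d := by exact_mod_cast hd
  nlinarith [mul_tol hd, tol_pos hd]

set_option maxHeartbeats 1000000 in
/-- The amplitudes of the corrugations which correct a mollified metric defect. -/
theorem exists_amplitude (hd : 1 ≤ d) (N : ℕ) : ∃ C : ℝ, 0 ≤ C ∧
    ∀ (δ ℓ θ : ℝ) (f : Fin d → 𝔼 → 𝔽) (γ : Fin d → Fin d → 𝔼 → ℝ), 0 < δ → 0 < ℓ → ℓ ≤ 1 →
      3 / 4 ≤ θ → θ ≤ 1 → (∀ i, ContinuousOn (f i) 𝔹) → (∀ i j, ContinuousOn (γ i j) 𝔹) →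
      (∀ i j, γ i j = γ j i) →
      (∀ i j, ∀ z ∈ 𝔹, |γ i j z - ⟪f i z, f j z⟫ - θ * δ ^ 2 * unitMetric d i j| ≤ tol d * δ ^ 2) →
      (∀ i, ∀ x ∈ 𝔹, ∀ z ∈ 𝔹, dist z x ≤ 2 * ℓ → ‖f i z - f i x‖ ≤ 2 * tol d * δ) →
      ∃ a : PairIdx d → 𝔼 → ℝ, (∀ p, ContDiffOn ℝ ∞ (a p) 𝔹) ∧
        (∀ p, ∀ x ∈ 𝔹, JetBound 𝔹 (a p) (C * δ) (1 / ℓ) N x) ∧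
        ∀ x ∈ 𝔹, ∀ k l, ∑ p, a p x ^ 2 * (⟪dir p, EuclideanSpace.single k (1 : ℝ)⟫
          * ⟪dir p, EuclideanSpace.single l (1 : ℝ)⟫)
          = moll ℓ (γ k l) x - ⟪moll ℓ (f k) x, moll ℓ (f l) x⟫ := by
  have hd1 : (1 : ℝ) ≤ d := by exact_mod_cast hd
  have hσ := tol_pos hd
  have hσd := mul_tol hd
  have hσ1 := tol_le hd
  set m := mollConst d N with hm
  have hm0 : 0 ≤ m := mollConst_nonneg d N
  set A : ℝ := m * (2 * d) + m * (2 * tol d) ^ 2 + 2 ^ N * (m * (2 * tol d)) ^ 2 with hA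
  have hA0 : 0 ≤ A := by positivity
  obtain ⟨C, hC, hcomp⟩ := exists_jetBound_comp (E := 𝔼) (s := 𝔹) (Φ := Real.sqrt) (U := Ioi 0)
    (K := Icc (1 / 2) (3 / 2)) isOpen_Ioi isCompact_Icc
    (fun x hx => lt_of_lt_of_le (by norm_num) hx.1)
    (fun x hx => (Real.contDiffAt_sqrt (ne_of_gt hx)).contDiffWithinAt) uniqueDiffOn_unitBall
    ((d + 1) * A) N
  refine ⟨C, hC, ?_⟩
  intro δ ℓ θ f γ hδ hℓ hℓ1 hθ hθ1 hf hγ hsymm hmet hosc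
  set h : Fin d → Fin d → 𝔼 → ℝ := fun i j x => moll ℓ (γ i j) x - ⟪moll ℓ (f i) x, moll ℓ (f j) x⟫
    with hh
  have hhs : ∀ i j, ContDiffOn ℝ ∞ (h i j) 𝔹 := fun i j =>
    ((contDiff_moll (hγ i j) hℓ).sub
      ((contDiff_moll (hf i) hℓ).inner ℝ (contDiff_moll (hf j) hℓ))).contDiffOn
  set H : 𝔼 → Fin d → Fin d → ℝ := fun x i j => (1 / δ ^ 2) * h i j x with hH
  have hHs : ∀ i j, ContDiffOn ℝ ∞ (fun y => H y i j) 𝔹 := fun i j => contDiffOn_const.mul (hhs i j)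
  have hHj : ∀ x ∈ 𝔹, ∀ i j, JetBound 𝔹 (fun y => H y i j) A (1 / ℓ) N x := by
    intro x hx i j
    have hj := jetBound_moll_sub_inner_moll (a := 2 * tol d * δ) (b := 2 * d * δ ^ 2) hℓ hℓ1 (hf i)
      (hf j) (hγ i j) hx (by positivity) (fun z hz => by
        have h1 := abs_le.1 (hmet i j z hz)
        have h2 := abs_le.1 (abs_unitMetric_le hd i j)
        have h3 : |θ * δ ^ 2 * unitMetric d i j| ≤ d * δ ^ 2 := by
          rw [abs_mul, abs_of_nonneg (by positivity)]
          calc θ * δ ^ 2 * |unitMetric d i j| ≤ 1 * δ ^ 2 * d := by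
                gcongr
                exact abs_unitMetric_le hd i j
            _ = _ := by ring
        have h4 : tol d * δ ^ 2 ≤ d * δ ^ 2 := by
          gcongr
          linarith
        have h3' := abs_le.1 h3
        rw [abs_le]
        constructor <;> linarith [h1.1, h1.2, h3'.1, h3'.2]) (hosc i x hx) (hosc j x hx) N
    refine (hj.const_smul (1 / δ ^ 2) (hhs i j) uniqueDiffOn_unitBall hx).mono (le_of_eq ?_) hA0
      (by positivity) le_rfl le_rfl
    rw [abs_of_nonneg (by positivity), hA, ← hm]
    field_simp
  have hcH : ∀ p, ∀ x ∈ 𝔹, coef p (H x) ∈ Icc (1 / 2 : ℝ) (3 / 2) := by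
    intro p x hx
    have h1 : ∀ i j, |H x i j - θ * unitMetric d i j| ≤ 2 * tol d := fun i j => by
      have h2 := abs_moll_sub_inner_moll_le (a := 2 * tol d * δ) hℓ hℓ1 (hf i)
        (hf j) (hγ i j) hx (by positivity) (hmet i j) (hosc i x hx) (hosc j x hx)
      have e : H x i j - θ * unitMetric d i j
          = (1 / δ ^ 2) * (h i j x - θ * δ ^ 2 * unitMetric d i j) := by
        simp only [hH]
        field_simp
      rw [e, abs_mul, abs_of_nonneg (by positivity), one_div, inv_mul_le_iff₀ (by positivity)]
      refine h2.trans ?_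
      nlinarith [sq_nonneg δ, mul_nonneg hσ.le (sq_nonneg δ)]
    have h3 := abs_coef_le p h1
    have e : coef p (H x) = θ + coef p (fun i j => H x i j - θ * unitMetric d i j) := by
      have e1 : H x = fun i j => (fun i j => θ * unitMetric d i j) i j
          + (fun i j => H x i j - θ * unitMetric d i j) i j := by
        funext i j
        simp
      conv_lhs => rw [e1]
      rw [coef_add, coef_mul, coef_unitMetric, mul_one]
    have h4 : (d : ℝ) * (2 * tol d) = 1 / 4 := by linarith
    rw [h4] at h3
    have h5 := abs_le.1 h3
    rw [e]
    constructor <;> linarith [h5.1, h5.2]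
  refine ⟨fun p x => δ * √(coef p (H x)), fun p => ?_, fun p x hx => ?_, fun x hx k l => ?_⟩
  · refine contDiffOn_const.mul fun x hx => ContDiffWithinAt.sqrt (contDiffOn_coef p hHs x hx) ?_
    have := (hcH p x hx).1
    positivity
  · have hjc : ∀ x ∈ 𝔹, JetBound 𝔹 (fun y => coef p (H y)) ((d + 1) * A) (1 / ℓ) N x :=
      fun x hx => jetBound_coef p hx hA0 (by positivity) hHs (hHj x hx)
    have hsq : ContDiffOn ℝ ∞ (fun y => √(coef p (H y))) 𝔹 := fun x hx =>
      ContDiffWithinAt.sqrt (contDiffOn_coef p hHs x hx) (by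
        have := (hcH p x hx).1
        positivity)
    have := (hcomp (fun y => coef p (H y)) (1 / ℓ) (contDiffOn_coef p hHs) (hcH p) (by positivity)
      (fun x hx j _ hjN => hjc x hx j hjN) x hx).const_smul δ hsq uniqueDiffOn_unitBall hx
    refine this.mono (le_of_eq ?_) (by positivity) (by positivity) le_rfl le_rfl
    rw [abs_of_pos hδ, mul_comm]
  · have e : ∀ p, (δ * √(coef p (H x))) ^ 2 = δ ^ 2 * coef p (H x) := fun p => by
      rw [mul_pow, Real.sq_sqrt (by linarith [(hcH p x hx).1])]
    simp only [e, mul_assoc, ← Finset.mul_sum]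
    rw [sum_coef (fun i j => by
      simp only [hH, hh]
      rw [hsymm i j, real_inner_comm])]
    simp only [hH, hh]
    field_simp

end Amplitude

end NashKuiper

namespace NashKuiper
open scoped ContDiff RealInnerProductSpace

section Stage

variable {d : ℕ}

local notation "𝔼" => EuclideanSpace ℝ (Fin d)
local notation "𝔽" => EuclideanSpace ℝ (Fin (d + 1))
local notation "𝔹" => closedBall (0 : EuclideanSpace ℝ (Fin d)) 1
local notation "𝔇" u => fderivWithin ℝ u (closedBall (0 : EuclideanSpace ℝ (Fin d)) 1)

theorem mem_bilipSet_of_norm_sub_le {A B : 𝔼 →L[ℝ] 𝔽} {c C e c' C' : ℝ} (hA : A ∈ bilipSet d c C)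
    (h : ‖B - A‖ ≤ e) (hc : c' ≤ c - e) (hC : C + e ≤ C') : B ∈ bilipSet d c' C' := by
  refine ⟨?_, fun w => ?_⟩
  · have : B = A + (B - A) := by abel
    rw [this]
    exact (norm_add_le _ _).trans ((add_le_add hA.1 h).trans hC)
  · have h1 := (B - A).le_opNorm w
    have h2 := mul_le_mul_of_nonneg_right h (norm_nonneg w)
    have h3 := hA.2 w
    have h4 : A w = B w - (B - A) w := by simp
    have h5 : ‖A w‖ ≤ ‖B w‖ + ‖(B - A) w‖ := by
      rw [h4]
      exact norm_sub_le _ _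
    have h6 := mul_le_mul_of_nonneg_right hc (norm_nonneg w)
    linarith

set_option maxHeartbeats 1000000 in
/-- One stage of the iteration: the metric defect decreases by the factor `K`, while the second
derivatives grow by the factor `K ^ s`, with `s` the number of primitive metrics. -/
theorem exists_stage (hd : 1 ≤ d) {g : 𝔼 → Fin d → Fin d → ℝ} (hsymm : ∀ x i j, g x i j = g x j i)
    {L c b : ℝ} (hc : 0 < c) (hL0 : 0 ≤ L)
    (hL : ∀ i j, ∀ x ∈ 𝔹, ∀ y ∈ 𝔹, |g x i j - g y i j| ≤ L * dist x y)
    (hgc : ∀ x ∈ 𝔹, ∀ w, c ^ 2 * ‖w‖ ^ 2 ≤ quad (g x) w)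
    (hgb : ∀ x ∈ 𝔹, ∀ w, quad (g x) w ≤ b * ‖w‖ ^ 2) :
    ∃ C : ℝ, 1 ≤ C ∧ ∀ K : ℝ, 4 ≤ K → ∃ δ₁ : ℝ, 0 < δ₁ ∧ ∃ M : ℝ, 0 < M ∧
      ∀ (δ μ : ℝ) (u : 𝔼 → 𝔽), 0 < δ → δ ≤ δ₁ → M ≤ μ * δ → ContDiffOn ℝ ∞ u 𝔹 →
        (∀ x ∈ 𝔹, ∀ i j, |g x i j - δ ^ 2 * unitMetric d i j - gram ((𝔇 u) x) i j|
          ≤ tol d * δ ^ 2) →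
        (∀ x ∈ 𝔹, ‖(𝔇 (𝔇 u)) x‖ ≤ μ) →
        ∃ v : 𝔼 → 𝔽, ContDiffOn ℝ ∞ v 𝔹 ∧
          (∀ x ∈ 𝔹, ∀ i j, |g x i j - δ ^ 2 / K * unitMetric d i j - gram ((𝔇 v) x) i j|
            ≤ tol d * (δ ^ 2 / K)) ∧
          (∀ x ∈ 𝔹, ‖(𝔇 (𝔇 v)) x‖ ≤ C * K ^ Fintype.card (PairIdx d) * μ) ∧
          (∀ x ∈ 𝔹, ‖(𝔇 v) x - (𝔇 u) x‖ ≤ C * δ) ∧ ∀ x ∈ 𝔹, ‖v x - u x‖ ≤ C * δ := by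
  have hd1 : (1 : ℝ) ≤ d := by exact_mod_cast hd
  have hσ := tol_pos hd
  have hσ1 := tol_le hd
  set s := Fintype.card (PairIdx d) with hs
  set σ := tol d with hσdef
  set B : ℝ := 1 + |b| + 2 * d ^ 2 with hB
  have hB1 : 1 ≤ B := by
    have := abs_nonneg b
    nlinarith
  obtain ⟨Ca, hCa, hamp⟩ := exists_amplitude hd (s + 1)
  set A : ℝ := Ca + mollConst d s * σ with hA
  have hm := mollConst_nonneg d s
  have hA0 : 0 ≤ A := by positivity
  obtain ⟨C, hC, δ₀, hδ₀, hδ₀1, hstep⟩ := exists_multistep (dir (d := d))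
    (isCompact_bilipSet (c / 4) (B + 1)) (bilipSet_subset_frameSet (by positivity) (B + 1)) A hA0
  set C' : ℝ := 1 + 4 * C / σ with hC'
  have hC'1 : 1 ≤ C' := by
    rw [hC']
    have : 0 ≤ 4 * C / σ := by positivity
    linarith
  refine ⟨1 + C + C / σ * C' ^ s, ?_, fun K hK => ?_⟩
  · have : 0 ≤ C / σ * C' ^ s := by positivity
    linarith
  have hK0 : 0 < K := by linarith
  refine ⟨min δ₀ (min (c / (4 * d)) (σ / (4 * K * (C + 1)))), by positivity, 1 + 8 * K * L,
    by positivity, ?_⟩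
  intro δ μ u hδ hδ₁ hM hu hmet hμ
  have hδ0 : δ ≤ δ₀ := hδ₁.trans (min_le_left _ _)
  have hδc : δ * (4 * d) ≤ c := by
    have := hδ₁.trans ((min_le_right _ _).trans (min_le_left _ _))
    rwa [le_div_iff₀ (by positivity)] at this
  have hδK : δ * (4 * K * (C + 1)) ≤ σ := by
    have := hδ₁.trans ((min_le_right _ _).trans (min_le_right _ _))
    rwa [le_div_iff₀ (by positivity)] at this
  have hδ1 : δ ≤ 1 := hδ0.trans hδ₀1
  have hKL : 0 ≤ K * L := by positivity
  have hμ1 : 1 ≤ μ := by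
    by_contra hcon
    have := mul_lt_mul_of_pos_right (not_le.1 hcon) hδ
    linarith only [this, hM, hδ1, hKL]
  have hμ0 : 0 < μ := by linarith
  set ℓ : ℝ := σ * δ / μ with hℓ
  have hℓ0 : 0 < ℓ := by positivity
  have hℓμ : ℓ * μ = σ * δ := by rw [hℓ]; field_simp
  have hℓ1 : ℓ ≤ 1 / 2 := by
    rw [hℓ, div_le_iff₀ hμ0]
    linarith only [mul_le_of_le_one_right hσ.le hδ1, hσ1, hμ1]
  have hℓ1' : ℓ ≤ 1 := by linarith
  obtain ⟨u₁, hu₁, hDu₁, hDu₁u, hu₁u, hju₁⟩ := exists_smoothing hu hℓ0 hℓ1 hμ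
  have hDu := contDiffOn_fderivWithin_unitBall hu
  have h2σδ : 2 * ℓ * μ = 2 * σ * δ := by linarith
  set f : Fin d → 𝔼 → 𝔽 := fun i x => (𝔇 u) x (EuclideanSpace.single i 1) with hf
  set γ : Fin d → Fin d → 𝔼 → ℝ := fun i j x => g x i j - δ ^ 2 / K * unitMetric d i j with hγ
  have hgcont : ∀ i j, ContinuousOn (fun x => g x i j) 𝔹 := fun i j => by
    refine (LipschitzOnWith.of_dist_le_mul (K := L.toNNReal) fun x hx y hy => ?_).continuousOn
    rw [Real.dist_eq, Real.coe_toNNReal _ hL0]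
    exact hL i j x hx y hy
  obtain ⟨a, has, haj, haeq⟩ := hamp δ ℓ (1 - 1 / K) f γ hδ hℓ0 hℓ1'
    (by
      have : 1 / K ≤ 1 / 4 := by gcongr
      linarith)
    (by
      have : 0 < 1 / K := by positivity
      linarith)
    (fun i => hDu.continuousOn.clm_apply continuousOn_const)
    (fun i j => (hgcont i j).sub continuousOn_const)
    (fun i j => by
      funext x
      simp only [hγ, hsymm x i j, unitMetric_comm i j])
    (fun i j z hz => by
      have := hmet z hz i j
      convert this using 2
      simp only [hγ, gram]
      ring)
    (fun i x hx z hz hdz => by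
      have h1 := norm_fderivWithin_sub_le hu hμ hx hz
      have h2 := ((𝔇 u) z - (𝔇 u) x).le_opNorm (EuclideanSpace.single i 1)
      have h3 : ‖(EuclideanSpace.single i 1 : 𝔼)‖ = 1 := by simp
      rw [h3, mul_one] at h2
      refine h2.trans (h1.trans ?_)
      rw [← dist_eq_norm, ← h2σδ, mul_comm]
      gcongr)
  have hbil : ∀ x ∈ 𝔹, (𝔇 u₁) x ∈ bilipSet d (c / 4) (B + 1) := fun x hx => by
    have h1 : ∀ i j, |g x i j - gram ((𝔇 u) x) i j| ≤ 2 * d * δ ^ 2 := fun i j => by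
      have h1 := abs_le.1 (hmet x hx i j)
      have h2 := abs_le.1 (abs_unitMetric_le hd i j)
      have h3 := sq_nonneg δ
      have h4 : σ * δ ^ 2 ≤ d * δ ^ 2 := by gcongr; linarith
      rw [abs_le]
      constructor <;> nlinarith only [h1.1, h1.2, h2.1, h2.2, h3, h4]
    have hde : δ ^ 2 * (16 * d ^ 2) ≤ c ^ 2 := by
      have := pow_le_pow_left₀ (by positivity) hδc 2
      linarith only [this]
    have h2 : (𝔇 u) x ∈ bilipSet d (c / 2) B := by
      refine mem_bilipSet_of_gram (by positivity) h1 (hgc x hx) (hgb x hx) (by linarith) ?_ ?_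
      · linarith only [hde, sq_nonneg c]
      · have h5 : b ≤ |b| := le_abs_self b
        have h6 : (d : ℝ) * (2 * d * δ ^ 2) ≤ 2 * d ^ 2 := by
          have := mul_le_of_le_one_right (sq_nonneg (d : ℝ)) (pow_le_one₀ hδ.le hδ1 : δ ^ 2 ≤ 1)
          linarith only [this]
        nlinarith only [h5, h6, hB, hB1]
    have hσδ : σ * δ ≤ 1 / 8 * δ := mul_le_mul_of_nonneg_right hσ1 hδ.le
    have hδd : δ * 1 ≤ δ * d := mul_le_mul_of_nonneg_left hd1 hδ.le
    refine mem_bilipSet_of_norm_sub_le h2 (hDu₁u x hx) ?_ ?_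
    · rw [h2σδ]
      linarith only [hσδ, hδc, hδd, hc]
    · rw [h2σδ]
      linarith only [hσδ, hδ1]
  have hr : σ * δ * (1 / ℓ) = μ := by rw [hℓ]; field_simp
  obtain ⟨v, hv, hDDv, hDv, hvu, hmetv⟩ := hstep δ (1 / ℓ) (C' * K) u₁ a hδ hδ0 (by positivity)
    (one_le_mul_of_one_le_of_one_le hC'1 (by linarith only [hK])) hu₁ has hbil
    (fun x hx => (hju₁ s x hx).mono (by
      have e : A * δ * (1 / ℓ) = Ca * (δ * (1 / ℓ)) + mollConst d s * μ := by
        rw [← hr, hA]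
        ring
      rw [e]
      have : 0 ≤ Ca * (δ * (1 / ℓ)) := by positivity
      linarith) (by positivity) (by positivity) le_rfl le_rfl)
    (fun p x hx => (haj p x hx).mono (by
      rw [hA]
      gcongr
      have : 0 ≤ mollConst d s * σ := by positivity
      linarith) (by positivity) (by positivity) le_rfl le_rfl)
  have hCs : 0 ≤ C / σ * C' ^ s := by positivity
  have hCδ : C * δ + 2 * σ * δ ≤ (1 + C + C / σ * C' ^ s) * δ := by
    have h1 : (C + 2 * σ) * δ ≤ (1 + C + C / σ * C' ^ s) * δ := by
      gcongr ?_ * δ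
      linarith
    linarith
  refine ⟨v, hv, fun x hx i j => ?_, fun x hx => ?_, fun x hx => ?_, fun x hx => ?_⟩
  · have h1 := hmetv x hx (EuclideanSpace.single i 1) (EuclideanSpace.single j 1) (by simp)
      (by simp)
    rw [haeq x hx i j] at h1
    have e1 : ∀ k, (𝔇 u₁) x (EuclideanSpace.single k 1) = moll ℓ (f k) x := fun k => by
      rw [hDu₁ x hx]
      exact (moll_clm hℓ0 hℓ1' hDu.continuousOn
        (ContinuousLinearMap.apply ℝ 𝔽 (EuclideanSpace.single k (1 : ℝ) : 𝔼)) hx).symm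
    rw [e1, e1] at h1
    have h2 := norm_moll_sub_le (f := γ i j) (c := γ i j x) (a := L * (2 * ℓ)) hℓ0 hℓ1'
      ((hgcont i j).sub continuousOn_const) hx (fun z hz hdz => by
        have := hL i j z hz x hx
        simp only [hγ]
        rw [sub_sub_sub_cancel_right, Real.norm_eq_abs]
        exact this.trans (by gcongr))
    rw [Real.norm_eq_abs] at h2
    have h3 : L * (2 * ℓ) ≤ σ * (δ ^ 2 / K) / 4 := by
      have h4 : 8 * K * L ≤ μ * δ := by linarith
      have e : σ * (δ ^ 2 / K) / 4 - L * (2 * ℓ) = σ * δ / (4 * K * μ) * (μ * δ - 8 * K * L) := by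
        rw [hℓ]
        field_simp
        ring
      have : 0 ≤ σ * δ / (4 * K * μ) * (μ * δ - 8 * K * L) :=
        mul_nonneg (by positivity) (by linarith)
      linarith
    have h5 : C * (δ ^ 2 / (C' * K)) ≤ σ * (δ ^ 2 / K) / 4 := by
      have h6 : 4 * C ≤ σ * C' := by
        rw [hC', mul_add, mul_div_cancel₀ _ hσ.ne']
        linarith
      have e : σ * (δ ^ 2 / K) / 4 - C * (δ ^ 2 / (C' * K))
          = δ ^ 2 / (4 * C' * K) * (σ * C' - 4 * C) := by
        field_simp
      have : 0 ≤ δ ^ 2 / (4 * C' * K) * (σ * C' - 4 * C) :=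
        mul_nonneg (by positivity) (by linarith)
      linarith
    have h7 : C * δ ^ 4 ≤ σ * (δ ^ 2 / K) / 4 := by
      have h8 : 4 * K * C * δ ^ 2 ≤ σ := by
        have h9 : 4 * K * C * δ ^ 2 ≤ 4 * K * C * δ := by
          have : δ ^ 2 ≤ δ := pow_le_of_le_one hδ.le hδ1 two_ne_zero
          gcongr
        linarith only [h9, hδK, mul_pos hδ hK0]
      have e : σ * (δ ^ 2 / K) / 4 - C * δ ^ 4 = δ ^ 2 / (4 * K) * (σ - 4 * K * C * δ ^ 2) := by
        field_simp
      have : 0 ≤ δ ^ 2 / (4 * K) * (σ - 4 * K * C * δ ^ 2) :=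
        mul_nonneg (by positivity) (by linarith)
      linarith
    have h10 : 0 ≤ σ * (δ ^ 2 / K) := by positivity
    have h11 := abs_le.1 h1
    have h12 := abs_le.1 h2
    change |γ i j x - gram ((𝔇 v) x) i j| ≤ _
    unfold gram
    rw [mul_add] at h11
    rw [abs_le]
    constructor <;> linarith [h11.1, h11.2, h12.1, h12.2]
  · refine (hDDv x hx).trans ?_
    have e : C * δ * ((C' * K) ^ s * (1 / ℓ)) = C / σ * C' ^ s * K ^ s * μ := by
      rw [← hr, mul_pow]
      field_simp
    rw [e]
    gcongr
    linarith
  · have h1 := hDv x hx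
    have h2 := hDu₁u x hx
    have h3 := norm_add_le ((𝔇 v) x - (𝔇 u₁) x) ((𝔇 u₁) x - (𝔇 u) x)
    rw [sub_add_sub_cancel] at h3
    refine h3.trans ((add_le_add h1 h2).trans ?_)
    rw [h2σδ]
    linarith
  · have h1 := hvu x hx
    have h2 := hu₁u x hx
    have h3 := norm_add_le (v x - u₁ x) (u₁ x - u x)
    rw [sub_add_sub_cancel] at h3
    refine h3.trans ((add_le_add h1 h2).trans ?_)
    rw [h2σδ, div_div_eq_mul_div, div_one]
    have : C * δ * ℓ ≤ C * δ := mul_le_of_le_one_right (by positivity) hℓ1'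
    linarith

end Stage

end NashKuiper

namespace NashKuiper
open scoped ContDiff RealInnerProductSpace Topology
open Filter

section Limit

variable {d : ℕ}

local notation "𝔼" => EuclideanSpace ℝ (Fin d)
local notation "𝔽" => EuclideanSpace ℝ (Fin (d + 1))
local notation "𝔹" => closedBall (0 : EuclideanSpace ℝ (Fin d)) 1
local notation "𝔇" u => fderivWithin ℝ u (closedBall (0 : EuclideanSpace ℝ (Fin d)) 1)

theorem le_rpow_mul_rpow {t a b α : ℝ} (ht : 0 ≤ t) (hα : 0 < α) (hα1 : α < 1)
    (ha : t ≤ a) (hb : t ≤ b) : t ≤ a ^ (1 - α) * b ^ α := by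
  rcases ht.eq_or_lt with rfl | ht'
  · positivity
  calc t = t ^ (1 - α) * t ^ α := by
        rw [← Real.rpow_add ht', sub_add_cancel, Real.rpow_one]
    _ ≤ a ^ (1 - α) * b ^ α := by
        have : 0 ≤ a := ht.trans ha
        gcongr

set_option maxHeartbeats 1000000 in
/-- A sequence of maps converging geometrically in `C¹`, with at most geometrically growing second
derivatives, converges to a map with Hölder continuous derivative. -/
theorem exists_limit {u : ℕ → 𝔼 → 𝔽} (hu : ∀ n, ContDiffOn ℝ ∞ (u n) 𝔹) {A B ρ Θ α : ℝ}
    (hB : 0 ≤ B) (hρ : 0 < ρ) (hρ1 : ρ < 1) (hΘ : 1 ≤ Θ) (hα : 0 < α) (hα1 : α < 1)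
    (hτ : ρ ^ (1 - α) * Θ ^ α < 1)
    (hD : ∀ n, ∀ x ∈ 𝔹, ‖(𝔇 (u (n + 1))) x - (𝔇 (u n)) x‖ ≤ A * ρ ^ n)
    (h0 : ∀ n, ∀ x ∈ 𝔹, ‖u (n + 1) x - u n x‖ ≤ A * ρ ^ n)
    (hDD : ∀ n, ∀ x ∈ 𝔹, ‖(𝔇 (𝔇 (u n))) x‖ ≤ B * Θ ^ n) :
    ∃ v : 𝔼 → 𝔽, ContDiffOn ℝ 1 v 𝔹 ∧
      (∃ C : ℝ, ∀ x ∈ 𝔹, ∀ y ∈ 𝔹, ‖(𝔇 v) x - (𝔇 v) y‖ ≤ C * dist x y ^ α) ∧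
      (∀ x ∈ 𝔹, Tendsto (fun n => (𝔇 (u n)) x) atTop (𝓝 ((𝔇 v) x))) ∧
      ∀ x ∈ 𝔹, ‖v x - u 0 x‖ ≤ A / (1 - ρ) := by
  have h00 : (0 : 𝔼) ∈ 𝔹 := by simp
  have hA : 0 ≤ A := by simpa using (norm_nonneg _).trans (h0 0 0 h00)
  have hdu : ∀ x ∈ 𝔹, ∀ n, dist (u n x) (u (n + 1) x) ≤ A * ρ ^ n := fun x hx n => by
    rw [dist_comm, dist_eq_norm]
    exact h0 n x hx
  have hdD : ∀ x ∈ 𝔹, ∀ n, dist ((𝔇 (u n)) x) ((𝔇 (u (n + 1))) x) ≤ A * ρ ^ n := fun x hx n => by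
    rw [dist_comm, dist_eq_norm]
    exact hD n x hx
  choose! v hv using fun x (hx : x ∈ 𝔹) => cauchySeq_tendsto_of_complete
    (cauchySeq_of_le_geometric ρ A hρ1 (hdu x hx))
  choose! F hF using fun x (hx : x ∈ 𝔹) => cauchySeq_tendsto_of_complete
    (cauchySeq_of_le_geometric ρ A hρ1 (hdD x hx))
  have hFn : ∀ x ∈ 𝔹, ∀ n, ‖(𝔇 (u n)) x - F x‖ ≤ A * ρ ^ n / (1 - ρ) := fun x hx n => by
    rw [← dist_eq_norm]
    exact dist_le_of_le_geometric_of_tendsto ρ A hρ1 (hdD x hx) (hF x hx) n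
  have hdiff : ∀ n, DifferentiableOn ℝ (u n) 𝔹 := fun n => (hu n).differentiableOn (by simp)
  have hmv : ∀ x ∈ 𝔹, ∀ y ∈ 𝔹, ∀ n, ‖(v y - u n y) - (v x - u n x)‖
      ≤ A / (1 - ρ) * ρ ^ n * ‖y - x‖ := fun x hx y hy n => by
    have hρ' : 0 < 1 - ρ := by linarith
    have h1 : ∀ m, dist (u m y - u m x) (u (m + 1) y - u (m + 1) x) ≤ (A * ‖y - x‖) * ρ ^ m := by
      intro m
      have := (convex_closedBall (0 : 𝔼) 1).norm_image_sub_le_of_norm_fderivWithin_le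
        (f := fun y => u (m + 1) y - u m y) (C := A * ρ ^ m)
        (fun y hy => (hdiff (m + 1) y hy).sub (hdiff m y hy))
        (fun y hy => by
          rw [fderivWithin_fun_sub (uniqueDiffOn_unitBall y hy) (hdiff (m + 1) y hy) (hdiff m y hy)]
          exact hD m y hy) hx hy
      rw [dist_comm, dist_eq_norm]
      calc _ = ‖u (m + 1) y - u m y - (u (m + 1) x - u m x)‖ := by congr 1; abel
        _ ≤ _ := this
        _ = _ := by ring
    have h2 := dist_le_of_le_geometric_of_tendsto ρ _ hρ1 h1 ((hv y hy).sub (hv x hx)) n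
    rw [dist_comm, dist_eq_norm] at h2
    calc _ = ‖v y - v x - (u n y - u n x)‖ := by congr 1; abel
      _ ≤ _ := h2
      _ = _ := by ring
  have hder : ∀ x ∈ 𝔹, HasFDerivWithinAt v (F x) 𝔹 x := by
    intro x hx
    rw [hasFDerivWithinAt_iff_isLittleO, Asymptotics.isLittleO_iff]
    intro ε hε
    have hlim : Tendsto (fun n => A / (1 - ρ) * ρ ^ n) atTop (𝓝 0) := by
      simpa using (tendsto_pow_atTop_nhds_zero_of_lt_one hρ.le hρ1).const_mul (A / (1 - ρ))
    obtain ⟨n, hn⟩ := (hlim.eventually (gt_mem_nhds (show (0 : ℝ) < ε / 3 by positivity))).exists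
    have hn' := (hdiff n x hx).hasFDerivWithinAt
    rw [hasFDerivWithinAt_iff_isLittleO, Asymptotics.isLittleO_iff] at hn'
    filter_upwards [hn' (show (0 : ℝ) < ε / 3 by positivity), self_mem_nhdsWithin] with y hy hyB
    have h1 := hmv x hx y hyB n
    have h2 := ((𝔇 (u n)) x - F x).le_opNorm (y - x)
    have h3 := hFn x hx n
    have e : v y - v x - F x (y - x) = ((v y - u n y) - (v x - u n x))
        + (u n y - u n x - (𝔇 (u n)) x (y - x)) + ((𝔇 (u n)) x - F x) (y - x) := by
      simp only [_root_.sub_apply]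
      abel
    rw [e]
    refine (norm_add₃_le).trans ?_
    have h4 : A / (1 - ρ) * ρ ^ n * ‖y - x‖ ≤ ε / 3 * ‖y - x‖ := by gcongr
    have h5 : ‖(𝔇 (u n)) x - F x‖ * ‖y - x‖ ≤ ε / 3 * ‖y - x‖ := by
      gcongr
      refine h3.trans (le_of_eq_of_le ?_ hn.le)
      ring
    linarith
  have hDv : ∀ x ∈ 𝔹, (𝔇 v) x = F x := fun x hx =>
    (hder x hx).fderivWithin (uniqueDiffOn_unitBall x hx)
  set τ := ρ ^ (1 - α) * Θ ^ α with hτdef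
  have hτ0 : 0 ≤ τ := by positivity
  set C₁ : ℝ := (2 * A) ^ (1 - α) * (2 * B * Θ) ^ α with hC₁
  have hΘ0 : 0 < Θ := by linarith
  have hhold : ∀ x ∈ 𝔹, ∀ y ∈ 𝔹,
      ‖F x - F y‖ ≤ (C₁ / (1 - τ) + B * 2 ^ (1 - α)) * dist x y ^ α := by
    intro x hx y hy
    have hLip : ∀ n, ‖(𝔇 (u n)) x - (𝔇 (u n)) y‖ ≤ B * Θ ^ n * dist x y := fun n => by
      rw [dist_eq_norm]
      exact norm_fderivWithin_sub_le (hu n) (hDD n) hy hx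
    have h1 : ∀ n, dist ((𝔇 (u n)) x - (𝔇 (u n)) y) ((𝔇 (u (n + 1))) x - (𝔇 (u (n + 1))) y)
        ≤ (C₁ * dist x y ^ α) * τ ^ n := by
      intro n
      have ha : dist ((𝔇 (u n)) x - (𝔇 (u n)) y) ((𝔇 (u (n + 1))) x - (𝔇 (u (n + 1))) y)
          ≤ 2 * A * ρ ^ n := by
        rw [dist_comm, dist_eq_norm, sub_sub_sub_comm]
        refine (norm_sub_le _ _).trans ?_
        linarith [hD n x hx, hD n y hy]
      have hb : dist ((𝔇 (u n)) x - (𝔇 (u n)) y) ((𝔇 (u (n + 1))) x - (𝔇 (u (n + 1))) y)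
          ≤ 2 * B * Θ * Θ ^ n * dist x y := by
        rw [dist_eq_norm]
        refine (norm_sub_le _ _).trans ?_
        have h3 := hLip n
        have h4 := hLip (n + 1)
        have h5 : B * Θ ^ n * dist x y ≤ B * Θ ^ (n + 1) * dist x y := by
          rw [pow_succ]
          gcongr
          exact le_mul_of_one_le_right (by positivity) hΘ
        have e : 2 * B * Θ * Θ ^ n * dist x y = 2 * (B * Θ ^ (n + 1) * dist x y) := by ring
        linarith
      refine (le_rpow_mul_rpow dist_nonneg hα hα1 ha hb).trans (le_of_eq ?_)
      rw [Real.mul_rpow (by positivity) (by positivity),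
        Real.mul_rpow (x := 2 * B * Θ * Θ ^ n) (by positivity) (by positivity),
        Real.mul_rpow (x := 2 * B * Θ) (by positivity) (by positivity), hC₁, hτdef, mul_pow,
        ← Real.rpow_natCast, ← Real.rpow_natCast, ← Real.rpow_natCast, ← Real.rpow_natCast,
        ← Real.rpow_mul hρ.le, ← Real.rpow_mul hρ.le, ← Real.rpow_mul hΘ0.le,
        ← Real.rpow_mul hΘ0.le, mul_comm (n : ℝ), mul_comm (n : ℝ)]
      ring
    have h2 := dist_le_of_le_geometric_of_tendsto₀ τ _ hτ h1 ((hF x hx).sub (hF y hy))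
    have h3 : B * dist x y ≤ B * 2 ^ (1 - α) * dist x y ^ α := by
      rw [mul_assoc]
      gcongr
      refine le_rpow_mul_rpow dist_nonneg hα hα1 ?_ le_rfl
      have hx1 : dist x 0 ≤ 1 := hx
      have hy1 : dist y 0 ≤ 1 := hy
      linarith [dist_triangle_right x y 0]
    have h4 := hLip 0
    rw [pow_zero, mul_one] at h4
    rw [dist_comm, dist_eq_norm] at h2
    have h5 := norm_add_le (F x - F y - ((𝔇 (u 0)) x - (𝔇 (u 0)) y)) ((𝔇 (u 0)) x - (𝔇 (u 0)) y)
    rw [sub_add_cancel] at h5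
    have e : (C₁ / (1 - τ) + B * 2 ^ (1 - α)) * dist x y ^ α
        = C₁ * dist x y ^ α / (1 - τ) + B * 2 ^ (1 - α) * dist x y ^ α := by ring
    rw [e]
    linarith
  have hCF : ContinuousOn F 𝔹 := by
    intro x hx
    have hlim : Tendsto (fun y => (C₁ / (1 - τ) + B * 2 ^ (1 - α)) * dist y x ^ α) (𝓝[𝔹] x) (𝓝 0) := by
      have h1 : Tendsto (fun y : 𝔼 => dist y x) (𝓝[𝔹] x) (𝓝 0) := by
        have : Continuous fun y : 𝔼 => dist y x := by fun_prop
        simpa using (this.tendsto x).mono_left nhdsWithin_le_nhds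
      have h2 := (h1.rpow_const (p := α) (Or.inr hα.le)).const_mul
        (C₁ / (1 - τ) + B * 2 ^ (1 - α))
      rwa [Real.zero_rpow hα.ne', mul_zero] at h2
    rw [ContinuousWithinAt, tendsto_iff_dist_tendsto_zero]
    refine squeeze_zero' (Eventually.of_forall fun _ => dist_nonneg) ?_ hlim
    filter_upwards [self_mem_nhdsWithin] with y hy
    rw [dist_eq_norm]
    exact hhold y hy x hx
  refine ⟨v, ?_, ⟨_, fun x hx y hy => by rw [hDv x hx, hDv y hy]; exact hhold x hx y hy⟩,
    fun x hx => by rw [hDv x hx]; exact hF x hx, fun x hx => ?_⟩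
  · have h := contDiffOn_succ_iff_fderivWithin (𝕜 := ℝ) (n := 0) (f := v)
      (uniqueDiffOn_unitBall (d := d))
    rw [zero_add] at h
    exact h.2 ⟨fun x hx => (hder x hx).differentiableWithinAt, by simp,
      contDiffOn_zero.2 (hCF.congr hDv)⟩
  · rw [← dist_eq_norm, dist_comm]
    exact dist_le_of_le_geometric_of_tendsto₀ ρ A hρ1 (hdu x hx) (hv x hx)

end Limit

end NashKuiper

namespace NashKuiper
open scoped ContDiff RealInnerProductSpace Topology
open Filter

section Iteration

variable {d : ℕ}

local notation "𝔼" => EuclideanSpace ℝ (Fin d)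
local notation "𝔽" => EuclideanSpace ℝ (Fin (d + 1))
local notation "𝔹" => closedBall (0 : EuclideanSpace ℝ (Fin d)) 1
local notation "𝔇" u => fderivWithin ℝ u (closedBall (0 : EuclideanSpace ℝ (Fin d)) 1)

theorem exists_growth_factor {C α : ℝ} (hC : 1 ≤ C) (s : ℕ)
    (hs : α * (1 + 2 * s) < 1) :
    ∃ K : ℝ, 4 ≤ K ∧ (√K)⁻¹ ^ (1 - α) * (C * K ^ s) ^ α < 1 := by
  set e : ℝ := (1 - α * (1 + 2 * s)) / 2 with he
  have he0 : 0 < e := by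
    rw [he]
    linarith
  have hlim : Tendsto (fun K : ℝ => C ^ α * K ^ (-e)) atTop (𝓝 0) := by
    simpa using (tendsto_rpow_neg_atTop he0).const_mul (C ^ α)
  obtain ⟨K, hK, hK4⟩ := ((hlim.eventually (gt_mem_nhds one_pos)).and (eventually_ge_atTop 4)).exists
  refine ⟨K, hK4, lt_of_eq_of_lt ?_ hK⟩
  have hK0 : 0 < K := by linarith
  rw [Real.mul_rpow (by positivity) (by positivity), Real.sqrt_eq_rpow, ← Real.rpow_neg hK0.le,
    ← Real.rpow_natCast, ← Real.rpow_mul hK0.le, ← Real.rpow_mul hK0.le, mul_left_comm,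
    ← Real.rpow_add hK0]
  congr 2
  rw [he]
  ring

theorem continuous_gram (i j : Fin d) : Continuous fun A : 𝔼 →L[ℝ] 𝔽 => gram A i j := by
  unfold gram
  fun_prop

theorem exists_norm_le_of_contDiffOn {u : 𝔼 → 𝔽} (hu : ContDiffOn ℝ ∞ u 𝔹) :
    ∃ μ : ℝ, ∀ x ∈ 𝔹, ‖(𝔇 (𝔇 u)) x‖ ≤ μ :=
  (isCompact_closedBall (0 : 𝔼) 1).exists_bound_of_continuousOn
    (contDiffOn_fderivWithin_unitBall (contDiffOn_fderivWithin_unitBall hu)).continuousOn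

set_option maxHeartbeats 1000000 in
/-- A map which is almost isometric, with a metric defect close to a small multiple of
`unitMetric`, is close to an isometric immersion of class `C^{1,α}`. -/
theorem exists_isometry_near (hd : 1 ≤ d) {g : 𝔼 → Fin d → Fin d → ℝ}
    (hsymm : ∀ x i j, g x i j = g x j i) {L c b : ℝ} (hc : 0 < c) (hL0 : 0 ≤ L)
    (hL : ∀ i j, ∀ x ∈ 𝔹, ∀ y ∈ 𝔹, |g x i j - g y i j| ≤ L * dist x y)
    (hgc : ∀ x ∈ 𝔹, ∀ w, c ^ 2 * ‖w‖ ^ 2 ≤ quad (g x) w)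
    (hgb : ∀ x ∈ 𝔹, ∀ w, quad (g x) w ≤ b * ‖w‖ ^ 2) {α : ℝ} (hα : 0 < α)
    (hα1 : α * (1 + 2 * Fintype.card (PairIdx d)) < 1) :
    ∃ C : ℝ, 0 < C ∧ ∃ δ₁ : ℝ, 0 < δ₁ ∧ ∀ (δ : ℝ) (u : 𝔼 → 𝔽), 0 < δ → δ ≤ δ₁ →
      ContDiffOn ℝ ∞ u 𝔹 →
      (∀ x ∈ 𝔹, ∀ i j, |g x i j - δ ^ 2 * unitMetric d i j - gram ((𝔇 u) x) i j|
        ≤ tol d * δ ^ 2) →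
      ∃ v : 𝔼 → 𝔽, ContDiffOn ℝ 1 v 𝔹 ∧
        (∃ C : ℝ, ∀ x ∈ 𝔹, ∀ y ∈ 𝔹, ‖(𝔇 v) x - (𝔇 v) y‖ ≤ C * dist x y ^ α) ∧
        (∀ x ∈ 𝔹, ∀ i j, gram ((𝔇 v) x) i j = g x i j) ∧ ∀ x ∈ 𝔹, ‖v x - u x‖ ≤ C * δ := by
  have hσ := tol_pos hd
  obtain ⟨C, hC1, hstage⟩ := exists_stage hd hsymm hc hL0 hL hgc hgb
  set s := Fintype.card (PairIdx d) with hs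
  have hs1 : 1 ≤ s := Fintype.card_pos_iff.2 ⟨⟨(⟨0, hd⟩, ⟨0, hd⟩), le_rfl⟩⟩
  have hα2 : α < 1 := by
    have : 0 ≤ α * (2 * (s : ℝ)) := by positivity
    linarith
  obtain ⟨K, hK4, hτ⟩ := exists_growth_factor hC1 s hα1
  obtain ⟨δ₁, hδ₁, M, hM, hstep⟩ := hstage K hK4
  have hK0 : 0 < K := by linarith
  set ρ := (√K)⁻¹ with hρ
  have hsK : 2 ≤ √K := Real.le_sqrt_of_sq_le (by linarith)
  have hρ0 : 0 < ρ := by positivity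
  have hρ1 : ρ < 1 := inv_lt_one_of_one_lt₀ (by linarith)
  have hρ2 : ρ ^ 2 = 1 / K := by rw [hρ, inv_pow, Real.sq_sqrt hK0.le, one_div]
  set Θ := C * K ^ s with hΘ
  have hKs : K ≤ K ^ s := le_self_pow₀ (by linarith) (by omega)
  have hΘK : K ≤ Θ := hKs.trans (le_mul_of_one_le_left (by positivity) hC1)
  have hΘρ : 1 ≤ Θ * ρ := by
    have h1 : K = √K * √K := (Real.mul_self_sqrt hK0.le).symm
    have h2 : K * ρ = √K := by
      rw [hρ]
      field_simp
      rw [Real.sq_sqrt hK0.le]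
    have h3 : K * ρ ≤ Θ * ρ := by gcongr
    linarith
  refine ⟨C / (1 - ρ), div_pos (by linarith) (by linarith), δ₁, hδ₁, ?_⟩
  intro δ u hδ hδ1 hu hmet
  obtain ⟨μ', hμ'⟩ := exists_norm_le_of_contDiffOn hu
  set μ := max μ' (M / δ) with hμ
  have hμ0 : 0 < μ := lt_of_lt_of_le (by positivity) (le_max_right _ _)
  have hμM : M ≤ μ * δ := by
    rw [← div_le_iff₀ hδ]
    exact le_max_right _ _
  let P : ℕ → (𝔼 → 𝔽) → Prop := fun n u => ContDiffOn ℝ ∞ u 𝔹 ∧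
    (∀ x ∈ 𝔹, ∀ i j, |g x i j - (δ * ρ ^ n) ^ 2 * unitMetric d i j - gram ((𝔇 u) x) i j|
        ≤ tol d * (δ * ρ ^ n) ^ 2) ∧ (∀ x ∈ 𝔹, ‖(𝔇 (𝔇 u)) x‖ ≤ μ * Θ ^ n)
  have hnext : ∀ n, ∀ w : {w // P n w}, ∃ w' : {w' // P (n + 1) w'},
      (∀ x ∈ 𝔹, ‖(𝔇 w'.1) x - (𝔇 w.1) x‖ ≤ C * δ * ρ ^ n) ∧
      ∀ x ∈ 𝔹, ‖w'.1 x - w.1 x‖ ≤ C * δ * ρ ^ n := by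
    rintro n ⟨w, hw, hwm, hwD⟩
    have hρn : ρ ^ n ≤ 1 := pow_le_one₀ hρ0.le hρ1.le
    obtain ⟨v, hv, hvm, hvD, hv1, hv0⟩ := hstep (δ * ρ ^ n) (μ * Θ ^ n) w (by positivity)
      ((mul_le_of_le_one_right hδ.le hρn).trans hδ1) (by
        have e : μ * Θ ^ n * (δ * ρ ^ n) = μ * δ * (Θ * ρ) ^ n := by rw [mul_pow]; ring
        rw [e]
        exact hμM.trans (le_mul_of_one_le_right (by positivity) (one_le_pow₀ hΘρ))) hw hwm hwD
    have e1 : (δ * ρ ^ n) ^ 2 / K = (δ * ρ ^ (n + 1)) ^ 2 := by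
      have : (δ * ρ ^ (n + 1)) ^ 2 = (δ * ρ ^ n) ^ 2 * ρ ^ 2 := by ring
      rw [this, hρ2]
      ring
    have e2 : C * K ^ s * (μ * Θ ^ n) = μ * Θ ^ (n + 1) := by
      rw [hΘ, pow_succ]
      ring
    rw [e1] at hvm
    rw [e2] at hvD
    rw [← mul_assoc] at hv1 hv0
    exact ⟨⟨v, hv, hvm, hvD⟩, hv1, hv0⟩
  choose nxt hnxt using hnext
  let W : (n : ℕ) → {w // P n w} := fun n => Nat.rec
    ⟨u, hu, by simpa using hmet, fun x hx => by
      rw [pow_zero, mul_one]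
      exact (hμ' x hx).trans (le_max_left μ' (M / δ))⟩ (fun n w => nxt n w) n
  have hW : ∀ n, W (n + 1) = nxt n (W n) := fun n => rfl
  obtain ⟨v, hv, hvH, hvlim, hv0⟩ := exists_limit (u := fun n => (W n).1) (A := C * δ) (B := μ)
    (ρ := ρ) (Θ := Θ) (α := α) (fun n => (W n).2.1) hμ0.le hρ0 hρ1 (by linarith) hα hα2 hτ
    (fun n => by
      rw [hW]
      exact (hnxt n (W n)).1)
    (fun n => by
      rw [hW]
      exact (hnxt n (W n)).2)
    (fun n => (W n).2.2.2)
  refine ⟨v, hv, hvH, fun x hx i j => ?_, fun x hx => ?_⟩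
  · have h1 : Tendsto (fun n => gram ((𝔇 (W n).1) x) i j) atTop (𝓝 (gram ((𝔇 v) x) i j)) :=
      ((continuous_gram i j).tendsto _).comp (hvlim x hx)
    have hpow : Tendsto (fun n => (δ * ρ ^ n) ^ 2) atTop (𝓝 0) := by
      simpa using ((tendsto_pow_atTop_nhds_zero_of_lt_one hρ0.le hρ1).const_mul δ).pow 2
    have h2 : Tendsto (fun n => |g x i j - (δ * ρ ^ n) ^ 2 * unitMetric d i j
        - gram ((𝔇 (W n).1) x) i j|) atTop (𝓝 |g x i j - 0 * unitMetric d i j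
        - gram ((𝔇 v) x) i j|) :=
      ((tendsto_const_nhds.sub (hpow.mul_const _)).sub h1).abs
    have h3 : Tendsto (fun n => tol d * (δ * ρ ^ n) ^ 2) atTop (𝓝 0) := by
      simpa using hpow.const_mul (tol d)
    have h4 := le_of_tendsto_of_tendsto' h2 h3 fun n => (W n).2.2.1 x hx i j
    rw [zero_mul, sub_zero] at h4
    have := abs_nonpos_iff.1 h4
    linarith
  · have h1 := hv0 x hx
    have e : C * δ / (1 - ρ) = C / (1 - ρ) * δ := by ring
    rwa [e] at h1

end Iteration

end NashKuiper

namespace NashKuiper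
open scoped ContDiff RealInnerProductSpace Topology
open Filter

section Decomposition

variable {d : ℕ}

local notation "𝔼" => EuclideanSpace ℝ (Fin d)
local notation "𝔽" => EuclideanSpace ℝ (Fin (d + 1))
local notation "𝔹" => closedBall (0 : EuclideanSpace ℝ (Fin d)) 1
local notation "𝔇" u => fderivWithin ℝ u (closedBall (0 : EuclideanSpace ℝ (Fin d)) 1)

open scoped MatrixOrder in
theorem exists_eq_sum_prim {H : Fin d → Fin d → ℝ} (hsymm : ∀ k l, H k l = H l k)
    (hpos : ∀ w : 𝔼, 0 ≤ quad H w) :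
    ∃ ν : Fin d → 𝔼, ∀ k l, H k l = ∑ i, ν i k * ν i l := by
  have hps : (Matrix.of H).PosSemidef := by
    refine Matrix.PosSemidef.of_dotProduct_mulVec_nonneg (Matrix.IsHermitian.ext fun i j => ?_)
      fun x => ?_
    · simpa using hsymm j i
    · have h := hpos (WithLp.toLp 2 x)
      simp only [quad] at h
      refine h.trans_eq ?_
      simp only [dotProduct, mulVec, Finset.mul_sum, Matrix.of_apply, Pi.star_apply, star_trivial]
      exact Finset.sum_congr rfl fun i _ => Finset.sum_congr rfl fun j _ => by ring
  obtain ⟨Q, hQ⟩ := CStarAlgebra.nonneg_iff_eq_star_mul_self.1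
    (Matrix.nonneg_iff_posSemidef.2 hps)
  refine ⟨fun i => WithLp.toLp 2 (Q i), fun k l => ?_⟩
  have := congrFun (congrFun hQ k) l
  simpa [Matrix.mul_apply, Matrix.star_apply] using this

theorem exists_primitive_decomposition {h : 𝔼 → Fin d → Fin d → ℝ}
    (hcont : ∀ k l, ContinuousOn (fun x => h x k l) 𝔹) (hsymm : ∀ x ∈ 𝔹, ∀ k l, h x k l = h x l k)
    (hpos : ∀ x ∈ 𝔹, ∀ w : 𝔼, 0 ≤ quad (h x) w) {η : ℝ} (hη : 0 < η) :
    ∃ (ι : Type) (_ : Fintype ι) (ν : ι → 𝔼) (b : ι → 𝔼 → ℝ), (∀ i, ContDiffOn ℝ ∞ (b i) 𝔹) ∧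
      ∀ x ∈ 𝔹, ∀ k l, |h x k l - ∑ i, b i x ^ 2 * (ν i k * ν i l)| ≤ η := by
  have hc : ContinuousOn h 𝔹 := continuousOn_pi.2 fun k => continuousOn_pi.2 fun l => hcont k l
  have hcomp : IsCompact 𝔹 := isCompact_closedBall _ _
  obtain ⟨ρ, hρ, hunif⟩ := Metric.uniformContinuousOn_iff_le.1
    (hcomp.uniformContinuousOn_of_continuous hc) η hη
  obtain ⟨t, ht, htc⟩ := hcomp.elim_nhds_subcover (fun x => ball x (ρ / 2))
    fun x _ => ball_mem_nhds x (by positivity)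
  choose! ν hν using fun x (hx : x ∈ 𝔹) => exists_eq_sum_prim (hsymm x hx) (hpos x hx)
  let f : ∀ c : 𝔼, ContDiffBump c := fun c => ⟨ρ / 2, ρ, by positivity, by linarith⟩
  have hfs : ∀ c, ContDiff ℝ ∞ (f c) := fun c => (f c).contDiff
  set S : 𝔼 → ℝ := fun x => ∑ c ∈ t, f c x ^ 2 with hS
  have hSs : ContDiff ℝ ∞ S := ContDiff.sum fun c _ => (hfs c).pow 2
  have hSpos : ∀ x ∈ 𝔹, 0 < S x := fun x hx => by
    obtain ⟨c, hct, hxc⟩ := mem_iUnion₂.1 (htc hx)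
    have h1 : f c x = 1 := (f c).one_of_mem_closedBall (ball_subset_closedBall hxc)
    have h2 : f c x ^ 2 ≤ S x :=
      Finset.single_le_sum (f := fun c => f c x ^ 2) (fun c _ => sq_nonneg _) hct
    rw [h1] at h2
    linarith
  refine ⟨t × Fin d, inferInstance, fun p => ν p.1 p.2, fun p x => f p.1 x / √(S x), fun p => ?_,
    fun x hx k l => ?_⟩
  · exact (hfs _).contDiffOn.div (hSs.contDiffOn.sqrt fun x hx => (hSpos x hx).ne') fun x hx =>
      (Real.sqrt_pos.2 (hSpos x hx)).ne'
  · have hS0 := hSpos x hx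
    have hsum : ∑ p : t × Fin d, (f p.1 x / √(S x)) ^ 2 * (ν p.1 p.2 k * ν p.1 p.2 l)
        = ∑ c ∈ t, f c x ^ 2 / S x * h c k l := by
      rw [Fintype.sum_prod_type, ← Finset.sum_coe_sort t]
      refine Finset.sum_congr rfl fun c _ => ?_
      rw [hν c (ht c c.2) k l, Finset.mul_sum]
      refine Finset.sum_congr rfl fun i _ => ?_
      rw [div_pow, Real.sq_sqrt hS0.le]
    have hone : ∑ c ∈ t, f c x ^ 2 / S x = 1 := by
      rw [← Finset.sum_div]
      exact div_self hS0.ne'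
    rw [hsum]
    have : h x k l - ∑ c ∈ t, f c x ^ 2 / S x * h c k l
        = ∑ c ∈ t, f c x ^ 2 / S x * (h x k l - h c k l) := by
      simp only [mul_sub, Finset.sum_sub_distrib, ← Finset.sum_mul, hone, one_mul]
    rw [this]
    refine (Finset.abs_sum_le_sum_abs _ _).trans ?_
    calc ∑ c ∈ t, |f c x ^ 2 / S x * (h x k l - h c k l)| ≤ ∑ c ∈ t, f c x ^ 2 / S x * η := by
          refine Finset.sum_le_sum fun c hct => ?_
          rw [abs_mul, abs_of_nonneg (by positivity)]
          by_cases hxc : dist x c ≤ ρ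
          · gcongr
            have h1 := hunif x hx c (ht c hct) hxc
            exact ((dist_le_pi_dist (h x k) (h c k) l).trans (dist_le_pi_dist (h x) (h c) k)).trans h1
          · have : f c x = 0 := (f c).zero_of_le_dist (not_le.1 hxc).le
            simp [this]
      _ = η := by rw [← Finset.sum_mul, hone, one_mul]

end Decomposition

end NashKuiper

namespace NashKuiper
open scoped ContDiff RealInnerProductSpace Topology
open Filter

section NearIsometry

variable {d : ℕ}

local notation "𝔼" => EuclideanSpace ℝ (Fin d)
local notation "𝔽" => EuclideanSpace ℝ (Fin (d + 1))
local notation "𝔹" => closedBall (0 : EuclideanSpace ℝ (Fin d)) 1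
local notation "𝔇" u => fderivWithin ℝ u (closedBall (0 : EuclideanSpace ℝ (Fin d)) 1)

theorem exists_iteratedFDerivWithin_le {V : Type} [NormedAddCommGroup V] [NormedSpace ℝ V]
    {f : 𝔼 → V} (hf : ContDiffOn ℝ ∞ f 𝔹) (N : ℕ) :
    ∃ M : ℝ, 0 ≤ M ∧ ∀ j ≤ N, ∀ x ∈ 𝔹, ‖iteratedFDerivWithin ℝ j f 𝔹 x‖ ≤ M := by
  choose M hM using fun j : ℕ => (isCompact_closedBall (0 : 𝔼) 1).exists_bound_of_continuousOn
    (hf.continuousOn_iteratedFDerivWithin (m := j) (by exact_mod_cast le_top) uniqueDiffOn_unitBall)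
  have h00 : (0 : 𝔼) ∈ 𝔹 := by simp
  have hM0 : ∀ j, 0 ≤ M j := fun j => (norm_nonneg _).trans (hM j 0 h00)
  refine ⟨∑ j ∈ Finset.range (N + 1), M j, Finset.sum_nonneg fun j _ => hM0 j, fun j hj x hx =>
    (hM j x hx).trans (Finset.single_le_sum (fun j _ => hM0 j) (Finset.mem_range.2 (by omega)))⟩

theorem inner_single_eq (ν : 𝔼) (k : Fin d) : ⟪ν, EuclideanSpace.single k (1 : ℝ)⟫ = ν k := by
  simp [EuclideanSpace.inner_single_right]

theorem exists_add_primitive (ν : 𝔼) {c : ℝ} (hc : 0 < c) (C : ℝ) {B : ℝ} (hB : 0 ≤ B) :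
    ∃ E : ℝ, 0 ≤ E ∧ ∀ (δ η : ℝ) (u : 𝔼 → 𝔽) (b : 𝔼 → ℝ), 0 < δ → δ ≤ 1 → 0 < η →
      ContDiffOn ℝ ∞ u 𝔹 → ContDiffOn ℝ ∞ b 𝔹 → (∀ x ∈ 𝔹, |b x| ≤ B) →
      (∀ x ∈ 𝔹, (𝔇 u) x ∈ bilipSet d c C) →
      ∃ v : 𝔼 → 𝔽, ContDiffOn ℝ ∞ v 𝔹 ∧ (∀ x ∈ 𝔹, ‖v x - u x‖ ≤ η) ∧
        ∀ x ∈ 𝔹, ∀ k l,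
          |gram ((𝔇 v) x) k l - gram ((𝔇 u) x) k l - δ ^ 2 * b x ^ 2 * (ν k * ν l)| ≤ E * δ ^ 4 := by
  obtain ⟨E, hE0, hE⟩ := exists_step ν (isCompact_bilipSet c C) (bilipSet_subset_frameSet hc C)
    (B + 1) (by positivity) 0
  refine ⟨2 * E, by positivity, fun δ η u b hδ hδ1 hη hu hb hbB huK => ?_⟩
  have hDDu := contDiffOn_fderivWithin_unitBall (contDiffOn_fderivWithin_unitBall hu)
  obtain ⟨M, hM0, hM⟩ := exists_iteratedFDerivWithin_le hDDu 1
  obtain ⟨M', hM'0, hM'⟩ := exists_iteratedFDerivWithin_le hb 2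
  set r : ℝ := 1 + M / δ + M' + E / η with hr
  have hr1 : 1 ≤ r := by
    have : 0 ≤ M / δ + M' + E / η := by positivity
    rw [hr]
    linarith
  have hrM : M ≤ δ * r := by
    have : M / δ ≤ r := by
      have : 0 ≤ M' + E / η := by positivity
      rw [hr]
      linarith
    rw [div_le_iff₀ hδ] at this
    linarith
  have hrM' : M' ≤ r := by
    have : 0 ≤ M / δ + E / η := by positivity
    rw [hr]
    linarith
  have hrE : E ≤ η * r := by
    have : E / η ≤ r := by
      have : 0 ≤ M / δ + M' := by positivity
      rw [hr]
      linarith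
    rw [div_le_iff₀ hη] at this
    linarith
  have hr0 : 0 < r := by linarith
  have hju : ∀ x ∈ 𝔹, JetBound 𝔹 (𝔇 (𝔇 u)) ((B + 1) * δ * r) r (0 + 1) x := by
    intro x hx j hj
    have h1 : M ≤ (B + 1) * δ * r := by nlinarith [mul_pos hδ hr0]
    calc _ ≤ M := hM j (by omega) x hx
      _ ≤ (B + 1) * δ * r * 1 := by linarith
      _ ≤ (B + 1) * δ * r * r ^ j := by
        gcongr
        exact one_le_pow₀ hr1
  have hja : ∀ x ∈ 𝔹, JetBound 𝔹 (fun x => δ • b x) ((B + 1) * δ) r (0 + 2) x := by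
    intro x hx
    have hjb : JetBound 𝔹 b (B + 1) r 2 x := by
      intro j hj
      rcases Nat.eq_zero_or_pos j with rfl | hj0
      · rw [norm_iteratedFDerivWithin_zero, pow_zero, mul_one]
        exact (hbB x hx).trans (by linarith)
      · calc _ ≤ M' := hM' j hj x hx
          _ ≤ r := hrM'
          _ ≤ r ^ j := le_self_pow₀ hr1 hj0.ne'
          _ ≤ (B + 1) * r ^ j := le_mul_of_one_le_left (by positivity) (by linarith)
    have := hjb.const_smul δ hb uniqueDiffOn_unitBall hx
    rw [abs_of_nonneg hδ.le, mul_comm δ] at this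
    exact this
  have hΛ : 1 ≤ 1 / δ ^ 2 := by
    rw [le_div_iff₀ (by positivity), one_mul]
    exact pow_le_one₀ hδ.le hδ1
  obtain ⟨v, hv, -, -, hvu, hvg⟩ := hE δ r (1 / δ ^ 2) u (fun x => δ • b x) hδ hδ1 hr0 hΛ hu
    (hb.const_smul δ) huK hju hja
  refine ⟨v, hv, fun x hx => (hvu x hx).trans ?_, fun x hx k l => ?_⟩
  · rw [div_le_iff₀ (by positivity)]
    calc E * δ ≤ E * 1 := by gcongr
      _ ≤ η * (1 * r) := by linarith
      _ ≤ η * (1 / δ ^ 2 * r) := by gcongr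
  · have h := hvg x hx (EuclideanSpace.single k 1) (EuclideanSpace.single l 1) (by simp) (by simp)
    rw [inner_single_eq, inner_single_eq, smul_eq_mul, mul_pow] at h
    refine h.trans_eq ?_
    field_simp
    ring

theorem quad_sum_prim {ι : Type} (t : Finset ι) (s : ι → ℝ) (ν : ι → 𝔼) (w : 𝔼) :
    quad (fun k l => ∑ i ∈ t, s i * (ν i k * ν i l)) w = ∑ i ∈ t, s i * ⟪ν i, w⟫ ^ 2 := by
  simp only [quad, Finset.mul_sum]
  rw [Finset.sum_congr rfl fun k _ => Finset.sum_comm, Finset.sum_comm]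
  refine Finset.sum_congr rfl fun i _ => ?_
  rw [PiLp.inner_apply, sq, Finset.sum_mul_sum, Finset.mul_sum]
  refine Finset.sum_congr rfl fun k _ => ?_
  rw [Finset.mul_sum]
  refine Finset.sum_congr rfl fun l _ => ?_
  simp
  ring

/-- A smooth immersion which is (weakly) short for a continuous metric is uniformly close to a
smooth immersion which is almost isometric. -/
theorem exists_near_isometry {γ : 𝔼 → Fin d → Fin d → ℝ}
    (hcont : ∀ k l, ContinuousOn (fun x => γ x k l) 𝔹) (hsymm : ∀ x ∈ 𝔹, ∀ k l, γ x k l = γ x l k)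
    {w : 𝔼 → 𝔽} (hw : ContDiffOn ℝ ∞ w 𝔹) {c C : ℝ} (hc : 0 < c)
    (hwK : ∀ x ∈ 𝔹, (𝔇 w) x ∈ bilipSet d c C)
    (hshort : ∀ x ∈ 𝔹, ∀ ζ, ‖(𝔇 w) x ζ‖ ^ 2 ≤ quad (γ x) ζ) {η : ℝ} (hη : 0 < η) :
    ∃ v : 𝔼 → 𝔽, ContDiffOn ℝ ∞ v 𝔹 ∧ (∀ x ∈ 𝔹, ‖v x - w x‖ ≤ η) ∧
      ∀ x ∈ 𝔹, ∀ k l, |γ x k l - gram ((𝔇 v) x) k l| ≤ η := by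
  classical
  have h00 : (0 : 𝔼) ∈ 𝔹 := by simp
  have hC0 : 0 ≤ C := (norm_nonneg _).trans (hwK 0 h00).1
  obtain ⟨ι, _, ν, b, hb, hdec⟩ := exists_primitive_decomposition
    (h := fun x k l => γ x k l - gram ((𝔇 w) x) k l)
    (fun k l => (hcont k l).sub ((continuous_gram k l).comp_continuousOn
      (contDiffOn_fderivWithin_unitBall hw).continuousOn))
    (fun x hx k l => by rw [hsymm x hx k l, gram_comm])
    (fun x hx ζ => by rw [quad_sub, quad_gram]; linarith [hshort x hx ζ]) (half_pos hη)
  choose B hB using fun i => (isCompact_closedBall (0 : 𝔼) 1).exists_bound_of_continuousOn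
    (hb i).continuousOn
  have hB0 : ∀ i, 0 ≤ B i := fun i => (norm_nonneg _).trans (hB i 0 h00)
  set D : ℝ := ∑ i, B i ^ 2 * ‖ν i‖ ^ 2 with hD
  have hD0 : 0 ≤ D := by positivity
  choose E hE0 hE using fun i =>
    exists_add_primitive (ν i) (half_pos hc) (C + D + 1) (hB0 i)
  set T : ℝ := ∑ i, E i with hT
  have hT0 : 0 ≤ T := Finset.sum_nonneg fun i _ => hE0 i
  have hET : ∀ i, E i ≤ T := fun i => Finset.single_le_sum (fun i _ => hE0 i) (Finset.mem_univ i)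
  set m : ℝ := ((Fintype.card ι : ℕ) : ℝ) with hm
  have hm0 : 0 ≤ m := by positivity
  have hc2 : 0 < min (c ^ 2 / 2) 1 := by positivity
  obtain ⟨M, hM⟩ := exists_nat_gt
    (1 + m * T / (η / 2) + d * (m * T) / min (c ^ 2 / 2) 1)
  have hM1 : (1 : ℝ) ≤ M := by
    have : 0 ≤ m * T / (η / 2) + d * (m * T) / min (c ^ 2 / 2) 1 := by positivity
    linarith
  have hM0 : (0 : ℝ) < M := by linarith
  have hMη : m * T / M ≤ η / 2 := by
    rw [div_le_iff₀ hM0, ← div_le_iff₀' (half_pos hη)]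
    have : 0 ≤ d * (m * T) / min (c ^ 2 / 2) 1 := by positivity
    linarith
  have hMc : d * (m * T / M) ≤ min (c ^ 2 / 2) 1 := by
    rw [← mul_div_assoc, div_le_iff₀ hM0, ← div_le_iff₀' hc2]
    have : 0 ≤ m * T / (η / 2) := by positivity
    linarith
  set δ : ℝ := (√M)⁻¹ with hδ
  have hδ0 : 0 < δ := by positivity
  have hδ1 : δ ≤ 1 := inv_le_one_of_one_le₀ (Real.one_le_sqrt.2 hM1)
  have hδ2 : δ ^ 2 = 1 / M := by rw [hδ, inv_pow, Real.sq_sqrt hM0.le, one_div]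
  have hδ4 : δ ^ 4 = 1 / M ^ 2 := by
    rw [show δ ^ 4 = (δ ^ 2) ^ 2 by ring, hδ2, div_pow, one_pow]
  set η' : ℝ := η / (m * M + 1) with hη'
  have hη'0 : 0 < η' := by positivity
  have hcard : ∀ t : Finset (ι × Fin M), (t.card : ℝ) ≤ m * M := fun t => by
    have := Finset.card_le_univ t
    rw [Fintype.card_prod, Fintype.card_fin] at this
    rw [hm]
    exact_mod_cast this
  have herr : ∀ t : Finset (ι × Fin M), t.card * T * δ ^ 4 ≤ m * T / M := fun t => by
    calc t.card * T * δ ^ 4 ≤ m * M * T * δ ^ 4 := by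
          gcongr
          exact hcard t
      _ = m * T / M := by
          rw [hδ4]
          field_simp
  have hfull : ∀ f : ι → ℝ, ∑ p : ι × Fin M, δ ^ 2 * f p.1 = ∑ i, f i := fun f => by
    rw [Fintype.sum_prod_type]
    refine Finset.sum_congr rfl fun i _ => ?_
    simp only [Finset.sum_const, Finset.card_univ, Fintype.card_fin, nsmul_eq_mul, hδ2]
    field_simp
  have key : ∀ t : Finset (ι × Fin M), ∃ v : 𝔼 → 𝔽, ContDiffOn ℝ ∞ v 𝔹 ∧
      (∀ x ∈ 𝔹, ‖v x - w x‖ ≤ t.card * η') ∧ ∀ x ∈ 𝔹, ∀ k l,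
        |gram ((𝔇 w) x) k l + ∑ p ∈ t, δ ^ 2 * b p.1 x ^ 2 * (ν p.1 k * ν p.1 l)
          - gram ((𝔇 v) x) k l| ≤ t.card * T * δ ^ 4 := by
    intro t
    induction t using Finset.induction_on with
    | empty => exact ⟨w, hw, by simp, by simp⟩
    | insert p t hp ih =>
      obtain ⟨v, hv, hvw, hvg⟩ := ih
      have hvK : ∀ x ∈ 𝔹, (𝔇 v) x ∈ bilipSet d (c / 2) (C + D + 1) := fun x hx => by
        have hq : ∀ ζ, quad (fun k l => gram ((𝔇 w) x) k l
            + ∑ p ∈ t, δ ^ 2 * b p.1 x ^ 2 * (ν p.1 k * ν p.1 l)) ζ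
            = ‖(𝔇 w) x ζ‖ ^ 2 + ∑ p ∈ t, δ ^ 2 * b p.1 x ^ 2 * ⟪ν p.1, ζ⟫ ^ 2 := fun ζ => by
          rw [quad_add, quad_gram]
          exact congrArg _ (quad_sum_prim t (fun p => δ ^ 2 * b p.1 x ^ 2) (fun p => ν p.1) ζ)
        refine mem_bilipSet_of_gram (e := m * T / M) (a := c ^ 2) (b := C ^ 2 + D) (by positivity)
          (fun k l => (hvg x hx k l).trans (herr t)) (fun ζ => ?_) (fun ζ => ?_) (by positivity)
          ?_ ?_
        · rw [hq, ← mul_pow]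
          have h1 : (c * ‖ζ‖) ^ 2 ≤ ‖(𝔇 w) x ζ‖ ^ 2 := by
            gcongr
            exact (hwK x hx).2 ζ
          have h2 : 0 ≤ ∑ p ∈ t, δ ^ 2 * b p.1 x ^ 2 * ⟪ν p.1, ζ⟫ ^ 2 := by positivity
          linarith
        · rw [hq, add_mul, ← mul_pow]
          have h1 : ‖(𝔇 w) x ζ‖ ^ 2 ≤ (C * ‖ζ‖) ^ 2 := by
            gcongr
            exact ((𝔇 w) x).le_of_opNorm_le (hwK x hx).1 ζ
          have h2 : ∑ p ∈ t, δ ^ 2 * b p.1 x ^ 2 * ⟪ν p.1, ζ⟫ ^ 2 ≤ D * ‖ζ‖ ^ 2 := by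
            calc ∑ p ∈ t, δ ^ 2 * b p.1 x ^ 2 * ⟪ν p.1, ζ⟫ ^ 2
                ≤ ∑ p : ι × Fin M, δ ^ 2 * b p.1 x ^ 2 * ⟪ν p.1, ζ⟫ ^ 2 :=
                  Finset.sum_le_sum_of_subset_of_nonneg (Finset.subset_univ _)
                    fun _ _ _ => by positivity
              _ = ∑ i, b i x ^ 2 * ⟪ν i, ζ⟫ ^ 2 := by
                  rw [← hfull]
                  exact Finset.sum_congr rfl fun p _ => by ring
              _ ≤ ∑ i, B i ^ 2 * ‖ν i‖ ^ 2 * ‖ζ‖ ^ 2 := by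
                  refine Finset.sum_le_sum fun i _ => ?_
                  rw [mul_assoc, ← mul_pow ‖ν i‖]
                  have h3 : b i x ^ 2 ≤ B i ^ 2 := sq_le_sq' (abs_le.1 (hB i x hx)).1
                    (abs_le.1 (hB i x hx)).2
                  have h4 : ⟪ν i, ζ⟫ ^ 2 ≤ (‖ν i‖ * ‖ζ‖) ^ 2 :=
                    sq_le_sq' (abs_le.1 (abs_real_inner_le_norm _ _)).1
                      (abs_le.1 (abs_real_inner_le_norm _ _)).2
                  gcongr
              _ = D * ‖ζ‖ ^ 2 := by rw [hD, Finset.sum_mul]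
          linarith
        · have := hMc.trans (min_le_left _ _)
          nlinarith [sq_nonneg c]
        · have := hMc.trans (min_le_right _ _)
          nlinarith [mul_nonneg hC0 hD0]
      obtain ⟨v', hv', hvv', hvg'⟩ := hE p.1 δ η' v (b p.1) hδ0 hδ1 hη'0 hv (hb p.1)
        (hB p.1) hvK
      refine ⟨v', hv', fun x hx => ?_, fun x hx k l => ?_⟩
      · rw [Finset.card_insert_of_notMem hp]
        push_cast
        have := norm_sub_le_norm_sub_add_norm_sub (v' x) (v x) (w x)
        linarith [hvv' x hx, hvw x hx]
      · rw [Finset.card_insert_of_notMem hp, Finset.sum_insert hp]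
        push_cast
        have h1 := abs_le.1 (hvg x hx k l)
        have h2 := abs_le.1 (hvg' x hx k l)
        have h3 : E p.1 * δ ^ 4 ≤ T * δ ^ 4 := by
          gcongr
          exact hET _
        rw [abs_le]
        constructor <;> linarith [h1.1, h1.2, h2.1, h2.2]
  obtain ⟨v, hv, hvw, hvg⟩ := key Finset.univ
  refine ⟨v, hv, fun x hx => (hvw x hx).trans ?_, fun x hx k l => ?_⟩
  · have := hcard Finset.univ
    rw [hη', ← mul_div_assoc, div_le_iff₀ (by positivity)]
    nlinarith
  · have h1 := abs_le.1 ((hvg x hx k l).trans ((herr _).trans hMη))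
    have h2 := abs_le.1 (hdec x hx k l)
    have h3 : ∑ p : ι × Fin M, δ ^ 2 * b p.1 x ^ 2 * (ν p.1 k * ν p.1 l)
        = ∑ i, b i x ^ 2 * (ν i k * ν i l) := by
      rw [← hfull]
      exact Finset.sum_congr rfl fun p _ => by ring
    rw [h3] at h1
    rw [abs_le]
    constructor <;> linarith [h1.1, h1.2, h2.1, h2.2]

end NearIsometry

end NashKuiper

namespace NashKuiper
open scoped ContDiff RealInnerProductSpace Topology
open Filter

section Initialization

variable {d : ℕ}

local notation "𝔼" => EuclideanSpace ℝ (Fin d)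
local notation "𝔽" => EuclideanSpace ℝ (Fin (d + 1))
local notation "𝔹" => closedBall (0 : EuclideanSpace ℝ (Fin d)) 1
local notation "𝔇" u => fderivWithin ℝ u (closedBall (0 : EuclideanSpace ℝ (Fin d)) 1)

theorem exists_smooth_approx {u : 𝔼 → 𝔽} (hu : ContDiffOn ℝ 1 u 𝔹) {σ : ℝ} (hσ : 0 < σ) :
    ∃ v : 𝔼 → 𝔽, ContDiffOn ℝ ∞ v 𝔹 ∧ (∀ x ∈ 𝔹, ‖v x - u x‖ ≤ σ) ∧
      ∀ x ∈ 𝔹, ‖(𝔇 v) x - (𝔇 u) x‖ ≤ σ := by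
  have hcomp : IsCompact 𝔹 := isCompact_closedBall _ _
  have hDu : ContinuousOn (𝔇 u) 𝔹 := hu.continuousOn_fderivWithin uniqueDiffOn_unitBall le_rfl
  obtain ⟨ρ, hρ, h1⟩ := Metric.uniformContinuousOn_iff_le.1
    (hcomp.uniformContinuousOn_of_continuous hu.continuousOn) σ hσ
  obtain ⟨ρ', hρ', h2⟩ := Metric.uniformContinuousOn_iff_le.1
    (hcomp.uniformContinuousOn_of_continuous hDu) (σ / 2) (half_pos hσ)
  obtain ⟨K, hK⟩ := hcomp.exists_bound_of_continuousOn hDu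
  have h00 : (0 : 𝔼) ∈ 𝔹 := by simp
  have hK0 : 0 ≤ K := (norm_nonneg _).trans (hK 0 h00)
  set ℓ : ℝ := min 1 (min (min (ρ / 2) (ρ' / 2)) (σ / 2 / (K + σ / 2))) with hℓ
  have hℓ0 : 0 < ℓ := by positivity
  have hℓ1 : ℓ ≤ 1 := min_le_left _ _
  have hℓρ : 2 * ℓ ≤ ρ := by
    have : ℓ ≤ ρ / 2 := (min_le_right _ _).trans ((min_le_left _ _).trans (min_le_left _ _))
    linarith
  have hℓρ' : 2 * ℓ ≤ ρ' := by
    have : ℓ ≤ ρ' / 2 := (min_le_right _ _).trans ((min_le_left _ _).trans (min_le_right _ _))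
    linarith
  have hℓK : ℓ * (K + σ / 2) ≤ σ / 2 := by
    have : ℓ ≤ σ / 2 / (K + σ / 2) := (min_le_right _ _).trans (min_le_right _ _)
    rwa [le_div_iff₀ (by positivity)] at this
  refine ⟨moll ℓ u, (contDiff_moll hu.continuousOn hℓ0).contDiffOn, fun x hx => ?_, fun x hx => ?_⟩
  · refine norm_moll_sub_le hℓ0 hℓ1 hu.continuousOn hx fun z hz hzx => ?_
    rw [← dist_eq_norm]
    exact h1 z hz x hx (hzx.trans hℓρ)
  · rw [(hasFDerivWithinAt_moll hℓ0 hℓ1 hu hx).fderivWithin (uniqueDiffOn_unitBall x hx)]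
    have h3 : ‖moll ℓ (𝔇 u) x - (𝔇 u) x‖ ≤ σ / 2 :=
      norm_moll_sub_le hℓ0 hℓ1 hDu hx fun z hz hzx => by
        rw [← dist_eq_norm]
        exact h2 z hz x hx (hzx.trans hℓρ')
    have h4 : ‖moll ℓ (𝔇 u) x‖ ≤ K + σ / 2 := by
      have := norm_le_norm_add_norm_sub' (moll ℓ (𝔇 u) x) ((𝔇 u) x)
      linarith [hK x hx]
    have h5 : (1 - ℓ) • moll ℓ (𝔇 u) x - (𝔇 u) x
        = (moll ℓ (𝔇 u) x - (𝔇 u) x) - ℓ • moll ℓ (𝔇 u) x := by module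
    rw [h5]
    refine (norm_sub_le _ _).trans ?_
    rw [norm_smul, Real.norm_of_nonneg hℓ0.le]
    have : ℓ * ‖moll ℓ (𝔇 u) x‖ ≤ ℓ * (K + σ / 2) := by gcongr
    linarith

theorem nonempty_linearIsometry_succ : Nonempty (𝔼 →ₗᵢ[ℝ] 𝔽) := by
  set B := EuclideanSpace.basisFun (Fin d) ℝ
  set f : 𝔼 →ₗ[ℝ] 𝔽 := B.toBasis.constr ℝ fun i => EuclideanSpace.single i.castSucc (1 : ℝ)
  refine ⟨f.isometryOfOrthonormal (v := B.toBasis) (by simp) ?_⟩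
  have : f ∘ B.toBasis = (EuclideanSpace.basisFun (Fin (d + 1)) ℝ) ∘ Fin.castSucc := by
    ext i : 1
    simp [f]
  rw [this]
  exact (EuclideanSpace.basisFun (Fin (d + 1)) ℝ).orthonormal.comp _ (Fin.castSucc_injective d)

theorem growth_estimate {a a' p n s τ θ : ℝ} (ha : 0 ≤ a) (hn : 0 ≤ n) (hτ : 0 < τ)
    (hs : 2 * τ ≤ s) (hθ0 : 0 ≤ θ) (hθ1 : θ ≤ 1) (h : |s ^ 2 * n ^ 2 - a ^ 2| ≤ τ ^ 2 * (1 - θ) * n ^ 2)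
    (hp : p ≤ θ * n) (haa' : |a' - a| ≤ τ * p) : a' ≤ (s + τ) * n ∧ τ / 2 * n ≤ a' := by
  have h1 := abs_le.1 h
  have h2 := abs_le.1 haa'
  have hpτ : τ * p ≤ τ * (θ * n) := by gcongr
  have hn2 : 0 ≤ n ^ 2 := by positivity
  have hup : a ≤ (s + τ * (1 - θ)) * n := by
    have hnn : 0 ≤ s + τ * (1 - θ) := by nlinarith [mul_nonneg hτ.le (sub_nonneg.2 hθ1)]
    refine (le_abs_self _).trans (abs_le_of_sq_le_sq ?_ (mul_nonneg hnn hn))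
    have : s ^ 2 + τ ^ 2 * (1 - θ) ≤ (s + τ * (1 - θ)) ^ 2 := by
      nlinarith [mul_nonneg hτ.le (sub_nonneg.2 hθ1), sq_nonneg (τ * (1 - θ)),
        mul_nonneg (mul_nonneg hτ.le (sub_nonneg.2 hθ1)) (sub_nonneg.2 hs)]
    rw [mul_pow]
    nlinarith [mul_le_mul_of_nonneg_right this hn2]
  have hlo : (s - τ / 2) * n ≤ a := by
    refine (le_abs_self _).trans (abs_le_of_sq_le_sq ?_ ha)
    have : (s - τ / 2) ^ 2 ≤ s ^ 2 - τ ^ 2 * (1 - θ) := by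
      nlinarith [mul_nonneg hτ.le (sub_nonneg.2 hs), mul_nonneg (sq_nonneg τ) hθ0, sq_nonneg τ]
    rw [mul_pow]
    nlinarith [mul_le_mul_of_nonneg_right this hn2]
  have hθn : τ * (θ * n) ≤ τ * n := by
    have := mul_le_mul_of_nonneg_right hθ1 hn
    rw [one_mul] at this
    gcongr
  constructor
  · nlinarith [h2.2]
  · nlinarith [h2.1, mul_nonneg (sub_nonneg.2 hs) hn]

/-- A short smooth map, possibly not an immersion, is uniformly close to a smooth immersion which
is almost isometric: one adds the map in small pieces to a short immersion of small diameter,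
restoring almost isometry for a growing multiple of the metric after each piece. -/
theorem exists_near_isometry_of_smooth_short {γ : 𝔼 → Fin d → Fin d → ℝ}
    (hcont : ∀ k l, ContinuousOn (fun x => γ x k l) 𝔹) (hsymm : ∀ x ∈ 𝔹, ∀ k l, γ x k l = γ x l k)
    {c b : ℝ} (hc : 0 < c) (hγc : ∀ x ∈ 𝔹, ∀ ζ, c ^ 2 * ‖ζ‖ ^ 2 ≤ quad (γ x) ζ) (hb : 0 ≤ b)
    (hγb : ∀ x ∈ 𝔹, ∀ ζ, quad (γ x) ζ ≤ b ^ 2 * ‖ζ‖ ^ 2)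
    {u : 𝔼 → 𝔽} (hu : ContDiffOn ℝ ∞ u 𝔹) {θ : ℝ} (hθ0 : 0 ≤ θ) (hθ1 : θ < 1)
    (hshort : ∀ x ∈ 𝔹, ∀ ζ, ‖(𝔇 u) x ζ‖ ≤ θ * √(quad (γ x) ζ)) {η : ℝ} (hη : 0 < η) :
    ∃ v : 𝔼 → 𝔽, ContDiffOn ℝ ∞ v 𝔹 ∧ (∀ x ∈ 𝔹, ‖v x - u x‖ ≤ η) ∧
      ∀ x ∈ 𝔹, ∀ k l, |γ x k l - gram ((𝔇 v) x) k l| ≤ η := by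
  have h00 : (0 : 𝔼) ∈ 𝔹 := by simp
  obtain ⟨U, hU⟩ := (isCompact_closedBall (0 : 𝔼) 1).exists_bound_of_continuousOn hu.continuousOn
  have hU0 : 0 ≤ U := (norm_nonneg _).trans (hU 0 h00)
  obtain ⟨m, hm⟩ := exists_nat_gt (4 * (c + U) / η)
  set τ : ℝ := 1 / (m + 2) with hτ
  have hτ0 : 0 < τ := by positivity
  have hτm : τ * (m + 2) = 1 := by
    rw [hτ]
    field_simp
  have hτη : 4 * (c + U) * τ ≤ η := by
    rw [div_lt_iff₀ hη] at hm
    rw [hτ, mul_one_div, div_le_iff₀ (by positivity)]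
    nlinarith
  have hθ' : 0 < 1 - θ := by linarith
  set ξ : ℝ := min (min η (τ * η / 4)) (c ^ 2 * τ ^ 2 * (1 - θ) / (d + 1)) with hξ
  have hξ0 : 0 < ξ := by positivity
  have hξη : ξ ≤ η := (min_le_left _ _).trans (min_le_left _ _)
  have hξτ : ξ ≤ τ * η / 4 := (min_le_left _ _).trans (min_le_right _ _)
  have hdξ : d * ξ ≤ τ ^ 2 * (1 - θ) * c ^ 2 := by
    have : ξ ≤ c ^ 2 * τ ^ 2 * (1 - θ) / (d + 1) := min_le_right _ _
    rw [le_div_iff₀ (by positivity)] at this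
    nlinarith
  set s : ℕ → ℝ := fun k => (2 + k) * τ with hs
  have hs2 : ∀ k, 2 * τ ≤ s k := fun k => by
    simp only [hs]
    gcongr
    linarith [(Nat.cast_nonneg k : (0 : ℝ) ≤ k)]
  have hq0 : ∀ x ∈ 𝔹, ∀ ζ, 0 ≤ quad (γ x) ζ := fun x hx ζ =>
    (by positivity : (0 : ℝ) ≤ c ^ 2 * ‖ζ‖ ^ 2).trans (hγc x hx ζ)
  have hqc : ∀ x ∈ 𝔹, ∀ ζ, c * ‖ζ‖ ≤ √(quad (γ x) ζ) := fun x hx ζ => by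
    refine Real.le_sqrt_of_sq_le ?_
    rw [mul_pow]
    exact hγc x hx ζ
  have hqb : ∀ x ∈ 𝔹, ∀ ζ, √(quad (γ x) ζ) ≤ b * ‖ζ‖ := fun x hx ζ => by
    refine Real.sqrt_le_iff.2 ⟨by positivity, ?_⟩
    rw [mul_pow]
    exact hγb x hx ζ
  have hstep : ∀ (a : ℝ) (w : 𝔼 → 𝔽) (c' C' : ℝ), 0 < c' → ContDiffOn ℝ ∞ w 𝔹 →
      (∀ x ∈ 𝔹, (𝔇 w) x ∈ bilipSet d c' C') → 0 ≤ a →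
      (∀ x ∈ 𝔹, ∀ ζ, ‖(𝔇 w) x ζ‖ ≤ a * √(quad (γ x) ζ)) →
      ∃ v : 𝔼 → 𝔽, ContDiffOn ℝ ∞ v 𝔹 ∧ (∀ x ∈ 𝔹, ‖v x - w x‖ ≤ ξ) ∧
        ∀ x ∈ 𝔹, ∀ k l, |a ^ 2 * γ x k l - gram ((𝔇 v) x) k l| ≤ ξ := by
    intro a w c' C' hc' hw hwK ha hwa
    refine exists_near_isometry (γ := fun x k l => a ^ 2 * γ x k l)
      (fun k l => continuousOn_const.mul (hcont k l)) (fun x hx k l => by rw [hsymm x hx k l])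
      hw hc' hwK (fun x hx ζ => ?_) hξ0
    rw [quad_mul, ← Real.sq_sqrt (hq0 x hx ζ), ← mul_pow]
    gcongr
    exact hwa x hx ζ
  have key : ∀ k : ℕ, ∃ w : 𝔼 → 𝔽, ContDiffOn ℝ ∞ w 𝔹 ∧
      (∀ x ∈ 𝔹, ‖w x - (k * τ) • u x‖ ≤ 2 * τ * c + (k + 1) * ξ) ∧
      ∀ x ∈ 𝔹, ∀ i j, |s k ^ 2 * γ x i j - gram ((𝔇 w) x) i j| ≤ ξ := by
    intro k
    induction k with
    | zero =>
      obtain ⟨I⟩ := nonempty_linearIsometry_succ (d := d)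
      set J : 𝔼 →L[ℝ] 𝔽 := (2 * τ * c) • I.toContinuousLinearMap with hJ
      have hJn : ∀ ζ, ‖J ζ‖ = 2 * τ * c * ‖ζ‖ := fun ζ => by
        rw [hJ, _root_.smul_apply, norm_smul, Real.norm_of_nonneg (by positivity)]
        simp
      have hDJ : ∀ x ∈ 𝔹, (𝔇 J) x = J := fun x hx =>
        J.hasFDerivWithinAt.fderivWithin (uniqueDiffOn_unitBall x hx)
      obtain ⟨v, hv, hvJ, hvg⟩ := hstep (s 0) J (2 * τ * c) (2 * τ * c) (by positivity)
        J.contDiff.contDiffOn (fun x hx => by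
          rw [hDJ x hx]
          exact ⟨J.opNorm_le_bound (by positivity) fun ζ => (hJn ζ).le, fun ζ => (hJn ζ).ge⟩)
        (by positivity) (fun x hx ζ => by
          rw [hDJ x hx, hJn]
          have h1 := hqc x hx ζ
          have h2 : s 0 = 2 * τ := by simp [hs]
          rw [h2, mul_assoc]
          gcongr)
      refine ⟨v, hv, fun x hx => ?_, hvg⟩
      have h1 := norm_le_norm_add_norm_sub' (v x) (J x)
      have h2 : ‖J x‖ ≤ 2 * τ * c * 1 := by
        rw [hJn]
        gcongr
        simpa using hx
      simp only [Nat.cast_zero, zero_mul, zero_smul, sub_zero, zero_add, one_mul]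
      linarith [hvJ x hx]
    | succ k ih =>
      obtain ⟨w, hw, hwu, hwg⟩ := ih
      set w' : 𝔼 → 𝔽 := fun x => w x + τ • u x with hw'
      have hw's : ContDiffOn ℝ ∞ w' 𝔹 := hw.add (hu.const_smul τ)
      have hDw' : ∀ x ∈ 𝔹, (𝔇 w') x = (𝔇 w) x + τ • (𝔇 u) x := fun x hx =>
        ((hw.differentiableOn (by simp) x hx).hasFDerivWithinAt.add
          ((hu.differentiableOn (by simp) x hx).hasFDerivWithinAt.const_smul τ)).fderivWithin
          (uniqueDiffOn_unitBall x hx)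
      have hsk : s (k + 1) = s k + τ := by
        simp only [hs]
        push_cast
        ring
      have hest : ∀ x ∈ 𝔹, ∀ ζ, ‖(𝔇 w') x ζ‖ ≤ s (k + 1) * √(quad (γ x) ζ) ∧
          τ / 2 * √(quad (γ x) ζ) ≤ ‖(𝔇 w') x ζ‖ := fun x hx ζ => by
        rw [hsk, hDw' x hx]
        refine growth_estimate (norm_nonneg ((𝔇 w) x ζ)) (Real.sqrt_nonneg _) hτ0 (hs2 k) hθ0 hθ1.le
          ?_ (hshort x hx ζ) ?_
        · rw [Real.sq_sqrt (hq0 x hx ζ)]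
          have h1 := abs_normSq_sub_quad_le hξ0.le (hwg x hx) ζ
          rw [quad_mul] at h1
          refine h1.trans ?_
          have h2 : d * ξ * ‖ζ‖ ^ 2 ≤ τ ^ 2 * (1 - θ) * c ^ 2 * ‖ζ‖ ^ 2 := by gcongr
          have h3 := mul_le_mul_of_nonneg_left (hγc x hx ζ)
            (by positivity : 0 ≤ τ ^ 2 * (1 - θ))
          linarith
        · refine (abs_norm_sub_norm_le _ _).trans_eq ?_
          simp [norm_smul, abs_of_pos hτ0]
      have hsk0 : 0 ≤ s (k + 1) := by positivity
      have hw'K : ∀ x ∈ 𝔹, (𝔇 w') x ∈ bilipSet d (τ / 2 * c) (s (k + 1) * b) := fun x hx => by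
        refine ⟨ContinuousLinearMap.opNorm_le_bound _ (by positivity) fun ζ => ?_, fun ζ => ?_⟩
        · refine (hest x hx ζ).1.trans ?_
          rw [mul_assoc (s (k + 1)) b]
          exact mul_le_mul_of_nonneg_left (hqb x hx ζ) hsk0
        · refine le_trans ?_ (hest x hx ζ).2
          rw [mul_assoc]
          gcongr
          exact hqc x hx ζ
      obtain ⟨v, hv, hvw, hvg⟩ := hstep (s (k + 1)) w' (τ / 2 * c) (s (k + 1) * b) (by positivity)
        hw's hw'K hsk0 (fun x hx ζ => (hest x hx ζ).1)
      refine ⟨v, hv, fun x hx => ?_, hvg⟩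
      have h1 : v x - (((k + 1 : ℕ) : ℝ) * τ) • u x
          = (v x - w' x) + (w x - (k * τ) • u x) := by
        rw [hw']
        push_cast
        module
      rw [h1]
      refine (norm_add_le _ _).trans ?_
      push_cast
      linarith [hvw x hx, hwu x hx]
  obtain ⟨v, hv, hvu, hvg⟩ := key m
  have hsm : s m = 1 := by
    simp only [hs]
    linarith
  refine ⟨v, hv, fun x hx => ?_, fun x hx k l => ?_⟩
  · have h1 : v x - u x = (v x - (m * τ) • u x) - (2 * τ) • u x := by
      have : (1 : ℝ) = m * τ + 2 * τ := by linarith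
      nth_rw 1 [← one_smul ℝ (u x), this]
      module
    rw [h1]
    refine (norm_sub_le _ _).trans ?_
    rw [norm_smul, Real.norm_of_nonneg (by positivity)]
    have h2 : 2 * τ * ‖u x‖ ≤ 2 * τ * U := by
      gcongr
      exact hU x hx
    have h3 : (m + 1) * ξ ≤ (m + 1) * (τ * η / 4) := by gcongr
    nlinarith [hvu x hx]
  · have := hvg x hx k l
    rw [hsm, one_pow, one_mul] at this
    exact this.trans hξη

/-- A short map is uniformly close to a smooth immersion which is almost isometric. -/
theorem exists_near_isometry_of_short {γ : 𝔼 → Fin d → Fin d → ℝ}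
    (hcont : ∀ k l, ContinuousOn (fun x => γ x k l) 𝔹) (hsymm : ∀ x ∈ 𝔹, ∀ k l, γ x k l = γ x l k)
    {κ b : ℝ} (hκ : 0 < κ) (hb : 0 ≤ b) (hγb : ∀ x ∈ 𝔹, ∀ ζ, quad (γ x) ζ ≤ b ^ 2 * ‖ζ‖ ^ 2)
    {u : 𝔼 → 𝔽} (hu : ContDiffOn ℝ 1 u 𝔹)
    (hshort : ∀ x ∈ 𝔹, ∀ ζ, ‖(𝔇 u) x ζ‖ ^ 2 + κ * ‖ζ‖ ^ 2 ≤ quad (γ x) ζ) {η : ℝ} (hη : 0 < η) :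
    ∃ v : 𝔼 → 𝔽, ContDiffOn ℝ ∞ v 𝔹 ∧ (∀ x ∈ 𝔹, ‖v x - u x‖ ≤ η) ∧
      ∀ x ∈ 𝔹, ∀ k l, |γ x k l - gram ((𝔇 v) x) k l| ≤ η := by
  have h00 : (0 : 𝔼) ∈ 𝔹 := by simp
  obtain ⟨K, hK⟩ := (isCompact_closedBall (0 : 𝔼) 1).exists_bound_of_continuousOn
    (hu.continuousOn_fderivWithin uniqueDiffOn_unitBall le_rfl)
  have hK0 : 0 ≤ K := (norm_nonneg _).trans (hK 0 h00)
  set σ : ℝ := min (min 1 (η / 2)) (κ / 2 / (2 * K + 1)) with hσ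
  have hσ0 : 0 < σ := by positivity
  have hσ1 : σ ≤ 1 := (min_le_left _ _).trans (min_le_left _ _)
  have hση : σ ≤ η / 2 := (min_le_left _ _).trans (min_le_right _ _)
  have hσκ : σ * (2 * K + 1) ≤ κ / 2 := by
    rw [← le_div_iff₀ (by positivity)]
    exact min_le_right _ _
  obtain ⟨w, hw, hwu, hDw⟩ := exists_smooth_approx hu hσ0
  have hws : ∀ x ∈ 𝔹, ∀ ζ, ‖(𝔇 w) x ζ‖ ^ 2 + κ / 2 * ‖ζ‖ ^ 2 ≤ quad (γ x) ζ := fun x hx ζ => by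
    have h1 : ‖(𝔇 w) x ζ‖ ≤ ‖(𝔇 u) x ζ‖ + σ * ‖ζ‖ := by
      have h2 := norm_le_norm_add_norm_sub' ((𝔇 w) x ζ) ((𝔇 u) x ζ)
      have h3 := ((𝔇 w) x - (𝔇 u) x).le_of_opNorm_le (hDw x hx) ζ
      rw [_root_.sub_apply] at h3
      linarith
    have h4 : ‖(𝔇 u) x ζ‖ ≤ K * ‖ζ‖ := ((𝔇 u) x).le_of_opNorm_le (hK x hx) ζ
    have h5 : ‖(𝔇 w) x ζ‖ ^ 2 ≤ (‖(𝔇 u) x ζ‖ + σ * ‖ζ‖) ^ 2 := by gcongr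
    have h6 : σ * ‖ζ‖ * ‖(𝔇 u) x ζ‖ ≤ σ * ‖ζ‖ * (K * ‖ζ‖) := by gcongr
    have h7 : σ ^ 2 * ‖ζ‖ ^ 2 ≤ σ * ‖ζ‖ ^ 2 := by
      gcongr
      nlinarith
    have h8 := mul_le_mul_of_nonneg_right hσκ (sq_nonneg ‖ζ‖)
    nlinarith [hshort x hx ζ]
  set β : ℝ := b ^ 2 + κ with hβ
  have hβ0 : 0 < β := by positivity
  set t : ℝ := 1 - κ / 2 / β with ht
  have hκβ : κ / 2 / β < 1 := by
    rw [div_lt_one hβ0]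
    nlinarith [sq_nonneg b]
  have ht0 : 0 ≤ t := by linarith
  have ht1 : t < 1 := by
    have : 0 < κ / 2 / β := by positivity
    linarith
  obtain ⟨v, hv, hvw, hvg⟩ := exists_near_isometry_of_smooth_short hcont hsymm
    (c := √(κ / 2)) (by positivity) (fun x hx ζ => by
      rw [Real.sq_sqrt (by positivity)]
      linarith [hws x hx ζ, sq_nonneg ‖(𝔇 w) x ζ‖]) hb hγb hw (Real.sqrt_nonneg t)
    (by rw [Real.sqrt_lt' one_pos]; simpa using ht1) (fun x hx ζ => by
      rw [← Real.sqrt_mul ht0]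
      refine Real.le_sqrt_of_sq_le ?_
      have h1 : quad (γ x) ζ ≤ β * ‖ζ‖ ^ 2 := by nlinarith [hγb x hx ζ, sq_nonneg ‖ζ‖]
      have h2 : κ / 2 / β * quad (γ x) ζ ≤ κ / 2 * ‖ζ‖ ^ 2 := by
        calc κ / 2 / β * quad (γ x) ζ ≤ κ / 2 / β * (β * ‖ζ‖ ^ 2) := by gcongr
          _ = κ / 2 * ‖ζ‖ ^ 2 := by field_simp
      rw [ht, sub_mul, one_mul]
      linarith [hws x hx ζ]) (half_pos hη)
  refine ⟨v, hv, fun x hx => ?_, fun x hx k l => (hvg x hx k l).trans (by linarith)⟩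
  have := norm_sub_le_norm_sub_add_norm_sub (v x) (w x) (u x)
  linarith [hvw x hx, hwu x hx]

end Initialization

end NashKuiper

namespace NashKuiper
open scoped ContDiff RealInnerProductSpace Topology
open Filter

section Main

variable {d : ℕ}

local notation "𝔼" => EuclideanSpace ℝ (Fin d)
local notation "𝔽" => EuclideanSpace ℝ (Fin (d + 1))
local notation "𝔹" => closedBall (0 : EuclideanSpace ℝ (Fin d)) 1
local notation "𝔇" u => fderivWithin ℝ u (closedBall (0 : EuclideanSpace ℝ (Fin d)) 1)

theorem quad_smul (H : Fin d → Fin d → ℝ) (r : ℝ) (ζ : 𝔼) : quad H (r • ζ) = r ^ 2 * quad H ζ := by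
  simp only [quad, Finset.mul_sum, PiLp.smul_apply, smul_eq_mul]
  exact Finset.sum_congr rfl fun i _ => Finset.sum_congr rfl fun j _ => by ring

theorem exists_le_quad {h : 𝔼 → Fin d → Fin d → ℝ}
    (hcont : ∀ k l, ContinuousOn (fun x => h x k l) 𝔹)
    (hpos : ∀ x ∈ 𝔹, ∀ ζ : 𝔼, ζ ≠ 0 → 0 < quad (h x) ζ) :
    ∃ κ : ℝ, 0 < κ ∧ ∀ x ∈ 𝔹, ∀ ζ : 𝔼, κ * ‖ζ‖ ^ 2 ≤ quad (h x) ζ := by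
  have hc : ContinuousOn (fun p : 𝔼 × 𝔼 => quad (h p.1) p.2) (𝔹 ×ˢ sphere 0 1) := by
    unfold quad
    refine continuousOn_finsetSum _ fun k _ => continuousOn_finsetSum _ fun l _ => ?_
    refine ContinuousOn.mul (Continuous.continuousOn (by fun_prop)) ?_
    exact (hcont k l).comp continuousOn_fst fun p hp => hp.1
  obtain ⟨κ, hκ, hle⟩ := ((isCompact_closedBall (0 : 𝔼) 1).prod
    (isCompact_sphere (0 : 𝔼) 1)).exists_forall_le' hc (a := 0) fun p hp =>
      hpos p.1 hp.1 p.2 (ne_zero_of_mem_unit_sphere ⟨p.2, hp.2⟩)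
  refine ⟨κ, hκ, fun x hx ζ => ?_⟩
  rcases eq_or_ne ζ 0 with rfl | hζ
  · simp [quad]
  · have hn : 0 < ‖ζ‖ := norm_pos_iff.2 hζ
    have h1 : κ ≤ quad (h x) (‖ζ‖⁻¹ • ζ) :=
      hle (x, ‖ζ‖⁻¹ • ζ) ⟨hx, by simp [norm_smul, hn.ne']⟩
    rw [quad_smul, inv_pow, inv_mul_eq_div, le_div_iff₀ (by positivity)] at h1
    exact h1

theorem exists_quad_le {h : 𝔼 → Fin d → Fin d → ℝ}
    (hcont : ∀ k l, ContinuousOn (fun x => h x k l) 𝔹) :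
    ∃ b : ℝ, 0 ≤ b ∧ ∀ x ∈ 𝔹, ∀ ζ : 𝔼, quad (h x) ζ ≤ b ^ 2 * ‖ζ‖ ^ 2 := by
  choose e he using fun k l => (isCompact_closedBall (0 : 𝔼) 1).exists_bound_of_continuousOn
    (hcont k l)
  have h00 : (0 : 𝔼) ∈ 𝔹 := by simp
  have he0 : ∀ k l, 0 ≤ e k l := fun k l => (norm_nonneg _).trans (he k l 0 h00)
  set T : ℝ := ∑ k, ∑ l, e k l with hT
  have hT0 : 0 ≤ T := Finset.sum_nonneg fun k _ => Finset.sum_nonneg fun l _ => he0 k l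
  refine ⟨√(d * T), Real.sqrt_nonneg _, fun x hx ζ => ?_⟩
  rw [Real.sq_sqrt (by positivity)]
  refine (le_abs_self _).trans (abs_quad_le hT0 (fun k l => (he k l x hx).trans ?_) ζ)
  exact (Finset.single_le_sum (f := e k) (fun l _ => he0 k l) (Finset.mem_univ l)).trans
    (Finset.single_le_sum (f := fun k => ∑ l, e k l)
      (fun k _ => Finset.sum_nonneg fun l _ => he0 k l) (Finset.mem_univ k))

theorem exists_lipschitz {h : 𝔼 → Fin d → Fin d → ℝ}
    (hh : ∀ k l, ContDiffOn ℝ 1 (fun x => h x k l) 𝔹) :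
    ∃ L : ℝ, 0 ≤ L ∧ ∀ k l, ∀ x ∈ 𝔹, ∀ y ∈ 𝔹, |h x k l - h y k l| ≤ L * dist x y := by
  choose e he using fun k l => (isCompact_closedBall (0 : 𝔼) 1).exists_bound_of_continuousOn
    ((hh k l).continuousOn_fderivWithin uniqueDiffOn_unitBall le_rfl)
  have h00 : (0 : 𝔼) ∈ 𝔹 := by simp
  have he0 : ∀ k l, 0 ≤ e k l := fun k l => (norm_nonneg _).trans (he k l 0 h00)
  refine ⟨∑ k, ∑ l, e k l, Finset.sum_nonneg fun k _ => Finset.sum_nonneg fun l _ => he0 k l,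
    fun k l x hx y hy => ?_⟩
  rw [dist_eq_norm]
  refine ((convex_closedBall _ _).norm_image_sub_le_of_norm_fderivWithin_le
    ((hh k l).differentiableOn one_ne_zero) (he k l) hy hx).trans ?_
  gcongr
  exact (Finset.single_le_sum (f := e k) (fun l _ => he0 k l) (Finset.mem_univ l)).trans
    (Finset.single_le_sum (f := fun k => ∑ l, e k l)
      (fun k _ => Finset.sum_nonneg fun l _ => he0 k l) (Finset.mem_univ k))

theorem exists_isometric_immersion (hd : 1 ≤ d) {g : 𝔼 → Fin d → Fin d → ℝ}
    (hsymm : ∀ x i j, g x i j = g x j i) (hg : ∀ i j, ContDiffOn ℝ 1 (fun x => g x i j) 𝔹)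
    {u : 𝔼 → 𝔽} (hu : ContDiffOn ℝ 1 u 𝔹)
    (hshort : ∀ x ∈ 𝔹, ∀ ζ : 𝔼, ζ ≠ 0 → ‖(𝔇 u) x ζ‖ ^ 2 < quad (g x) ζ) {α : ℝ} (hα : 0 < α)
    (hα1 : α * (1 + 2 * Fintype.card (PairIdx d)) < 1) {ε : ℝ} (hε : 0 < ε) :
    ∃ v : 𝔼 → 𝔽, ContDiffOn ℝ 1 v 𝔹 ∧
      (∃ C : ℝ, ∀ x ∈ 𝔹, ∀ y ∈ 𝔹, ‖(𝔇 v) x - (𝔇 v) y‖ ≤ C * dist x y ^ α) ∧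
      (∀ x ∈ 𝔹, ∀ i j, gram ((𝔇 v) x) i j = g x i j) ∧ ∀ x ∈ 𝔹, ‖v x - u x‖ ≤ ε := by
  have hd0 : (0 : ℝ) < d := by exact_mod_cast hd
  have hgc : ∀ i j, ContinuousOn (fun x => g x i j) 𝔹 := fun i j => (hg i j).continuousOn
  obtain ⟨κ, hκ, hlow⟩ := exists_le_quad (h := fun x k l => g x k l - gram ((𝔇 u) x) k l)
    (fun k l => (hgc k l).sub ((continuous_gram k l).comp_continuousOn
      (hu.continuousOn_fderivWithin uniqueDiffOn_unitBall le_rfl)))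
    (fun x hx ζ hζ => by rw [quad_sub, quad_gram]; linarith [hshort x hx ζ hζ])
  obtain ⟨b, -, hup⟩ := exists_quad_le hgc
  obtain ⟨L, hL0, hL⟩ := exists_lipschitz hg
  have hlow' : ∀ x ∈ 𝔹, ∀ ζ, ‖(𝔇 u) x ζ‖ ^ 2 + κ * ‖ζ‖ ^ 2 ≤ quad (g x) ζ := fun x hx ζ => by
    have := hlow x hx ζ
    rw [quad_sub, quad_gram] at this
    linarith
  obtain ⟨C, hC, δ₁, hδ₁, hmain⟩ := exists_isometry_near hd hsymm (c := √κ) (by positivity) hL0 hL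
    (fun x hx ζ => by
      rw [Real.sq_sqrt hκ.le]
      linarith [hlow' x hx ζ, sq_nonneg ‖(𝔇 u) x ζ‖]) hup hα hα1
  set δ : ℝ := min (min δ₁ 1) (min (ε / 2 / C) (κ / 2 / (d * d))) with hδ
  have hδ0 : 0 < δ := by positivity
  have hδ1 : δ ≤ 1 := (min_le_left _ _).trans (min_le_right _ _)
  have hδε : C * δ ≤ ε / 2 := by
    rw [← le_div_iff₀' hC]
    exact (min_le_right _ _).trans (min_le_left _ _)
  have hδκ : δ ^ 2 * (d * d) ≤ κ / 2 := by
    have h1 : δ * (d * d) ≤ κ / 2 := by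
      rw [← le_div_iff₀ (by positivity)]
      exact (min_le_right _ _).trans (min_le_right _ _)
    refine le_trans ?_ h1
    gcongr
    nlinarith
  have hγc : ∀ k l, ContinuousOn (fun x => g x k l - δ ^ 2 * unitMetric d k l) 𝔹 := fun k l =>
    (hgc k l).sub continuousOn_const
  obtain ⟨b', hb', hup'⟩ := exists_quad_le (h := fun x k l => g x k l - δ ^ 2 * unitMetric d k l) hγc
  have htol := tol_pos hd
  obtain ⟨w, hw, hwu, hwg⟩ := exists_near_isometry_of_short
    (γ := fun x k l => g x k l - δ ^ 2 * unitMetric d k l) hγc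
    (fun x _ k l => by rw [hsymm x k l, unitMetric_comm k l]) (half_pos hκ) hb' hup' hu
    (fun x hx ζ => by
      rw [quad_sub, quad_mul]
      have h1 := (le_abs_self _).trans (abs_quad_le hd0.le (abs_unitMetric_le hd) ζ)
      have h2 := mul_le_mul_of_nonneg_left h1 (sq_nonneg δ)
      have h3 := mul_le_mul_of_nonneg_right hδκ (sq_nonneg ‖ζ‖)
      nlinarith [hlow' x hx ζ]) (η := min (tol d * δ ^ 2) (ε / 2)) (by positivity)
  obtain ⟨v, hv, hvα, hvg, hvw⟩ := hmain δ w hδ0 ((min_le_left _ _).trans (min_le_left _ _)) hw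
    (fun x hx i j => (hwg x hx i j).trans (min_le_left _ _))
  refine ⟨v, hv, hvα, hvg, fun x hx => ?_⟩
  have h1 := (hwu x hx).trans (min_le_right _ _)
  have h2 := norm_sub_le_norm_sub_add_norm_sub (v x) (w x) (u x)
  linarith [hvw x hx]

theorem transpose_jacCB_mul_jacCB (u : 𝔼 → 𝔽) (x : 𝔼) (i j : Fin d) :
    ((JacCB u x)ᵀ * JacCB u x) i j = gram ((𝔇 u) x) i j := by
  simp [Matrix.mul_apply, JacCB, gram, PiLp.inner_apply, mul_comm]

theorem quad_pos_of_posDef {A : Matrix (Fin d) (Fin d) ℝ} (hA : A.PosDef) {ζ : 𝔼} (hζ : ζ ≠ 0) :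
    0 < quad A ζ := by
  have hne : (ζ : Fin d → ℝ) ≠ 0 := fun h => hζ (by ext i; exact congrFun h i)
  refine (hA.dotProduct_mulVec_pos hne).trans_eq ?_
  simp only [quad, dotProduct, mulVec, Finset.mul_sum, Pi.star_apply, star_trivial]
  exact Finset.sum_congr rfl fun i _ => Finset.sum_congr rfl fun j _ => by ring

theorem normSq_lt_quad_of_posDef {A : Matrix (Fin d) (Fin d) ℝ} {u : 𝔼 → 𝔽} {x : 𝔼}
    (hA : (A - (JacCB u x)ᵀ * JacCB u x).PosDef) {ζ : 𝔼} (hζ : ζ ≠ 0) :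
    ‖(𝔇 u) x ζ‖ ^ 2 < quad A ζ := by
  have h1 := quad_pos_of_posDef hA hζ
  have h2 := quad_sub A (gram ((𝔇 u) x)) ζ
  have h3 : quad (A - (JacCB u x)ᵀ * JacCB u x) ζ = quad A ζ - quad (gram ((𝔇 u) x)) ζ := by
    rw [← h2]
    refine congrArg (fun H => quad H ζ) (funext fun i => funext fun j => ?_)
    exact congrArg (A i j - ·) (transpose_jacCB_mul_jacCB u x i j)
  rw [h3, quad_gram] at h1
  linarith

end Main

end NashKuiper

/-- **Conti–De Lellis–Székelyhidi (2012).** For a `C²` metric `g` on the closed unit ball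
`B̄₁ ⊂ ℝᵈ` and any `α < 1/(1 + 2s_d)` with `s_d = d(d+1)/2`, every `C¹` short map
`u₀ : B̄₁ → ℝ^{d+1}` can be uniformly `ε`-approximated by a `C^{1,α}` isometric immersion. -/
theorem conti_deLellis_szekelyhidi (d : ℕ) (hd : 2 ≤ d)
    (α : ℝ) (hα : 0 < α) (hα' : α < 1 / (1 + 2 * (d * (d + 1) / 2 : ℝ)))
    (g : EuclideanSpace ℝ (Fin d) → Matrix (Fin d) (Fin d) ℝ)
    (hg_reg : ContDiffOn ℝ 2 g (closedBall (0 : EuclideanSpace ℝ (Fin d)) 1))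
    (hg_met : ∀ x ∈ closedBall (0 : EuclideanSpace ℝ (Fin d)) 1, (g x).IsSymm ∧ (g x).PosDef)
    (u₀ : EuclideanSpace ℝ (Fin d) → EuclideanSpace ℝ (Fin (d + 1)))
    (hu₀ : ContDiffOn ℝ 1 u₀ (closedBall (0 : EuclideanSpace ℝ (Fin d)) 1))
    (hshort : ∀ x ∈ closedBall (0 : EuclideanSpace ℝ (Fin d)) 1,
      (g x - (JacCB u₀ x)ᵀ * JacCB u₀ x).PosDef)
    (ε : ℝ) (hε : 0 < ε) :
    ∃ u : EuclideanSpace ℝ (Fin d) → EuclideanSpace ℝ (Fin (d + 1)),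
      ContDiffOn ℝ 1 u (closedBall (0 : EuclideanSpace ℝ (Fin d)) 1) ∧
      (∃ C : ℝ, ∀ x ∈ closedBall (0 : EuclideanSpace ℝ (Fin d)) 1,
        ∀ y ∈ closedBall (0 : EuclideanSpace ℝ (Fin d)) 1,
          ‖fderivWithin ℝ u (closedBall (0 : EuclideanSpace ℝ (Fin d)) 1) x -
            fderivWithin ℝ u (closedBall (0 : EuclideanSpace ℝ (Fin d)) 1) y‖ ≤
          C * dist x y ^ α) ∧
      (∀ x ∈ closedBall (0 : EuclideanSpace ℝ (Fin d)) 1, (JacCB u x)ᵀ * JacCB u x = g x) ∧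
      (∀ x ∈ closedBall (0 : EuclideanSpace ℝ (Fin d)) 1, dist (u x) (u₀ x) ≤ ε) := by
  have hsymm : ∀ x ∈ closedBall (0 : EuclideanSpace ℝ (Fin d)) 1, ∀ i j, g x i j = g x j i :=
    fun x hx i j => ((hg_met x hx).1.apply i j).symm
  have hentry : ∀ i j, ContDiffOn ℝ 1 (fun x => g x i j)
      (closedBall (0 : EuclideanSpace ℝ (Fin d)) 1) := fun i j =>
    contDiffOn_pi.1 (contDiffOn_pi.1 (hg_reg.of_le one_le_two) i) j
  have hh : ∀ x ∈ closedBall (0 : EuclideanSpace ℝ (Fin d)) 1,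
      (fun i j => (g x i j + g x j i) / 2) = g x := fun x hx => by
    funext i j
    rw [hsymm x hx j i]
    ring
  have hcard : (Fintype.card (NashKuiper.PairIdx d) : ℝ) = d * (d + 1) / 2 := by
    rw [NashKuiper.card_pairIdx, Nat.cast_choose_two]
    push_cast
    ring
  obtain ⟨v, hv, hvα, hvg, hvu⟩ := NashKuiper.exists_isometric_immersion (d := d) (by omega)
    (g := fun x i j => (g x i j + g x j i) / 2) (fun x i j => by rw [add_comm])
    (fun i j => ((hentry i j).add (hentry j i)).div_const 2) hu₀ (fun x hx ζ hζ =>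
      (NashKuiper.normSq_lt_quad_of_posDef (hshort x hx) hζ).trans_eq
        (congrArg (fun H => NashKuiper.quad H ζ) (hh x hx)).symm) hα (by rwa [hcard, ← lt_div_iff₀ (by positivity)]) hε
  refine ⟨v, hv, hvα, fun x hx => ?_, fun x hx => ?_⟩
  · ext i j
    rw [NashKuiper.transpose_jacCB_mul_jacCB, hvg x hx i j]
    exact congrFun (congrFun (hh x hx) i) j
  · rw [dist_eq_norm]
    exact hvu x hx
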